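/- The number 1 + 3/√2 belongs to L and also to the closure of M ∖ L; consequently, M ∖ L is not a closed subset of ℝ. -/

import Mathlib

open scoped ENNReal

/-- The distance from a real number to the nearest integer. -/
noncomputable def distNearestInt (x : ℝ) : ℝ := |x - round x|

/-- The best constant of Diophantine approximation of `α`,
`ℓ(α) = limsup_{q → ∞} 1 / (q ⬝ ‖q α‖) ∈ [0, ∞]`. -/
noncomputable def lagrangeVal (α : ℝ) : ℝ≥0∞ :=
  Filter.limsup (fun q : ℕ => ENNReal.ofReal (1 / (q * distNearestInt (q * α)))) Filter.atTop

/-- The Lagrange spectrum: the set of finite values `ℓ(α)` over irrational `α`. -/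
def LagrangeSpectrum : Set ℝ :=
  {t | ∃ α : ℝ, Irrational α ∧ lagrangeVal α ≠ ⊤ ∧ (lagrangeVal α).toReal = t}

/-- The best constant of Diophantine approximation of the binary quadratic form
`h(x,y) = a x² + b x y + c y²`, namely `m(h) = sup_{(p,q) ≠ (0,0)} √Δ(h) / |h(p,q)| ∈ (0, ∞]`. -/
noncomputable def markovVal (a b c : ℝ) : ℝ≥0∞ :=
  ⨆ (pq : ℤ × ℤ) (_ : pq ≠ (0, 0)),
    ENNReal.ofReal (Real.sqrt (b ^ 2 - 4 * a * c)) /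
      ENNReal.ofReal |a * (pq.1 : ℝ) ^ 2 + b * pq.1 * pq.2 + c * (pq.2 : ℝ) ^ 2|

/-- The Markov spectrum: the set of finite values `m(h)` over real indefinite binary
quadratic forms `h` with positive discriminant. -/
def MarkovSpectrum : Set ℝ :=
  {t | ∃ a b c : ℝ, 0 < b ^ 2 - 4 * a * c ∧ markovVal a b c ≠ ⊤ ∧ (markovVal a b c).toReal = t}

/-- Complete quotients of a one-sided continued fraction: `1 / x n` is the tail starting with the
digit `a n`, and `y n` is the fraction read backwards from the digit `a (n - 1)`. -/
structure HalfCF (a : ℕ → ℕ) (x y : ℕ → ℝ) : Prop where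
  one_le : ∀ n, 1 ≤ a n
  x_pos : ∀ n, 0 < x n
  x_lt : ∀ n, x n < 1
  x_rec : ∀ n, x n * (a n + x (n + 1)) = 1
  y_nonneg : ∀ n, 0 ≤ y n
  y_rec : ∀ n, y (n + 1) * (a n + y n) = 1

namespace HalfCF

/-- Successive coordinates of an integer vector along a continued fraction. -/
def vec (a : ℕ → ℕ) (P Q : ℤ) : ℕ → ℤ × ℤ
  | 0 => (P, Q)
  | n + 1 => ((vec a P Q n).2, (vec a P Q n).1 - a n * (vec a P Q n).2)

/-- The contracted linear form at time `n`. -/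
noncomputable def dd (a : ℕ → ℕ) (x : ℕ → ℝ) (P Q : ℤ) (n : ℕ) : ℝ :=
  x n * (vec a P Q n).1 - (vec a P Q n).2

/-- The expanded linear form at time `n`. -/
noncomputable def vv (a : ℕ → ℕ) (y : ℕ → ℝ) (P Q : ℤ) (n : ℕ) : ℝ :=
  (vec a P Q n).1 + y n * (vec a P Q n).2

theorem critical {ξ η : ℝ} (hξ : 0 < ξ) (hη : 0 < η) {P Q : ℤ} (h0 : P ≠ 0 ∨ Q ≠ 0)
    (h1 : |(P : ℝ) + η * Q| ≤ |(P : ℝ) - ξ * Q|)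
    (h2 : η * |(P : ℝ) - ξ * Q| ≤ ξ * |(P : ℝ) + η * Q|) :
    min 1 (ξ * η) ≤ |(P : ℝ) - ξ * Q| * |(P : ℝ) + η * Q| := by
  by_cases hQ : Q = 0
  · subst hQ
    have hP : P ≠ 0 := by tauto
    have : (1 : ℝ) ≤ |(P : ℝ)| := by exact_mod_cast Int.one_le_abs hP
    refine (min_le_left _ _).trans ?_
    simp only [Int.cast_zero, mul_zero, sub_zero, add_zero]
    nlinarith
  have hQ1 : (1 : ℝ) ≤ |(Q : ℝ)| := by exact_mod_cast Int.one_le_abs hQ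
  have hQ2 : (1 : ℝ) ≤ (Q : ℝ) ^ 2 := by rw [← sq_abs]; nlinarith
  set u : ℝ := P - ξ * Q with hu
  set v : ℝ := P + η * Q with hv
  have key : η * u + ξ * v = (ξ + η) * P := by rw [hu, hv]; ring
  have key2 : v - u = (ξ + η) * Q := by rw [hu, hv]; ring
  rcases lt_or_ge (u * v) 0 with hneg | hpos
  · refine (min_le_right _ _).trans ?_
    have e1 : |u| + |v| = (ξ + η) * |(Q : ℝ)| := by
      rw [← abs_of_pos (add_pos hξ hη), ← abs_mul, ← key2]
      rcases le_total 0 u with a | a <;> rcases le_total 0 v with b | b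
      · nlinarith
      · rw [abs_of_nonneg a, abs_of_nonpos b, abs_of_nonpos (by linarith)]; ring
      · rw [abs_of_nonpos a, abs_of_nonneg b, abs_of_nonneg (by linarith)]; ring
      · nlinarith
    -- `(ξ + η) |v| ≥ η (|u| + |v|)` and `|u| ≥ |v|`
    have a1 : η * |(Q : ℝ)| ≤ |v| := by
      have : (ξ + η) * (η * |(Q : ℝ)|) ≤ (ξ + η) * |v| := by nlinarith
      exact le_of_mul_le_mul_left this (by positivity)
    rcases le_total ξ (|u| / |(Q:ℝ)|) with c | c
    · have : ξ * |(Q : ℝ)| ≤ |u| := by rwa [le_div_iff₀ (by linarith)] at c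
      calc ξ * η ≤ (ξ * |(Q : ℝ)|) * (η * |(Q : ℝ)|) := by
            have : 0 < ξ * η := by positivity
            nlinarith [sq_abs (Q : ℝ)]
        _ ≤ _ := by gcongr
    · have c' : |u| ≤ ξ * |(Q : ℝ)| := by rwa [div_le_iff₀ (by linarith)] at c
      have c2 : η * |(Q:ℝ)| ≤ |v| := a1
      have : (ξ * |(Q:ℝ)| - |u|) * (|u| - η * |(Q:ℝ)|) ≥ 0 :=
        mul_nonneg (by linarith) (by linarith)
      have e3 : |v| = (ξ + η) * |(Q : ℝ)| - |u| := by linarith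
      rw [e3]
      have : 0 < ξ * η := by positivity
      nlinarith [sq_abs (Q : ℝ)]
  · refine (min_le_left _ _).trans ?_
    rw [← abs_mul, abs_of_nonneg hpos]
    have hv2 : v ^ 2 ≤ u ^ 2 := sq_le_sq.mpr h1
    have hu2 : 0 ≤ |u| := abs_nonneg u
    -- `η |u| ≤ ξ |v|` with equal signs means `(ξ v - η u) v ≥ 0`
    have s1 : 0 ≤ (ξ * v - η * u) * u := by
      rcases le_total 0 u with a | a <;> rcases le_total 0 v with b | b
      · rw [abs_of_nonneg a, abs_of_nonneg b] at h2; nlinarith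
      · have : u * v = 0 := le_antisymm (by nlinarith) hpos
        rcases mul_eq_zero.mp this with c | c
        · simp [c]
        · rw [c, abs_zero] at h2
          have : u = 0 := by
            have : |u| ≤ 0 := by by_contra! hh; nlinarith [mul_pos hη hh]
            exact abs_nonpos_iff.mp this
          simp [this]
      · have : u * v = 0 := le_antisymm (by nlinarith) hpos
        rcases mul_eq_zero.mp this with c | c
        · simp [c]
        · rw [c, abs_zero] at h2
          have : u = 0 := by
            have : |u| ≤ 0 := by by_contra! hh; nlinarith [mul_pos hη hh]
            exact abs_nonpos_iff.mp this
          simp [this]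
      · rw [abs_of_nonpos a, abs_of_nonpos b] at h2; nlinarith
    have s2 : 0 ≤ (ξ * v - η * u) * v := by
      rcases eq_or_ne u 0 with c | c
      · simp only [c, mul_zero, sub_zero]; nlinarith [mul_self_nonneg v]
      · have : 0 ≤ (ξ * v - η * u) * v * u ^ 2 := by
          have : (ξ * v - η * u) * v * u ^ 2 = ((ξ * v - η * u) * u) * (u * v) := by ring
          rw [this]; positivity
        exact nonneg_of_mul_nonneg_left this (by positivity)
    have hPQ : (P : ℝ) * Q ≤ 0 := by
      have e0 : (ξ + η) ^ 2 * ((P : ℝ) * Q) = (η * u + ξ * v) * (v - u) := by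
        rw [key, key2]; ring
      have huv : |u| * |v| = u * v := by rw [← abs_mul, abs_of_nonneg hpos]
      have e1 : v ^ 2 ≤ u * v := by
        rw [← huv, ← sq_abs]; nlinarith [abs_nonneg v]
      have e2 : u * v ≤ u ^ 2 := by
        rw [← huv, ← sq_abs u]; nlinarith [abs_nonneg v]
      have : (ξ + η) ^ 2 * ((P : ℝ) * Q) ≤ 0 := by
        rw [e0]
        nlinarith [mul_nonneg hη.le (sub_nonneg.mpr e2), mul_nonneg hξ.le (sub_nonneg.mpr e1)]
      by_contra! hh
      have : 0 < (ξ + η) ^ 2 := by positivity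
      nlinarith
    have hP : P ≠ 0 := by
      rintro rfl
      have e0 : u * v = - (ξ * η) * (Q : ℝ) ^ 2 := by rw [hu, hv]; push_cast; ring
      have : 0 < ξ * η := by positivity
      nlinarith
    have hP2 : (1 : ℝ) ≤ (P : ℝ) ^ 2 := by
      have : (1 : ℝ) ≤ |(P : ℝ)| := by exact_mod_cast Int.one_le_abs hP
      rw [← sq_abs]; nlinarith
    have s3 : 0 ≤ ((ξ - η) * P + 2 * ξ * η * Q) * P := by
      have e0 : (ξ + η) * (((ξ - η) * P + 2 * ξ * η * Q) * P) =
          (ξ * v - η * u) * (η * u + ξ * v) := by rw [key, hu, hv]; ring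
      have : 0 ≤ (ξ + η) * (((ξ - η) * P + 2 * ξ * η * Q) * P) := by
        rw [e0]; nlinarith
      exact nonneg_of_mul_nonneg_right this (by positivity)
    have s4 : 0 ≤ - ((ξ - η) * (P * Q)) - ξ * η * (Q : ℝ) ^ 2 := by
      have : 0 ≤ (P : ℝ) ^ 2 * (- ((ξ - η) * (P * Q)) - ξ * η * (Q : ℝ) ^ 2) := by
        have h5 : 0 < ξ * η := by positivity
        nlinarith [mul_nonneg s3 (neg_nonneg.mpr hPQ), mul_nonneg h5.le (sq_nonneg ((P : ℝ) * Q))]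
      exact nonneg_of_mul_nonneg_right this (by positivity)
    have : u * v = P ^ 2 + (- ((ξ - η) * (P * Q)) - ξ * η * (Q : ℝ) ^ 2) := by
      rw [hu, hv]; ring
    linarith

variable {a : ℕ → ℕ} {x y : ℕ → ℝ}

theorem dd_succ (h : HalfCF a x y) (P Q : ℤ) (n : ℕ) :
    dd a x P Q n = - x n * dd a x P Q (n + 1) := by
  have h1 := h.x_rec n
  simp only [dd, vec]
  push_cast
  linear_combination (vec a P Q n).2 * h1

theorem vv_succ (h : HalfCF a x y) (P Q : ℤ) (n : ℕ) :
    vv a y P Q (n + 1) = y (n + 1) * vv a y P Q n := by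
  have h1 := h.y_rec n
  simp only [vv, vec]
  push_cast
  linear_combination - (vec a P Q n).2 * h1

theorem one_le_cast (h : HalfCF a x y) (n : ℕ) : (1 : ℝ) ≤ a n := by exact_mod_cast h.one_le n

theorem y_succ_pos (h : HalfCF a x y) (n : ℕ) : 0 < y (n + 1) := by
  have := h.y_rec n
  have h2 := h.y_nonneg n
  have h3 := h.one_le_cast n
  by_contra! hh
  nlinarith

theorem y_le_one (h : HalfCF a x y) (n : ℕ) : y (n + 1) ≤ 1 := by
  have := h.y_rec n
  have h2 := h.y_nonneg n
  have h3 := h.one_le_cast n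
  have := h.y_succ_pos n
  nlinarith

/-- The value of the continued fraction at a position. -/
noncomputable def lam (a : ℕ → ℕ) (x y : ℕ → ℝ) (n : ℕ) : ℝ := a n + x (n + 1) + y n

theorem lam_ge_one (h : HalfCF a x y) (n : ℕ) : 1 < lam a x y n := by
  have := h.one_le_cast n
  have := h.x_pos (n + 1)
  have := h.y_nonneg n
  simp only [lam]; linarith

theorem lam_eq (h : HalfCF a x y) (n : ℕ) : x n * lam a x y n = 1 + x n * y n := by
  have := h.x_rec n
  simp only [lam]; linear_combination this

/-- The normalised value of the quadratic form at an integer vector. -/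
theorem norm_succ (h : HalfCF a x y) (P Q : ℤ) (n : ℕ) :
    |dd a x P Q (n + 1)| * |vv a y P Q (n + 1)| * (1 + x n * y n) =
    |dd a x P Q n| * |vv a y P Q n| * (1 + x (n + 1) * y (n + 1)) := by
  rw [h.dd_succ P Q n, h.vv_succ, abs_mul, abs_mul, abs_neg, abs_of_pos (h.x_pos n),
    abs_of_pos (h.y_succ_pos n)]
  linear_combination - |dd a x P Q (n + 1)| * |vv a y P Q n| * (y (n + 1) * h.x_rec n -
    x n * h.y_rec n)

theorem norm_eq (h : HalfCF a x y) (P Q : ℤ) (n : ℕ) :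
    |dd a x P Q n| * |vv a y P Q n| * (1 + x 0 * y 0) =
    |dd a x P Q 0| * |vv a y P Q 0| * (1 + x n * y n) := by
  induction n with
  | zero => rfl
  | succ n ih =>
    have h1 := h.norm_succ P Q n
    have : 0 < 1 + x n * y n := by
      have := h.x_pos n; have := h.y_nonneg n; positivity
    apply mul_right_cancel₀ this.ne'
    linear_combination (1 + x 0 * y 0) * h1 + (1 + x (n + 1) * y (n + 1)) * ih

theorem vec_ne (P Q : ℤ) (h0 : P ≠ 0 ∨ Q ≠ 0) (n : ℕ) :
    (vec a P Q n).1 ≠ 0 ∨ (vec a P Q n).2 ≠ 0 := by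
  induction n with
  | zero => exact h0
  | succ n ih =>
    simp only [vec]
    by_contra! hh
    obtain ⟨h1, h2⟩ := hh
    rw [h1] at h2
    simp [h1] at ih h2
    exact ih h2

theorem critical_at (h : HalfCF a x y) {P Q : ℤ} (h0 : P ≠ 0 ∨ Q ≠ 0) {n : ℕ}
    (h1 : |dd a x P Q n| < x n * |vv a y P Q n|)
    (h2 : x (n + 1) * |vv a y P Q (n + 1)| ≤ |dd a x P Q (n + 1)|) :
    1 + x 0 * y 0 ≤ |dd a x P Q 0| * |vv a y P Q 0| *
      max (lam a x y n) (lam a x y (n + 1)) := by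
  have hx := h.x_pos (n + 1)
  have hx0 := h.x_pos n
  have hy := h.y_succ_pos n
  have e1 : dd a x P Q (n + 1) = x (n + 1) *
      ((vec a P Q (n + 1)).1 - (x (n + 1))⁻¹ * (vec a P Q (n + 1)).2) := by
    simp only [dd]; field_simp
  have e2 : |dd a x P Q (n + 1)| = x (n + 1) *
      |((vec a P Q (n + 1)).1 - (x (n + 1))⁻¹ * (vec a P Q (n + 1)).2)| := by
    rw [e1, abs_mul, abs_of_pos hx]
  have c := critical (inv_pos.mpr hx) hy (vec_ne (a := a) P Q h0 (n + 1))
    (by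
      rw [e2] at h2
      exact le_of_mul_le_mul_left h2 hx)
    (by
      have e3 := h.dd_succ P Q n
      have e4 := h.vv_succ P Q n
      rw [e3, abs_mul, abs_neg, abs_of_pos hx0] at h1
      have h3 := lt_of_mul_lt_mul_left h1 hx0.le
      change y (n + 1) * _ ≤ _ * |vv a y P Q (n + 1)|
      rw [e4, abs_mul, abs_of_pos hy]
      rw [e2] at h3
      have h5 := mul_le_mul_of_nonneg_left h3.le (mul_pos hy (inv_pos.mpr hx)).le
      calc _ = y (n + 1) * (x (n + 1))⁻¹ * (x (n + 1) *
            |((vec a P Q (n + 1)).1 - (x (n + 1))⁻¹ * (vec a P Q (n + 1)).2)|) := by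
            field_simp
        _ ≤ _ := h5
        _ = _ := by ring)
  change _ ≤ _ * |vv a y P Q (n + 1)| at c
  have hN := h.norm_eq P Q (n + 1)
  have c2 : min (x (n + 1)) (y (n + 1)) ≤ |dd a x P Q (n + 1)| * |vv a y P Q (n + 1)| := by
    rw [e2, mul_assoc]
    calc _ = x (n + 1) * min 1 ((x (n + 1))⁻¹ * y (n + 1)) := by
            rw [mul_min_of_nonneg _ _ hx.le]; congr 1 <;> field_simp
      _ ≤ _ := by gcongr
  have hl1 : x (n + 1) * lam a x y (n + 1) = 1 + x (n + 1) * y (n + 1) := h.lam_eq (n + 1)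
  have hl0 : y (n + 1) * lam a x y n = 1 + x (n + 1) * y (n + 1) := by
    have := h.y_rec n
    simp only [lam]; linear_combination this
  have hpos : 0 < 1 + x (n + 1) * y (n + 1) := by positivity
  have hpos0 : 0 < 1 + x 0 * y 0 := by
    have := h.x_pos 0; have := h.y_nonneg 0; positivity
  have c3 : 1 + x (n + 1) * y (n + 1) ≤ |dd a x P Q (n + 1)| * |vv a y P Q (n + 1)| *
      max (lam a x y n) (lam a x y (n + 1)) := by
    have p0 := h.lam_ge_one n
    have p1 := h.lam_ge_one (n + 1)
    rcases min_choice (x (n + 1)) (y (n + 1)) with m | m <;> rw [m] at c2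
    · rw [← hl1]
      exact mul_le_mul c2 (le_max_right _ _) (by linarith) (by positivity)
    · rw [← hl0]
      exact mul_le_mul c2 (le_max_left _ _) (by linarith) (by positivity)
  have c4 : (1 + x (n + 1) * y (n + 1)) * (1 + x 0 * y 0) ≤ (1 + x (n + 1) * y (n + 1)) *
      (|dd a x P Q 0| * |vv a y P Q 0| * max (lam a x y n) (lam a x y (n + 1))) := by
    calc _ ≤ _ := mul_le_mul_of_nonneg_right c3 hpos0.le
      _ = _ := by linear_combination max (lam a x y n) (lam a x y (n + 1)) * hN
  exact le_of_mul_le_mul_left c4 hpos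

theorem dd_growth (h : HalfCF a x y) (P Q : ℤ) (n : ℕ) :
    2 * |dd a x P Q n| ≤ |dd a x P Q (n + 2)| := by
  rw [h.dd_succ P Q n, h.dd_succ P Q (n + 1), abs_mul, abs_mul, abs_neg, abs_neg,
    abs_of_pos (h.x_pos n), abs_of_pos (h.x_pos (n + 1))]
  have := h.x_rec n
  have h1 := h.one_le_cast n
  have h2 := h.x_pos n
  have h3 := h.x_lt (n + 1)
  have : x n * x (n + 1) ≤ 1 / 2 := by nlinarith
  nlinarith [abs_nonneg (dd a x P Q (n + 1 + 1))]

/-- A vector contracted more than expanded from time `m` on takes a large value of the form. -/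
theorem exists_le (h : HalfCF a x y) {P Q : ℤ} (h0 : P ≠ 0 ∨ Q ≠ 0) {m : ℕ}
    (hd : dd a x P Q m ≠ 0) (h1 : |dd a x P Q m| < x m * |vv a y P Q m|) :
    ∃ n ≥ m, 1 + x 0 * y 0 ≤ |dd a x P Q 0| * |vv a y P Q 0| *
      max (lam a x y n) (lam a x y (n + 1)) := by
  by_contra! hcon
  have hall : ∀ n ≥ m, |dd a x P Q n| < x n * |vv a y P Q n| := by
    intro n hn
    induction n, hn using Nat.le_induction with
    | base => exact h1
    | succ n hn ih =>
      by_contra! hh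
      exact absurd (h.critical_at h0 ih hh) (not_le.mpr (hcon n hn))
  have hv : ∀ t, |vv a y P Q (m + t)| ≤ |vv a y P Q m| := by
    intro t
    induction t with
    | zero => exact le_rfl
    | succ t ih =>
      rw [← add_assoc, h.vv_succ, abs_mul, abs_of_pos (h.y_succ_pos _)]
      nlinarith [h.y_le_one (m + t), abs_nonneg (vv a y P Q (m + t))]
  have hgrow : ∀ t, 2 ^ t * |dd a x P Q m| ≤ |dd a x P Q (m + 2 * t)| := by
    intro t
    induction t with
    | zero => simp
    | succ t ih =>
      have := h.dd_growth P Q (m + 2 * t)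
      rw [pow_succ, show m + 2 * (t + 1) = m + 2 * t + 2 by ring]
      linarith
  have hdpos : 0 < |dd a x P Q m| := abs_pos.mpr hd
  obtain ⟨t, ht⟩ := pow_unbounded_of_one_lt (|vv a y P Q m| / |dd a x P Q m|) one_lt_two
  rw [div_lt_iff₀ hdpos] at ht
  have b1 := hall (m + 2 * t) (by omega)
  have b2 := hv (2 * t)
  have b3 := hgrow t
  have b4 := h.x_lt (m + 2 * t)
  have b5 := h.x_pos (m + 2 * t)
  nlinarith [abs_nonneg (vv a y P Q (m + 2 * t))]

theorem irrational (h : HalfCF a x y) : Irrational (x 0) := by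
  rintro ⟨r, hr⟩
  have hP : (0 : ℝ) < r.den := by exact_mod_cast r.den_pos
  have hd0 : dd a x r.den r.num 0 = 0 := by
    simp only [dd, vec, ← hr]
    rw [Rat.cast_def]
    push_cast
    field_simp
    ring
  have hd : ∀ n, dd a x r.den r.num n = 0 := by
    intro n
    induction n with
    | zero => exact hd0
    | succ n ih =>
      rw [h.dd_succ] at ih
      have := h.x_pos n
      simpa [this.ne'] using ih
  have key : ∀ n, 0 < (vec a r.den r.num n).1 ∧ (vec a r.den r.num n).1 + n ≤ r.den := by
    intro n
    induction n with
    | zero => simpa [vec] using r.den_pos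
    | succ n ih =>
      have h1 := hd n
      simp only [dd] at h1
      have h2 := h.x_pos n
      have h3 := h.x_lt n
      have h4 : (0 : ℝ) < (vec a r.den r.num n).1 := by exact_mod_cast ih.1
      have h5 : (0 : ℝ) < (vec a r.den r.num n).2 := by nlinarith
      have h6 : ((vec a r.den r.num n).2 : ℝ) < (vec a r.den r.num n).1 := by nlinarith
      have h7 : (vec a r.den r.num n).2 < (vec a r.den r.num n).1 := by exact_mod_cast h6
      simp only [vec]
      refine ⟨by exact_mod_cast h5, ?_⟩
      push_cast
      omega
  have := key (r.den + 1)
  push_cast at this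
  omega

end HalfCF

namespace HalfCF
open Filter

variable {a : ℕ → ℕ} {x y : ℕ → ℝ}

/-- Convergents realise the values `lam`. -/
theorem exists_convergent (h : HalfCF a x y) (hy : y 0 = 0) (n : ℕ) :
    ∃ (q q' : ℕ) (p p' : ℤ), 1 ≤ q ∧ n ≤ q ∧ (1 ≤ n → 1 ≤ q') ∧ (q' : ℝ) = y n * q ∧
      x n * (x 0 * q' - p') = -(x 0 * q - p) ∧ q * |x 0 * q - p| * lam a x y n = 1 := by
  induction n with
  | zero =>
    refine ⟨1, 0, 0, 1, le_rfl, by simp, by simp, by simp [hy], by simp, ?_⟩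
    have := h.lam_eq 0
    rw [hy] at this
    have h0 := h.x_pos 0
    simp only [Nat.cast_one, mul_one, Int.cast_zero, sub_zero, one_mul, abs_of_pos h0]
    linarith
  | succ n ih =>
    obtain ⟨q, q', p, p', h1, h2, h3, h4, h5, h6⟩ := ih
    have ha := h.one_le n
    have hx := h.x_pos n
    have hx' := h.x_pos (n + 1)
    have hy' := h.y_succ_pos n
    have e1 := h.x_rec n
    have e2 := h.y_rec n
    have e5 : x 0 * q' - p' + (x 0 * q - p) * (a n + x (n + 1)) = 0 := by
      have : x n * (x 0 * q' - p' + (x 0 * q - p) * (a n + x (n + 1))) = 0 := by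
        linear_combination h5 + (x 0 * q - p) * e1
      simpa [hx.ne'] using this
    have e6 : x 0 * ((a n * q + q' : ℕ) : ℝ) - ((a n * p + p' : ℤ) : ℝ) =
        - x (n + 1) * (x 0 * q - p) := by
      push_cast
      linear_combination e5
    refine ⟨a n * q + q', q, a n * p + p', p, ?_, ?_, fun _ => h1, ?_, ?_, ?_⟩
    · nlinarith
    · rcases Nat.eq_zero_or_pos n with rfl | hn
      · nlinarith
      · have := h3 hn; nlinarith
    · push_cast
      linear_combination -(q : ℝ) * e2 - y (n + 1) * h4
    · rw [e6]; ring
    · rw [e6, abs_mul, abs_neg, abs_of_pos hx']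
      have l1 := h.lam_eq (n + 1)
      have l2 : y (n + 1) * lam a x y n = 1 + x (n + 1) * y (n + 1) := by
        simp only [lam]; linear_combination e2
      have l3 : (q : ℝ) = y (n + 1) * ((a n * q + q' : ℕ) : ℝ) := by
        push_cast
        linear_combination -(q : ℝ) * e2 - y (n + 1) * h4
      linear_combination h6 + ((a n * q + q' : ℕ) : ℝ) * |x 0 * q - p| * (l1 - l2) -
        |x 0 * q - p| * lam a x y n * l3

theorem dd_const (h : HalfCF a x y) (m : ℕ) :
    ∃ c : ℝ, 0 < c ∧ ∀ P Q, |dd a x P Q m| = c * |dd a x P Q 0| := by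
  induction m with
  | zero => exact ⟨1, one_pos, by simp⟩
  | succ m ih =>
    obtain ⟨c, hc, h1⟩ := ih
    have hx := h.x_pos m
    refine ⟨c / x m, by positivity, fun P Q => ?_⟩
    have := h1 P Q
    rw [h.dd_succ, abs_mul, abs_neg, abs_of_pos hx] at this
    field_simp
    linarith

theorem vv_const (h : HalfCF a x y) (m : ℕ) :
    ∃ c : ℝ, 0 < c ∧ ∀ P Q, |vv a y P Q m| = c * |vv a y P Q 0| := by
  induction m with
  | zero => exact ⟨1, one_pos, by simp⟩
  | succ m ih =>
    obtain ⟨c, hc, h1⟩ := ih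
    have hx := h.y_succ_pos m
    refine ⟨y (m + 1) * c, by positivity, fun P Q => ?_⟩
    rw [h.vv_succ, abs_mul, h1, abs_of_pos hx, mul_assoc]

theorem lagrangeVal_eq (h : HalfCF a x y) (hy : y 0 = 0) (k : ℤ) :
    lagrangeVal (k + x 0) = limsup (fun n => ENNReal.ofReal (lam a x y n)) atTop := by
  have hirr := h.irrational
  have hdist : ∀ q : ℕ, ∃ p : ℤ, distNearestInt (q * (k + x 0)) = |x 0 * q - p| := by
    intro q
    refine ⟨round ((q : ℝ) * (k + x 0)) - q * k, ?_⟩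
    simp only [distNearestInt]
    push_cast
    congr 1; ring
  have hdist_le : ∀ (q : ℕ) (p : ℤ), distNearestInt (q * (k + x 0)) ≤ |x 0 * q - p| := by
    intro q p
    have := round_le ((q : ℝ) * (k + x 0)) (p + q * k)
    refine this.trans (le_of_eq ?_)
    push_cast
    congr 1; ring
  have hne : ∀ (q : ℕ) (p : ℤ), 1 ≤ q → 0 < |x 0 * q - p| := by
    intro q p hq
    rw [abs_pos, sub_ne_zero]
    have : Irrational (x 0 * q) := hirr.mul_natCast (by omega)
    exact this.ne_int p
  apply le_antisymm
  · refine le_of_forall_gt fun b hb => ?_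
    obtain ⟨b', hb', hbb⟩ := exists_between hb
    have hev := eventually_lt_of_limsup_lt hb'
    obtain ⟨m, hm⟩ := eventually_atTop.mp hev
    refine lt_of_le_of_lt ?_ hbb
    obtain ⟨c, hc, hcd⟩ := h.dd_const m
    obtain ⟨c', hc', hcv⟩ := h.vv_const m
    refine limsup_le_of_le (by isBoundedDefault) ?_
    obtain ⟨N, hN⟩ := exists_nat_gt (c / (x m * c'))
    filter_upwards [eventually_ge_atTop (N + 1)] with q hq
    obtain ⟨p, hp⟩ := hdist q
    have hq1 : 1 ≤ q := by omega
    have hpos := hne q p hq1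
    have hd0 : dd a x q p 0 = x 0 * q - p := by simp [dd, vec]
    have hv0 : vv a y q p 0 = q := by simp [vv, vec, hy]
    have hxm := h.x_pos m
    have hle : |x 0 * q - p| ≤ 1 / 2 := by rw [← hp]; exact abs_sub_round _
    have hq' : (N : ℝ) + 1 ≤ q := by exact_mod_cast hq
    obtain ⟨n, hn, h1⟩ := h.exists_le (P := q) (Q := p) (Or.inl (by omega)) (m := m)
      (by
        rw [← abs_pos, hcd, hd0]; positivity)
      (by
        rw [hcd, hcv, hd0, hv0, abs_of_nonneg (by positivity : (0 : ℝ) ≤ q)]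
        rw [div_lt_iff₀ (by positivity)] at hN
        have : 0 < x m * c' := by positivity
        nlinarith)
    rw [hy, mul_zero, add_zero, hd0, hv0, abs_of_nonneg (by positivity : (0 : ℝ) ≤ q)] at h1
    have hqpos : (0 : ℝ) < q := by positivity
    have h2 : 1 / (q * |x 0 * q - p|) ≤ max (lam a x y n) (lam a x y (n + 1)) := by
      rw [div_le_iff₀ (by positivity)]
      linarith
    rw [hp]
    refine (ENNReal.ofReal_le_ofReal h2).trans ?_
    rcases max_choice (lam a x y n) (lam a x y (n + 1)) with e | e <;> rw [e]
    · exact (hm n hn).le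
    · exact (hm (n + 1) (by omega)).le
  · refine le_of_forall_gt fun b hb => ?_
    obtain ⟨b', hb', hbb⟩ := exists_between hb
    have hev := eventually_lt_of_limsup_lt hb'
    obtain ⟨m, hm⟩ := eventually_atTop.mp hev
    refine lt_of_le_of_lt ?_ hbb
    refine limsup_le_of_le (by isBoundedDefault) ?_
    filter_upwards [eventually_ge_atTop m] with n hn
    obtain ⟨q, q', p, p', h1, h2, h3, h4, h5, h6⟩ := h.exists_convergent hy n
    refine le_trans (ENNReal.ofReal_le_ofReal ?_) (hm q (by omega)).le
    obtain ⟨r, hr⟩ := hdist q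
    have hpos := hne q r h1
    rw [← hr] at hpos
    have := hdist_le q p
    have hq : (0 : ℝ) < q := by positivity
    have hl := h.lam_ge_one n
    rw [le_div_iff₀ (by positivity), ← h6]
    have : (q : ℝ) * distNearestInt (q * (k + x 0)) ≤ q * |x 0 * q - p| := by gcongr
    nlinarith

/-- Gauss map iterates of the fractional part. -/
noncomputable def gauss (α : ℝ) : ℕ → ℝ
  | 0 => Int.fract α
  | n + 1 => Int.fract (1 / gauss α n)

/-- The fractions read backwards. -/
noncomputable def back (a : ℕ → ℕ) : ℕ → ℝ
  | 0 => 0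
  | n + 1 => 1 / (a n + back a n)

theorem back_nonneg (a : ℕ → ℕ) (n : ℕ) : 0 ≤ back a n := by
  induction n with
  | zero => exact le_rfl
  | succ n ih => simp only [back]; positivity

theorem back_rec (ha : ∀ n, 1 ≤ a n) (n : ℕ) : back a (n + 1) * (a n + back a n) = 1 := by
  have h1 := back_nonneg a n
  have h2 : (1 : ℝ) ≤ a n := by exact_mod_cast ha n
  simp only [back]
  field_simp

theorem exists_of_irrational {α : ℝ} (hα : Irrational α) :
    ∃ (k : ℤ) (a : ℕ → ℕ) (x y : ℕ → ℝ), HalfCF a x y ∧ y 0 = 0 ∧ α = k + x 0 := by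
  have hirr : ∀ n, Irrational (gauss α n) := by
    intro n
    induction n with
    | zero => exact irrational_sub_intCast_iff.mpr hα
    | succ n ih =>
      have : Irrational (1 / gauss α n) := by rw [one_div]; exact irrational_inv_iff.mpr ih
      exact irrational_sub_intCast_iff.mpr this
  have hlt : ∀ n, gauss α n < 1 := by
    intro n; cases n <;> exact Int.fract_lt_one _
  have hpos : ∀ n, 0 < gauss α n := by
    intro n
    have h0 : 0 ≤ gauss α n := by cases n <;> exact Int.fract_nonneg _
    exact lt_of_le_of_ne h0 (hirr n).ne_zero.symm
  have ha : ∀ n, 1 ≤ ⌊1 / gauss α n⌋₊ := by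
    intro n
    apply Nat.le_floor
    rw [Nat.cast_one, le_div_iff₀ (hpos n)]
    linarith [hlt n]
  refine ⟨⌊α⌋, fun n => ⌊1 / gauss α n⌋₊, gauss α, back (fun n => ⌊1 / gauss α n⌋₊), ?_, rfl,
    (Int.floor_add_fract α).symm⟩
  refine ⟨ha, hpos, hlt, fun n => ?_, back_nonneg _, fun n => back_rec ha n⟩
  have h1 := hpos n
  have h2 : (⌊1 / gauss α n⌋₊ : ℝ) + Int.fract (1 / gauss α n) = 1 / gauss α n := by
    have e := Int.floor_add_fract (1 / gauss α n)
    have e2 : ((⌊1 / gauss α n⌋₊ : ℕ) : ℤ) = ⌊1 / gauss α n⌋ :=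
      Int.natCast_floor_eq_floor (by positivity)
    rw [← e2] at e
    exact_mod_cast e
  change gauss α n * ((⌊1 / gauss α n⌋₊ : ℝ) + Int.fract (1 / gauss α n)) = 1
  rw [h2]; field_simp

end HalfCF

/-- Bi-infinite continued fraction data: `x i` is the fraction read forwards from the digit `a i`
and `y i` is the fraction read backwards from `a i`. -/
structure BiCF (a : ℤ → ℕ) (x y : ℤ → ℝ) : Prop where
  one_le : ∀ i, 1 ≤ a i
  x_pos : ∀ i, 0 < x i
  x_lt : ∀ i, x i < 1
  x_rec : ∀ i, x i * (a i + x (i + 1)) = 1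
  y_pos : ∀ i, 0 < y i
  y_lt : ∀ i, y i < 1
  y_rec : ∀ i, y i * (a i + y (i - 1)) = 1

/-- The value of a bi-infinite continued fraction at a position. -/
noncomputable def bilam (a : ℤ → ℕ) (x y : ℤ → ℝ) (i : ℤ) : ℝ := a i + x (i + 1) + y (i - 1)

namespace BiCF

variable {a : ℤ → ℕ} {x y : ℤ → ℝ}

theorem shift (h : BiCF a x y) (k : ℤ) :
    BiCF (fun i => a (i + k)) (fun i => x (i + k)) (fun i => y (i + k)) where
  one_le i := h.one_le _
  x_pos i := h.x_pos _
  x_lt i := h.x_lt _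
  x_rec i := by
    have := h.x_rec (i + k)
    rwa [show i + k + 1 = i + 1 + k by ring] at this
  y_pos i := h.y_pos _
  y_lt i := h.y_lt _
  y_rec i := by
    have := h.y_rec (i + k)
    rwa [show i + k - 1 = i - 1 + k by ring] at this

theorem reverse (h : BiCF a x y) :
    BiCF (fun i => a (-i)) (fun i => y (-i)) (fun i => x (-i)) where
  one_le i := h.one_le _
  x_pos i := h.y_pos _
  x_lt i := h.y_lt _
  x_rec i := by
    have := h.y_rec (-i)
    rwa [show -i - 1 = -(i + 1) by ring] at this
  y_pos i := h.x_pos _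
  y_lt i := h.x_lt _
  y_rec i := by
    have := h.x_rec (-i)
    rwa [show -i + 1 = -(i - 1) by ring] at this

theorem bilam_shift (k i : ℤ) : bilam (fun i => a (i + k)) (fun i => x (i + k))
    (fun i => y (i + k)) i = bilam a x y (i + k) := by
  simp only [bilam]
  rw [show i + k + 1 = i + 1 + k by ring, show i + k - 1 = i - 1 + k by ring]

theorem bilam_reverse (i : ℤ) : bilam (fun i => a (-i)) (fun i => y (-i)) (fun i => x (-i)) i =
    bilam a x y (-i) := by
  simp only [bilam]
  rw [show -i + 1 = -(i - 1) by ring, show -i - 1 = -(i + 1) by ring]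
  ring

theorem half (h : BiCF a x y) :
    HalfCF (fun n => a n) (fun n => x n) (fun n => y ((n : ℤ) - 1)) where
  one_le n := h.one_le _
  x_pos n := h.x_pos _
  x_lt n := h.x_lt _
  x_rec n := by
    have := h.x_rec n
    push_cast; exact this
  y_nonneg n := (h.y_pos _).le
  y_rec n := by
    have := h.y_rec n
    push_cast
    rwa [show (n : ℤ) + 1 - 1 = n by ring]

theorem one_le_of_lt (h : BiCF a x y) {Λ : ℝ} (hle : ∀ i, bilam a x y i ≤ Λ)
    (h0 : bilam a x y 0 = Λ) {P Q : ℤ} (hPQ : P ≠ 0 ∨ Q ≠ 0)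
    (hlt : |P - (x 0)⁻¹ * Q| < |P + y (-1) * Q|) :
    1 ≤ |P - (x 0)⁻¹ * Q| * |P + y (-1) * Q| := by
  have H := h.half
  have hx := h.x_pos 0
  have hd : HalfCF.dd (fun n => a n) (fun n => x n) P Q 0 = x 0 * (P - (x 0)⁻¹ * Q) := by
    simp only [HalfCF.dd, HalfCF.vec, Nat.cast_zero]; field_simp
  have hv : HalfCF.vv (fun n => a n) (fun n => y ((n : ℤ) - 1)) P Q 0 = P + y (-1) * Q := by
    simp [HalfCF.vv, HalfCF.vec]
  have hirr : Irrational (x 0) := H.irrational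
  have hne : HalfCF.dd (fun n => a n) (fun n => x n) P Q 0 ≠ 0 := by
    simp only [HalfCF.dd, HalfCF.vec, Nat.cast_zero]
    intro hh
    by_cases hP : P = 0
    · subst hP
      simp at hh hPQ
      exact hPQ hh
    · exact (hirr.mul_intCast hP).ne_int Q (sub_eq_zero.mp hh)
  obtain ⟨n, -, hn⟩ := H.exists_le hPQ (m := 0) hne (by
    rw [hd, hv, abs_mul, abs_of_pos hx]
    simpa using mul_lt_mul_of_pos_left hlt hx)
  rw [hd, hv, abs_mul, abs_of_pos hx] at hn
  have l : ∀ m : ℕ, HalfCF.lam (fun n => a n) (fun n => x n) (fun n => y ((n : ℤ) - 1)) m ≤ Λ := by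
    intro m
    have := hle m
    simp only [bilam] at this
    simp only [HalfCF.lam]; push_cast; exact this
  have hΛ : x 0 * Λ = 1 + x 0 * y (-1) := by
    have := h.x_rec 0
    rw [← h0]; simp only [bilam, zero_sub]; linear_combination this
  simp only [Nat.cast_zero, zero_sub] at hn
  rw [← hΛ] at hn
  have hΛpos : 0 < Λ := by
    have := mul_pos hx (h.y_pos (-1)); by_contra! hh; nlinarith
  have h2 := max_le (l n) (l (n + 1))
  have h3 : 0 ≤ x 0 * |P - (x 0)⁻¹ * Q| * |P + y (-1) * Q| := by positivity
  have h4 := hn.trans (mul_le_mul_of_nonneg_left h2 h3)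
  have h5 : (x 0 * Λ) * 1 ≤ (x 0 * Λ) * (|P - (x 0)⁻¹ * Q| * |P + y (-1) * Q|) := by linarith
  exact le_of_mul_le_mul_left h5 (by positivity)

theorem one_le_form (h : BiCF a x y) {Λ : ℝ} (hle : ∀ i, bilam a x y i ≤ Λ)
    (h0 : bilam a x y 0 = Λ) {P Q : ℤ} (hPQ : P ≠ 0 ∨ Q ≠ 0) :
    1 ≤ |P - (x 0)⁻¹ * Q| * |P + y (-1) * Q| := by
  have hx := h.x_pos 0
  have hx1 := h.x_rec 0
  have hy1 := h.y_rec 0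
  have hy := h.y_pos 0
  rw [zero_add] at hx1
  rw [zero_sub] at hy1
  rcases lt_trichotomy |P - (x 0)⁻¹ * Q| |P + y (-1) * Q| with hlt | heq | hgt
  · exact h.one_le_of_lt hle h0 hPQ hlt
  · have hξ : (x 0)⁻¹ = a 0 + x 1 := by field_simp; linarith
    have hy' := h.y_pos (-1)
    have h3 : (x 0)⁻¹ * y (-1) ≥ 1 := by
      have e1 := hle (-1)
      rw [← h0] at e1
      have e2 := h.y_rec (-1)
      simp only [bilam, zero_add, zero_sub, neg_add_cancel] at e1 e2
      have e3 : (a (-1) + y (-1 - 1)) = (y (-1))⁻¹ := by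
        field_simp; linarith
      have e4 : x 0 + (y (-1))⁻¹ ≤ (x 0)⁻¹ + y (-1) := by rw [hξ, ← e3]; linarith
      have e5 : x 0 * y (-1) * (x 0 + (y (-1))⁻¹) ≤ x 0 * y (-1) * ((x 0)⁻¹ + y (-1)) := by gcongr
      have e6 : x 0 * y (-1) * (x 0 + (y (-1))⁻¹) = x 0 * (x 0 * y (-1) + 1) := by field_simp
      have e7 : x 0 * y (-1) * ((x 0)⁻¹ + y (-1)) = y (-1) * (x 0 * y (-1) + 1) := by
        field_simp; ring
      rw [e6, e7] at e5
      have e8 : x 0 ≤ y (-1) := le_of_mul_le_mul_right e5 (by positivity)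
      rw [ge_iff_le, ← div_eq_inv_mul, le_div_iff₀ hx]; linarith
    have := HalfCF.critical (inv_pos.mpr hx) hy' hPQ heq.ge (by
      rw [heq]
      have := h.y_lt (-1)
      have h2 := h.x_lt 0
      have : 1 ≤ (x 0)⁻¹ := (one_le_inv₀ hx).mpr h2.le
      gcongr; linarith)
    rwa [min_eq_left h3] at this
  · have H := h.reverse
    have e1 : (x 0)⁻¹ = a 0 + x 1 := by field_simp; linarith
    have e2 : (y 0)⁻¹ = a 0 + y (-1) := by field_simp; linarith
    have := H.one_le_of_lt (Λ := Λ) (P := P - a 0 * Q) (Q := -Q)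
      (fun i => by rw [bilam_reverse]; exact hle _) (by rw [bilam_reverse]; simpa using h0)
      (by
        by_cases hQ : Q = 0
        · left; simpa [hQ] using hPQ
        · right; simpa using hQ)
    simp only [neg_zero, neg_neg] at this
    push_cast at this
    rw [e2] at this
    rw [e1] at hgt ⊢
    ring_nf at this hgt ⊢
    have h2 := this hgt
    linarith

theorem mem_markov (h : BiCF a x y) {Λ : ℝ} (hle : ∀ i, bilam a x y i ≤ Λ)
    (h0 : bilam a x y 0 = Λ) : Λ ∈ MarkovSpectrum := by
  have hx := h.x_pos 0
  have hy := h.y_pos (-1)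
  have hΛ : (x 0)⁻¹ + y (-1) = Λ := by
    have hx1 := h.x_rec 0
    have : (x 0)⁻¹ = a 0 + x (0 + 1) := by field_simp; linarith
    rw [← h0, this]; simp [bilam]
  have hpos : 0 < Λ := by rw [← hΛ]; positivity
  have hdisc : (y (-1) - (x 0)⁻¹) ^ 2 - 4 * 1 * (-((x 0)⁻¹ * y (-1))) = Λ ^ 2 := by
    rw [← hΛ]; ring
  have hval : markovVal 1 (y (-1) - (x 0)⁻¹) (-((x 0)⁻¹ * y (-1))) = ENNReal.ofReal Λ := by
    unfold markovVal
    rw [hdisc, Real.sqrt_sq hpos.le]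
    apply le_antisymm
    · refine iSup₂_le fun pq hpq => ?_
      have h1 : 1 ≤ |1 * (pq.1 : ℝ) ^ 2 + (y (-1) - (x 0)⁻¹) * pq.1 * pq.2 +
          (-((x 0)⁻¹ * y (-1))) * (pq.2 : ℝ) ^ 2| := by
        have := h.one_le_form hle h0 (P := pq.1) (Q := pq.2) (by
          by_contra! hh
          exact hpq (Prod.ext hh.1 hh.2))
        rw [← abs_mul] at this
        refine this.trans (le_of_eq (congrArg _ ?_))
        ring
      have h2 := ENNReal.ofReal_le_ofReal h1
      rw [ENNReal.ofReal_one] at h2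
      exact ENNReal.div_le_of_le_mul (le_mul_of_one_le_right' h2)
    · refine le_trans ?_ (le_iSup₂ (f := fun (pq : ℤ × ℤ) (_ : pq ≠ (0, 0)) =>
        ENNReal.ofReal Λ / ENNReal.ofReal |1 * (pq.1 : ℝ) ^ 2 + (y (-1) - (x 0)⁻¹) * pq.1 * pq.2 +
          (-((x 0)⁻¹ * y (-1))) * (pq.2 : ℝ) ^ 2|) (1, 0) (by simp))
      simp
  refine ⟨1, y (-1) - (x 0)⁻¹, -((x 0)⁻¹ * y (-1)), ?_, ?_, ?_⟩
  · rw [hdisc]; positivity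
  · rw [hval]; exact ENNReal.ofReal_ne_top
  · rw [hval]; exact ENNReal.toReal_ofReal hpos.le

end BiCF

open Filter Topology in
/-- Limits of finite continued fractions along an ultrafilter. -/
theorem exists_tail_limit {ι : Type*} (F : Ultrafilter ι) (X : ι → ℤ → ℝ) (b : ℤ → ℕ)
    (hb : ∀ i, 1 ≤ b i) (h01 : ∀ i, ∀ᶠ t in (F : Filter ι), X t i ∈ Set.Icc (0 : ℝ) 1)
    (hrec : ∀ i, ∀ᶠ t in (F : Filter ι), X t i * (b i + X t (i + 1)) = 1) :
    ∃ x : ℤ → ℝ, (∀ i, Tendsto (fun t => X t i) F (𝓝 (x i))) ∧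
      ∀ i, 0 < x i ∧ x i < 1 ∧ x i * (b i + x (i + 1)) = 1 := by
  have hlim : ∀ i, ∃ l ∈ Set.Icc (0 : ℝ) 1, Tendsto (fun t => X t i) F (𝓝 l) := by
    intro i
    obtain ⟨l, hl, h⟩ := isCompact_Icc.ultrafilter_le_nhds (F.map fun t => X t i)
      (le_principal_iff.mpr (h01 i))
    exact ⟨l, hl, h⟩
  choose x hx hxl using hlim
  have hr : ∀ i, x i * (b i + x (i + 1)) = 1 := by
    intro i
    have h1 := (hxl i).mul ((hxl (i + 1)).const_add (b i : ℝ))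
    exact tendsto_nhds_unique h1 (tendsto_const_nhds.congr' ((hrec i).mono fun t ht => ht.symm))
  have hb' : ∀ i, (1 : ℝ) ≤ b i := fun i => by exact_mod_cast hb i
  have hpos : ∀ i, 0 < x i := by
    intro i
    refine lt_of_le_of_ne (hx i).1 fun h => ?_
    have := hr i
    rw [← h] at this
    simp at this
  refine ⟨x, hxl, fun i => ⟨hpos i, ?_, hr i⟩⟩
  have h1 := hr i
  have h2 := hpos i
  have h3 := hpos (i + 1)
  have h4 := hb' i
  by_contra! hh
  nlinarith

/-- Finite continued fractions of a prescribed length. -/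
noncomputable def finCF (a : ℤ → ℕ) : ℕ → ℤ → ℝ
  | 0, _ => 1
  | t + 1, i => 1 / (a i + finCF a t (i + 1))

theorem finCF_mem {a : ℤ → ℕ} (ha : ∀ i, 1 ≤ a i) (t : ℕ) :
    ∀ i, finCF a t i ∈ Set.Icc (0 : ℝ) 1 := by
  induction t with
  | zero => intro i; simp [finCF]
  | succ t ih =>
    intro i
    have h1 := (ih (i + 1)).1
    have h2 : (1 : ℝ) ≤ a i := by exact_mod_cast ha i
    simp only [finCF]
    refine ⟨by positivity, ?_⟩
    rw [div_le_one (by positivity)]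
    linarith

open Filter Topology in
theorem exists_tail {a : ℤ → ℕ} (ha : ∀ i, 1 ≤ a i) :
    ∃ x : ℤ → ℝ, ∀ i, 0 < x i ∧ x i < 1 ∧ x i * (a i + x (i + 1)) = 1 := by
  obtain ⟨x, -, hx⟩ := exists_tail_limit (hyperfilter ℕ) (fun N i => finCF a (N - i).toNat i) a ha
    (fun i => Eventually.of_forall fun N => finCF_mem ha _ i)
    (fun i => by
      have : ∀ᶠ N : ℕ in atTop, i.toNat + 1 ≤ N := eventually_ge_atTop _
      rw [← Nat.cofinite_eq_atTop] at this
      filter_upwards [hyperfilter_le_cofinite this] with N hN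
      have e : ((N : ℤ) - i).toNat = ((N : ℤ) - (i + 1)).toNat + 1 := by omega
      have h1 := (finCF_mem ha ((N : ℤ) - (i + 1)).toNat (i + 1)).1
      have h2 : (1 : ℝ) ≤ a i := by exact_mod_cast ha i
      rw [e]
      simp only [finCF]
      field_simp)
  exact ⟨x, hx⟩

theorem BiCF.exists {a : ℤ → ℕ} (ha : ∀ i, 1 ≤ a i) : ∃ x y, BiCF a x y := by
  obtain ⟨x, hx⟩ := exists_tail ha
  obtain ⟨y, hy⟩ := exists_tail (a := fun i => a (-i)) (fun i => ha _)
  refine ⟨x, fun i => y (-i), ha, fun i => (hx i).1, fun i => (hx i).2.1, fun i => (hx i).2.2,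
    fun i => (hy _).1, fun i => (hy _).2.1, fun i => ?_⟩
  have := (hy (-i)).2.2
  rw [neg_neg] at this
  rwa [show -(i - 1) = -i + 1 by ring]

open Filter Topology in
/-- Limits of the digits of a one-sided continued fraction along an ultrafilter. -/
theorem HalfCF.exists_limit {a : ℕ → ℕ} {x y : ℕ → ℝ} (h : HalfCF a x y) (F : Ultrafilter ℕ)
    (hF : (F : Filter ℕ) ≤ atTop) {B : ℕ} (hB : ∀ᶠ n in atTop, a n ≤ B) :
    ∃ b X Y, BiCF b X Y ∧ (∀ i : ℤ, ∀ᶠ n : ℕ in (F : Filter ℕ), a (n + i).toNat = b i) ∧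
      ∀ i : ℤ, Tendsto (fun n : ℕ => lam a x y (n + i).toNat) F (𝓝 (bilam b X Y i)) := by
  have hge : ∀ m : ℕ, ∀ᶠ n : ℕ in (F : Filter ℕ), m ≤ n := fun m => hF (eventually_ge_atTop m)
  have hdig : ∀ i : ℤ, ∃ d, ∀ᶠ n : ℕ in (F : Filter ℕ), a (n + i).toNat = d := by
    intro i
    obtain ⟨N, hN⟩ := eventually_atTop.mp hB
    have : ∀ᶠ n : ℕ in (F : Filter ℕ), ∃ d ∈ Set.Iic B, a (n + i).toNat = d := by
      filter_upwards [hge (N + i.natAbs)] with n hn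
      exact ⟨_, hN _ (by omega), rfl⟩
    obtain ⟨d, -, hd⟩ := (Ultrafilter.eventually_exists_mem_iff (Set.finite_Iic B)).mp this
    exact ⟨d, hd⟩
  choose b hb using hdig
  have hb1 : ∀ i, 1 ≤ b i := by
    intro i
    obtain ⟨n, hn⟩ := (hb i).exists
    rw [← hn]; exact h.one_le _
  obtain ⟨X, hX, hX'⟩ := exists_tail_limit F (fun n i => x (n + i).toNat) b hb1
    (fun i => Eventually.of_forall fun n => ⟨(h.x_pos _).le, (h.x_lt _).le⟩)
    (fun i => by
      filter_upwards [hb i, hge (i.natAbs + 1)] with n hn hn'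
      rw [← hn, show ((n : ℤ) + (i + 1)).toNat = ((n : ℤ) + i).toNat + 1 by omega]
      exact h.x_rec _)
  obtain ⟨Y, hY, hY'⟩ := exists_tail_limit F (fun n i => y ((n + (-i)).toNat + 1))
    (fun i => b (-i)) (fun i => hb1 _)
    (fun i => Eventually.of_forall fun n => ⟨h.y_nonneg _, h.y_le_one _⟩)
    (fun i => by
      filter_upwards [hb (-i), hge (i.natAbs + 1)] with n hn hn'
      rw [← hn, show ((n : ℤ) + -(i + 1)).toNat + 1 = ((n : ℤ) + (-i)).toNat by omega]
      exact h.y_rec _)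
  refine ⟨b, X, fun i => Y (-i), ⟨hb1, fun i => (hX' i).1, fun i => (hX' i).2.1,
    fun i => (hX' i).2.2, fun i => (hY' _).1, fun i => (hY' _).2.1, fun i => ?_⟩, hb, fun i => ?_⟩
  · have := (hY' (-i)).2.2
    rw [neg_neg] at this
    rwa [show -(i - 1) = -i + 1 by ring]
  · have h1 := ((hX (i + 1)).const_add (b i : ℝ)).add (hY (-(i - 1)))
    refine h1.congr' ?_
    filter_upwards [hb i, hge (i.natAbs + 1)] with n hn hn'
    simp only [lam, hn]
    rw [show ((n : ℤ) + (i + 1)).toNat = ((n : ℤ) + i).toNat + 1 by omega,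
      show ((n : ℤ) + -(-(i - 1))).toNat + 1 = ((n : ℤ) + i).toNat by omega]

/-! ### Projective coordinates centred at the fixed point `√2 - 1` -/

/-- The contraction factor of the digit `2`. -/
noncomputable def qq : ℝ := 3 - 2 * √2

/-- The action of the digit `1` in the coordinate centred at `√2 - 1`. -/
noncomputable def gm (T : ℝ) : ℝ := (√2 - 1 - (3 - √2) * T) / (3 + √2 + (1 + √2) * T)

/-- The coordinate centred at `√2 - 1`. -/
noncomputable def phi (x : ℝ) : ℝ := (x - (√2 - 1)) / (x + (√2 + 1))

/-- The deviation of the value at a digit `2` adjacent to a digit `1` from `1 + 3 / √2`, divided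
by `√2`. -/
noncomputable def HH (u v : ℝ) : ℝ := -2 * u / (qq + u) - v / (1 + v)

theorem sqrt_two_bounds : 1.414213562 < √2 ∧ √2 < 1.414213563 ∧ √2 * √2 = 2 := by
  refine ⟨Real.lt_sqrt_of_sq_lt (by norm_num), ?_, Real.mul_self_sqrt (by norm_num)⟩
  rw [Real.sqrt_lt' (by norm_num)]; norm_num

theorem qq_lower : 0.171572874 < qq := by
  have := sqrt_two_bounds.2.1; unfold qq; linarith

theorem qq_upper : qq < 0.171572876 := by
  have := sqrt_two_bounds.1; unfold qq; linarith

theorem qq_pos : 0 < qq := by linarith [qq_lower]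

theorem qq_lt_one : qq < 1 := by linarith [qq_upper]

theorem qq_sq : qq ^ 2 = 6 * qq - 1 := by
  have := sqrt_two_bounds.2.2; unfold qq; nlinarith

theorem gm_den_pos {T : ℝ} (h : -0.02 ≤ T) : 4 < 3 + √2 + (1 + √2) * T := by
  have := sqrt_two_bounds.1
  have := sqrt_two_bounds.2.1
  nlinarith

theorem gm_sub {s t : ℝ} (hs : -0.02 ≤ s) (ht : -0.02 ≤ t) :
    gm s - gm t = -(8 / ((3 + √2 + (1 + √2) * s) * (3 + √2 + (1 + √2) * t))) * (s - t) := by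
  have h1 := gm_den_pos hs
  have h2 := gm_den_pos ht
  have h3 := sqrt_two_bounds.2.2
  unfold gm
  rw [div_sub_div _ _ (by linarith) (by linarith), ← neg_div, div_mul_eq_mul_div]
  congr 1
  linear_combination 0 * h3

/-- Mean value form for `gm` on the range of all tails. -/
theorem gm_lip {s t : ℝ} (hs : -0.02 ≤ s) (ht : -0.02 ≤ t) (hs' : s ≤ 0.11) (ht' : t ≤ 0.11) :
    ∃ c, 0.36 ≤ c ∧ c ≤ 0.42 ∧ gm s - gm t = -c * (s - t) := by
  refine ⟨_, ?_, ?_, gm_sub hs ht⟩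
  · have h1 := gm_den_pos hs
    have h2 := gm_den_pos ht
    rw [le_div_iff₀ (by positivity)]
    have h3 := sqrt_two_bounds.2.1
    have h4 := sqrt_two_bounds.1
    have a1 : 3 + √2 + (1 + √2) * s ≤ 4.68 := by nlinarith
    have a2 : 3 + √2 + (1 + √2) * t ≤ 4.68 := by nlinarith
    nlinarith
  · have h3 := sqrt_two_bounds.2.1
    have h4 := sqrt_two_bounds.1
    have a1 : 4.365 ≤ 3 + √2 + (1 + √2) * s := by nlinarith
    have a2 : 4.365 ≤ 3 + √2 + (1 + √2) * t := by nlinarith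
    rw [div_le_iff₀ (by positivity)]
    nlinarith

/-- Mean value form for `gm` near `0`. -/
theorem gm_lip_small {s t : ℝ} (hs : -0.0006 ≤ s) (ht : -0.0006 ≤ t) (hs' : s ≤ 0.0031)
    (ht' : t ≤ 0.0031) : ∃ c, 0.409 ≤ c ∧ c ≤ 0.411 ∧ gm s - gm t = -c * (s - t) := by
  have h3 := sqrt_two_bounds.2.1
  have h4 := sqrt_two_bounds.1
  have a1 : 3 + √2 + (1 + √2) * s ≤ 4.4218 := by nlinarith
  have a2 : 3 + √2 + (1 + √2) * t ≤ 4.4218 := by nlinarith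
  have a3 : 4.4127 ≤ 3 + √2 + (1 + √2) * s := by nlinarith
  have a4 : 4.4127 ≤ 3 + √2 + (1 + √2) * t := by nlinarith
  refine ⟨_, ?_, ?_, gm_sub (by linarith) (by linarith)⟩
  · rw [le_div_iff₀ (by positivity)]
    nlinarith
  · rw [div_le_iff₀ (by positivity)]
    nlinarith

theorem gm_zero_bounds : 0.093836 ≤ gm 0 ∧ gm 0 ≤ 0.093837 := by
  have h3 := sqrt_two_bounds.2.1
  have h4 := sqrt_two_bounds.1
  unfold gm
  constructor
  · rw [le_div_iff₀ (by linarith)]; linarith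
  · rw [div_le_iff₀ (by linarith)]; linarith

theorem gm_anti {s t : ℝ} (hs : -0.02 ≤ s) (hst : s ≤ t) : gm t ≤ gm s := by
  have h1 := gm_den_pos hs
  have h2 := gm_den_pos (hs.trans hst)
  have := gm_sub (hs.trans hst) hs
  have : 0 ≤ 8 / ((3 + √2 + (1 + √2) * t) * (3 + √2 + (1 + √2) * s)) * (t - s) :=
    mul_nonneg (by positivity) (by linarith)
  linarith

theorem gm_ge {T b : ℝ} (h : -0.02 ≤ T) (hb : b * (3 + √2 + (1 + √2) * T) ≤
    √2 - 1 - (3 - √2) * T) : b ≤ gm T := by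
  have := gm_den_pos h
  unfold gm
  rwa [le_div_iff₀ (by linarith)]

theorem gm_le {T b : ℝ} (h : -0.02 ≤ T) (hb : √2 - 1 - (3 - √2) * T ≤
    b * (3 + √2 + (1 + √2) * T)) : gm T ≤ b := by
  have := gm_den_pos h
  unfold gm
  rwa [div_le_iff₀ (by linarith)]

theorem gm_range {T : ℝ} (h : -0.0183 ≤ T) (h' : T ≤ 0.1062) : 0.0526 ≤ gm T ∧ gm T ≤ 0.1015 := by
  have h3 := sqrt_two_bounds.2.1
  have h4 := sqrt_two_bounds.1
  constructor
  · refine le_trans (gm_ge (T := 0.1062) (by norm_num) (by linarith)) (gm_anti (by linarith) h')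
  · refine le_trans (gm_anti (by linarith) h) (gm_le (by norm_num) (by linarith))

theorem gm_range_double {T : ℝ} (h : 0.0526 ≤ T) (h' : T ≤ 0.1015) :
    0.0543 ≤ gm T ∧ gm T ≤ 0.0729 := by
  have h3 := sqrt_two_bounds.2.1
  have h4 := sqrt_two_bounds.1
  constructor
  · refine le_trans (gm_ge (T := 0.1015) (by norm_num) (by linarith)) (gm_anti (by linarith) h')
  · refine le_trans (gm_anti (by linarith) h) (gm_le (by norm_num) (by linarith))

theorem gm_range_single {T : ℝ} (h : -0.0006 ≤ T) (h' : T ≤ 0.0031) :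
    0.0925 ≤ gm T ∧ gm T ≤ 0.0942 := by
  have h3 := sqrt_two_bounds.2.1
  have h4 := sqrt_two_bounds.1
  constructor
  · refine le_trans (gm_ge (T := 0.0031) (by norm_num) (by linarith)) (gm_anti (by linarith) h')
  · refine le_trans (gm_anti (by linarith) h) (gm_le (by norm_num) (by linarith))

theorem phi_two {x y : ℝ} (hx : 0 < x) (hy : 0 < y) (h : x * (2 + y) = 1) :
    phi x = -qq * phi y := by
  have h3 := sqrt_two_bounds.2.2
  have d1 : x + (√2 + 1) ≠ 0 := by positivity
  have d2 : y + (√2 + 1) ≠ 0 := by positivity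
  unfold phi qq
  rw [mul_div_assoc', div_eq_div_iff d1 d2]
  linear_combination (4 - 2 * √2) * h + (2 * √2 - 4 + 2 * x - 2 * y) * h3

theorem phi_range {x : ℝ} (h : 4 / 11 ≤ x) (h' : x ≤ 3 / 4) : -0.0183 ≤ phi x ∧ phi x ≤ 0.1062 := by
  have h3 := sqrt_two_bounds.2.1
  have h4 := sqrt_two_bounds.1
  unfold phi
  constructor
  · rw [le_div_iff₀ (by linarith)]; linarith
  · rw [div_le_iff₀ (by linarith)]; linarith

theorem phi_one {x y : ℝ} (hx : 0 < x) (hy : 0 < y) (h : x * (1 + y) = 1) :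
    phi x = gm (phi y) := by
  have h3 := sqrt_two_bounds.2.2
  have h4 := sqrt_two_bounds.1
  have d1 : 0 < x + (√2 + 1) := by positivity
  have d2 : 0 < y + (√2 + 1) := by positivity
  have hY : phi y * (y + (√2 + 1)) = y - (√2 - 1) := by
    unfold phi; field_simp
  set Y := phi y
  have d3 : (3 + √2 + (1 + √2) * Y) * (y + (√2 + 1)) = 2 * √2 * ((√2 + 1) * y + (2 + √2)) := by
    linear_combination (1 + √2) * hY - (2 + 2 * y) * h3
  have d4 : 3 + √2 + (1 + √2) * Y ≠ 0 := by
    intro h0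
    rw [h0, zero_mul] at d3
    have : 0 < 2 * √2 * ((√2 + 1) * y + (2 + √2)) := by positivity
    linarith
  unfold phi gm
  rw [div_eq_div_iff d1.ne' d4]
  apply mul_right_cancel₀ d2.ne'
  have d5 : (√2 - 1 - (3 - √2) * Y) * (y + (√2 + 1)) = 2 * √2 * ((1 - √2) * y + (2 - √2)) := by
    linear_combination -(3 - √2) * hY + (2 * y + 2) * h3
  have e1 : (x - (√2 - 1)) * (1 + y) = (1 - √2) * y + (2 - √2) := by linear_combination h
  have e2 : (x + (√2 + 1)) * (1 + y) = (√2 + 1) * y + (2 + √2) := by linear_combination h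
  calc _ = (x - (√2 - 1)) * ((3 + √2 + (1 + √2) * Y) * (y + (√2 + 1))) := by ring
    _ = ((√2 - 1 - (3 - √2) * Y) * (y + (√2 + 1))) * (x + (√2 + 1)) := by
      rw [d3, d5, ← e1, ← e2]; ring
    _ = _ := by ring

theorem HH_eq {x y : ℝ} (hx : 0 < x) (hy : 0 < y) :
    1 / x + 1 / (1 + y) = 1 + 3 / √2 + √2 * HH (phi x) (phi y) := by
  have h3 := sqrt_two_bounds.2.2
  have h4 := sqrt_two_bounds.1
  have d1 : 0 < x + (√2 + 1) := by positivity
  have d2 : 0 < y + (√2 + 1) := by positivity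
  have hr : 0 < 2 - √2 := by linarith [sqrt_two_bounds.2.1]
  have e1 : qq + phi x = 2 * (2 - √2) * x / (x + (√2 + 1)) := by
    unfold qq phi
    rw [eq_div_iff d1.ne', add_mul, div_mul_cancel₀ _ d1.ne']
    linear_combination -2 * h3
  have e2 : 1 + phi y = (2 * y + 2) / (y + (√2 + 1)) := by
    unfold phi
    rw [eq_div_iff d2.ne', add_mul, div_mul_cancel₀ _ d2.ne']
    ring
  have e3 : 3 / √2 = 3 * √2 / 2 := by
    rw [div_eq_div_iff (by positivity) (by norm_num)]; linear_combination -3 * h3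
  unfold HH
  rw [e1, e2, e3]
  unfold phi
  have f1 : √2 * (-2 * ((x - (√2 - 1)) / (x + (√2 + 1))) / (2 * (2 - √2) * x / (x + (√2 + 1)))) =
      1 / x - (√2 + 1) := by
    field_simp
    linear_combination (1 - x) * h3
  have f2 : √2 * ((y - (√2 - 1)) / (y + (√2 + 1)) / ((2 * y + 2) / (y + (√2 + 1)))) =
      √2 / 2 - 1 / (1 + y) := by
    field_simp
    linear_combination (-1 - y) * h3
  rw [mul_sub, f1, f2]
  ring

/-! ### One-sided tails -/

/-- The coordinates `t n` of the tails of a continued fraction with digits `d n ∈ {1, 2}` which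
contains no block `121`. -/
structure Tail (d : ℕ → ℕ) (t : ℕ → ℝ) : Prop where
  dig : ∀ n, d n = 1 ∨ d n = 2
  two : ∀ n, d n = 2 → t n = -qq * t (n + 1)
  one : ∀ n, d n = 1 → t n = gm (t (n + 1))
  nice : ∀ n, d n = 1 → d (n + 1) = 2 → d (n + 2) = 2
  lo : ∀ n, -0.0183 ≤ t n
  hi : ∀ n, t n ≤ 0.1062

namespace Tail

variable {d : ℕ → ℕ} {t : ℕ → ℝ}

theorem shift (h : Tail d t) (m : ℕ) : Tail (fun n => d (m + n)) (fun n => t (m + n)) where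
  dig _ := h.dig _
  two _ := h.two _
  one _ := h.one _
  nice _ := h.nice _
  lo _ := h.lo _
  hi _ := h.hi _

theorem le_of_two (h : Tail d t) {n : ℕ} (hn : d n = 2) : t n ≤ 0.0032 := by
  rw [h.two n hn]
  nlinarith [h.lo (n + 1), qq_lower, qq_upper]

theorem ge_of_one (h : Tail d t) {n : ℕ} (hn : d n = 1) : 0.0526 ≤ t n := by
  rw [h.one n hn]
  exact (gm_range (h.lo _) (h.hi _)).1

theorem le_coarse (h : Tail d t) (n : ℕ) : t n ≤ 0.1015 := by
  rcases h.dig n with hn | hn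
  · rw [h.one n hn]
    exact (gm_range (h.lo _) (h.hi _)).2
  · linarith [h.le_of_two hn]

theorem double (h : Tail d t) {n : ℕ} (h1 : d n = 1) (h2 : d (n + 1) = 1) :
    0.0543 ≤ t n ∧ t n ≤ 0.0729 := by
  rw [h.one n h1]
  exact gm_range_double (h.ge_of_one h2) (h.le_coarse _)

theorem two_two (h : Tail d t) {n : ℕ} (h1 : d n = 2) (h2 : d (n + 1) = 2) :
    -0.0006 ≤ t n ∧ t n ≤ 0.0031 := by
  have e : t n = qq ^ 2 * t (n + 2) := by
    rw [h.two n h1, h.two _ h2]; ring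
  have := h.lo (n + 2)
  have := h.le_coarse (n + 2)
  have := qq_lower
  have := qq_upper
  rw [e, qq_sq]
  constructor <;> nlinarith

theorem single (h : Tail d t) {n : ℕ} (h1 : d n = 1) (h2 : d (n + 1) = 2) :
    0.0925 ≤ t n ∧ t n ≤ 0.0942 := by
  rw [h.one n h1]
  have := h.two_two h2 (h.nice n h1 h2)
  exact gm_range_single this.1 this.2

theorem ge_of_one' (h : Tail d t) {n : ℕ} (hn : d n = 1) : 0.0543 ≤ t n := by
  rcases h.dig (n + 1) with h1 | h1
  · exact (h.double hn h1).1
  · linarith [(h.single hn h1).1]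

theorem le_fine (h : Tail d t) (n : ℕ) : t n ≤ 0.0942 := by
  rcases h.dig n with hn | hn
  · rcases h.dig (n + 1) with h1 | h1
    · linarith [(h.double hn h1).2]
    · exact (h.single hn h1).2
  · linarith [h.le_of_two hn]

theorem block (h : Tail d t) {m : ℕ} (hm : ∀ n < m, d n = 2) : t 0 = (-qq) ^ m * t m := by
  induction m with
  | zero => simp
  | succ m ih =>
    rw [ih fun n hn => hm n (by omega), h.two m (hm m (by omega))]; ring

/-- A positive upper bound at the scale `qq ^ m` forces `m` initial digits `2`, unless the parity
of the sign is wrong. -/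
theorem neg_or_block (h : Tail d t) {m : ℕ} (hm : (-1) ^ m * t 0 < 1.8 * qq ^ m) :
    (-1) ^ m * t 0 ≤ 0 ∨ ∀ n < m, d n = 2 := by
  by_contra! hc
  obtain ⟨hpos, hex⟩ := hc
  classical
  have hex' : ∃ n, n < m ∧ d n ≠ 2 := hex
  obtain ⟨h1, h2⟩ := Nat.find_spec hex'
  obtain ⟨n, hn⟩ : ∃ n, n = Nat.find hex' := ⟨_, rfl⟩
  rw [← hn] at h1 h2
  have h3 : ∀ i < n, d i = 2 := by
    intro i hi
    have := Nat.find_min hex' (hn ▸ hi)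
    by_contra hc
    exact this ⟨by omega, hc⟩
  have h4 : d n = 1 := (h.dig n).resolve_right h2
  have h5 := h.ge_of_one' h4
  have h6 := h.block h3
  have hq := qq_pos
  have hqn : 0 < qq ^ n := by positivity
  obtain ⟨r, rfl⟩ : ∃ r, m = n + r := ⟨m - n, by omega⟩
  have h7 : (-1) ^ (n + r) * t 0 = (-1) ^ r * (qq ^ n * t n) := by
    rw [h6, neg_pow qq n, pow_add]
    have : ((-1 : ℝ) ^ n) * (-1) ^ n = 1 := by rw [← mul_pow]; simp
    linear_combination ((-1) ^ r * qq ^ n * t n) * this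
  rw [h7] at hm hpos
  rcases Nat.even_or_odd r with hr | hr
  · rw [hr.neg_one_pow, one_mul, pow_add] at hm
    have h8 : qq ^ r ≤ qq ^ 2 := pow_le_pow_of_le_one hq.le qq_lt_one.le (by
      rcases hr with ⟨s, rfl⟩; omega)
    have h9 : 1.8 * qq ^ r < 0.0543 := by
      rw [qq_sq] at h8
      linarith [qq_upper]
    nlinarith
  · rw [hr.neg_one_pow] at hpos
    have : 0 < qq ^ n * t n := by nlinarith
    linarith

theorem upper (h : Tail d t) {m : ℕ} (hm : (-1) ^ m * t 0 < 1.8 * qq ^ m) :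
    (-1) ^ m * t 0 ≤ 0.0942 * qq ^ m := by
  have hq : 0 < qq ^ m := pow_pos qq_pos m
  rcases h.neg_or_block hm with h1 | h1
  · linarith
  · rw [h.block h1, neg_pow qq m]
    have : ((-1 : ℝ) ^ m) * (-1) ^ m = 1 := by rw [← mul_pow]; simp
    calc _ = ((-1 : ℝ) ^ m * (-1) ^ m) * (qq ^ m * t m) := by ring
      _ ≤ _ := by rw [this]; nlinarith [h.le_fine m]

/-- A window at the scale `qq ^ m` which forces `m` initial digits `2` followed by `12`. -/
theorem exact_block (h : Tail d t) {m : ℕ} (h1 : (-1) ^ m * t 0 < 1.8 * qq ^ m)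
    (h2 : 0.0729 * qq ^ m < (-1) ^ m * t 0) :
    (∀ n < m, d n = 2) ∧ d m = 1 ∧ d (m + 1) = 2 ∧ t 0 = (-qq) ^ m * gm (t (m + 1)) ∧
      -0.0006 ≤ t (m + 1) ∧ t (m + 1) ≤ 0.0031 := by
  have hq : 0 < qq ^ m := pow_pos qq_pos m
  have h3 := (h.neg_or_block h1).resolve_left (by nlinarith)
  have h4 := h.block h3
  have h5 : 0.0729 < t m := by
    rw [h4, neg_pow qq m] at h2
    have : ((-1 : ℝ) ^ m) * (-1) ^ m = 1 := by rw [← mul_pow]; simp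
    have e : (-1 : ℝ) ^ m * ((-1) ^ m * qq ^ m * t m) = qq ^ m * t m := by
      linear_combination (qq ^ m * t m) * this
    rw [e] at h2
    nlinarith
  have h6 : d m = 1 := by
    rcases h.dig m with h | h'
    · exact h
    · linarith [h.le_of_two h']
  have h7 : d (m + 1) = 2 := by
    rcases h.dig (m + 1) with h' | h'
    · linarith [(h.double h6 h').2]
    · exact h'
  have h8 := h.two_two h7 (h.nice m h6 h7)
  exact ⟨h3, h6, h7, by rw [h4, h.one m h6], h8.1, h8.2⟩

theorem abs_sub_le (h : Tail d t) {d' : ℕ → ℕ} {t' : ℕ → ℝ} (h' : Tail d' t') {m : ℕ}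
    (hd : ∀ n < m, d n = d' n) : |t 0 - t' 0| ≤ 0.42 ^ m * 0.2 := by
  induction m generalizing d t d' t' with
  | zero =>
    rw [abs_le]
    constructor <;> linarith [h.lo 0, h.hi 0, h'.lo 0, h'.hi 0]
  | succ m ih =>
    have h1 := ih (h.shift 1) (h'.shift 1) fun n hn => hd _ (by omega)
    simp only [Nat.add_zero] at h1
    have h2 : |t 0 - t' 0| ≤ 0.42 * |t 1 - t' 1| := by
      rcases h.dig 0 with h0 | h0
      · have h0' : d' 0 = 1 := by rw [← hd 0 (by omega), h0]
        obtain ⟨c, hc1, hc2, hc⟩ := gm_lip (s := t 1) (t := t' 1) (by linarith [h.lo 1])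
          (by linarith [h'.lo 1]) (by linarith [h.hi 1]) (by linarith [h'.hi 1])
        rw [h.one 0 h0, h'.one 0 h0']
        simp only [zero_add]
        rw [hc, abs_mul, abs_neg, abs_of_nonneg (by linarith)]
        gcongr
      · have h0' : d' 0 = 2 := by rw [← hd 0 (by omega), h0]
        rw [h.two 0 h0, h'.two 0 h0', ← mul_sub, abs_mul, abs_neg, abs_of_pos qq_pos]
        simp only [zero_add]
        gcongr
        linarith [qq_upper]
    calc _ ≤ _ := h2
      _ ≤ 0.42 * (0.42 ^ m * 0.2) := by gcongr
      _ = _ := by ring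

/-- The digits determine the coordinates. -/
theorem unique (h : Tail d t) {d' : ℕ → ℕ} {t' : ℕ → ℝ} (h' : Tail d' t')
    (hd : ∀ n, d n = d' n) : t 0 = t' 0 := by
  have h1 : ∀ m : ℕ, |t 0 - t' 0| ≤ 0.42 ^ m * 0.2 := fun m => h.abs_sub_le h' fun n _ => hd n
  have h2 : Filter.Tendsto (fun m : ℕ => (0.42 : ℝ) ^ m * 0.2) Filter.atTop (nhds 0) := by
    simpa using (tendsto_pow_atTop_nhds_zero_of_lt_one (r := (0.42 : ℝ)) (by norm_num)
      (by norm_num)).mul_const 0.2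
  have h3 := ge_of_tendsto' h2 h1
  have := abs_nonneg (t 0 - t' 0)
  have := abs_eq_zero.mp (le_antisymm h3 this)
  linarith

end Tail

/-! ### Two-sided systems of tails -/

/-- The coordinates of the right and left tails of a bi-infinite sequence of digits `1`, `2`
without blocks `121`. -/
structure Sys (a : ℤ → ℕ) (f g : ℤ → ℝ) : Prop where
  dig : ∀ i, a i = 1 ∨ a i = 2
  f_two : ∀ i, a i = 2 → f i = -qq * f (i + 1)
  f_one : ∀ i, a i = 1 → f i = gm (f (i + 1))
  g_two : ∀ i, a i = 2 → g i = -qq * g (i - 1)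
  g_one : ∀ i, a i = 1 → g i = gm (g (i - 1))
  nice : ∀ i, a i = 1 → a (i + 1) = 2 → a (i + 2) = 2
  f_lo : ∀ i, -0.0183 ≤ f i
  f_hi : ∀ i, f i ≤ 0.1062
  g_lo : ∀ i, -0.0183 ≤ g i
  g_hi : ∀ i, g i ≤ 0.1062

/-- `Blk a i m`: the digit `1` at `i` is followed by exactly `m` digits `2` and a digit `1`. -/
def Blk (a : ℤ → ℕ) (i : ℤ) (m : ℕ) : Prop :=
  a i = 1 ∧ (∀ t, i < t → t ≤ i + m → a t = 2) ∧ a (i + m + 1) = 1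

theorem Blk.reverse {a : ℤ → ℕ} {i : ℤ} {m : ℕ} (h : Blk (fun t => a (-t)) i m) :
    Blk a (-i - m - 1) m := by
  obtain ⟨h1, h2, h3⟩ := h
  refine ⟨?_, fun t ht ht' => ?_, ?_⟩
  · convert h3 using 2; ring
  · simpa using h2 (-t) (by omega) (by omega)
  · convert h1 using 2; ring

theorem Blk.to_reverse {a : ℤ → ℕ} {i : ℤ} {m : ℕ} (h : Blk a i m) :
    Blk (fun t => a (-t)) (-i - m - 1) m := by
  obtain ⟨h1, h2, h3⟩ := h
  refine ⟨?_, fun t ht ht' => h2 _ (by omega) (by omega), ?_⟩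
  · change a (-(-i - m - 1)) = 1; convert h3 using 2; ring
  · change a (-(-i - m - 1 + m + 1)) = 1; convert h1 using 2; ring

namespace Sys

variable {a : ℤ → ℕ} {f g : ℤ → ℝ}

theorem reverse (h : Sys a f g) :
    Sys (fun i => a (-i)) (fun i => g (-i)) (fun i => f (-i)) where
  dig i := h.dig _
  f_two i hi := by rw [h.g_two _ hi]; congr 2; ring
  f_one i hi := by rw [h.g_one _ hi]; congr 2; ring
  g_two i hi := by rw [h.f_two _ hi]; congr 2; ring
  g_one i hi := by rw [h.f_one _ hi]; congr 2; ring
  nice i h1 h2 := by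
    by_contra h3
    have h3 := (h.dig _).resolve_right h3
    have h4 := h.nice _ h3 (by convert h2 using 2; ring)
    have h5 : -(i + 2) + 2 = -i := by ring
    rw [h5] at h4
    omega
  f_lo i := h.g_lo _
  f_hi i := h.g_hi _
  g_lo i := h.f_lo _
  g_hi i := h.f_hi _

theorem tail (h : Sys a f g) (j : ℤ) : Tail (fun n => a (j + n)) (fun n => f (j + n)) where
  dig n := h.dig _
  two n hn := by rw [h.f_two _ hn]; push_cast; rw [add_assoc]
  one n hn := by rw [h.f_one _ hn]; push_cast; rw [add_assoc]
  nice n h1 h2 := by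
    have := h.nice _ h1 (by convert h2 using 2; push_cast; ring)
    convert this using 2; push_cast; ring
  lo n := h.f_lo _
  hi n := h.f_hi _

theorem tail_left (h : Sys a f g) (j : ℤ) : Tail (fun n => a (j - n)) (fun n => g (j - n)) := by
  have := h.reverse.tail (-j)
  convert this using 3 <;> ring

theorem f_le (h : Sys a f g) (i : ℤ) : f i ≤ 0.0942 := by
  simpa using (h.tail i).le_fine 0

theorem g_le (h : Sys a f g) (i : ℤ) : g i ≤ 0.0942 := by
  simpa using (h.tail_left i).le_fine 0

theorem blk_eq (h : Sys a f g) {i : ℤ} {m : ℕ} (hb : Blk a i m) :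
    f (i + 1) = (-qq) ^ m * gm (f (i + m + 2)) ∧ g (i + m) = (-qq) ^ m * gm (g (i - 1)) := by
  obtain ⟨h1, h2, h3⟩ := hb
  constructor
  · have := (h.tail (i + 1)).block (m := m) fun n hn => h2 _ (by omega) (by omega)
    simp only [Nat.cast_zero, add_zero] at this
    rw [this, ← add_right_comm, h.f_one _ h3]
    congr 3; ring
  · have := (h.tail_left (i + m)).block (m := m) fun n hn => h2 _ (by omega) (by omega)
    simp only [Nat.cast_zero, sub_zero, add_sub_cancel_right] at this
    rw [this, h.g_one _ h1]

theorem right_block (h : Sys a f g) {j : ℤ} (hj : a j = 1) {m : ℕ} {s : ℝ} (hs : (-qq) ^ m = s)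
    (h1 : s * f (j + 1) < 1.8 * s ^ 2) (h2 : 0.0729 * s ^ 2 < s * f (j + 1)) :
    Blk a j m ∧ a (j + m + 2) = 2 ∧ f (j + 1) = s * gm (f (j + m + 2)) ∧
      g (j + m) = s * gm (g (j - 1)) ∧ -0.0006 ≤ f (j + m + 2) ∧ f (j + m + 2) ≤ 0.0031 := by
  have ht := h.tail (j + 1)
  have hq : 0 < qq ^ m := pow_pos qq_pos m
  have e1 : s = (-1) ^ m * qq ^ m := by rw [← hs, neg_pow]
  have e2 : ((-1 : ℝ) ^ m) * (-1) ^ m = 1 := by rw [← mul_pow]; simp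
  have e3 : s ^ 2 = qq ^ m * qq ^ m := by
    rw [e1]; linear_combination (qq ^ m * qq ^ m) * e2
  have e4 : s * f (j + 1) = qq ^ m * ((-1) ^ m * f (j + 1)) := by rw [e1]; ring
  rw [e3, e4] at h1 h2
  obtain ⟨b1, b2, b3, -, b5, b6⟩ := ht.exact_block (m := m)
    (by simp only [Nat.cast_zero, add_zero]; nlinarith)
    (by simp only [Nat.cast_zero, add_zero]; nlinarith)
  have e5 : j + 1 + ((m + 1 : ℕ) : ℤ) = j + m + 2 := by push_cast; ring
  have hb : Blk a j m := by
    refine ⟨hj, fun t ht ht' => ?_, ?_⟩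
    · have := b1 (t - j - 1).toNat (by omega)
      convert this using 2; omega
    · convert b2 using 2; ring
  have := h.blk_eq hb
  simp only [e5] at b3 b5 b6
  rw [hs] at this
  exact ⟨hb, b3, this.1, this.2, b5, b6⟩

theorem left_block (h : Sys a f g) {j : ℤ} (hj : a j = 1) {m : ℕ} {s : ℝ} (hs : (-qq) ^ m = s)
    (h1 : s * g (j - 1) < 1.8 * s ^ 2) (h2 : 0.0729 * s ^ 2 < s * g (j - 1)) :
    Blk a (j - m - 1) m ∧ a (j - m - 2) = 2 ∧ g (j - 1) = s * gm (g (j - m - 2)) ∧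
      f (j - m) = s * gm (f (j + 1)) ∧ -0.0006 ≤ g (j - m - 2) ∧ g (j - m - 2) ≤ 0.0031 := by
  have e1 : -(-j + 1) = j - 1 := by ring
  have e2 : -(-j + (m : ℤ) + 2) = j - m - 2 := by ring
  have e3 : -(-j + (m : ℤ)) = j - m := by ring
  have e4 : -(-j - 1) = j + 1 := by ring
  have := h.reverse.right_block (j := -j) (m := m) (s := s) (by simpa using hj) hs
    (by simpa only [e1] using h1) (by simpa only [e1] using h2)
  simp only [e1, e2, e3, e4] at this
  obtain ⟨b1, b2⟩ := this
  have b1 := b1.reverse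
  rw [neg_neg] at b1
  exact ⟨b1, b2⟩

theorem f_upper (h : Sys a f g) (j : ℤ) {m : ℕ} {s : ℝ} (hs : (-qq) ^ m = s)
    (h1 : s * f j < 1.8 * s ^ 2) : s * f j ≤ 0.0942 * s ^ 2 := by
  have hq : 0 < qq ^ m := pow_pos qq_pos m
  have e1 : s = (-1) ^ m * qq ^ m := by rw [← hs, neg_pow]
  have e2 : ((-1 : ℝ) ^ m) * (-1) ^ m = 1 := by rw [← mul_pow]; simp
  have e3 : s ^ 2 = qq ^ m * qq ^ m := by
    rw [e1]; linear_combination (qq ^ m * qq ^ m) * e2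
  have e4 : s * f j = qq ^ m * ((-1) ^ m * f j) := by rw [e1]; ring
  rw [e3, e4] at h1 ⊢
  have := (h.tail j).upper (m := m) (by simp only [Nat.cast_zero, add_zero]; nlinarith)
  simp only [Nat.cast_zero, add_zero] at this
  nlinarith

theorem g_upper (h : Sys a f g) (j : ℤ) {m : ℕ} {s : ℝ} (hs : (-qq) ^ m = s)
    (h1 : s * g j < 1.8 * s ^ 2) : s * g j ≤ 0.0942 * s ^ 2 := by
  have := h.reverse.f_upper (-j) hs (by simpa using h1)
  simpa using this

end Sys

/-- A system of tails in which all values at digits `2` adjacent to a digit `1` are at most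
`1 + 3 / √2 + √2 * θ`. -/
structure Adm (θ : ℝ) (a : ℤ → ℕ) (f g : ℤ → ℝ) : Prop extends Sys a f g where
  right_le : ∀ j, a j = 1 → a (j + 1) = 2 → HH (f (j + 1)) (g (j - 1)) ≤ θ
  left_le : ∀ j, a j = 1 → a (j - 1) = 2 → HH (g (j - 1)) (f (j + 1)) ≤ θ

namespace Adm

variable {θ : ℝ} {a : ℤ → ℕ} {f g : ℤ → ℝ}

theorem reverse (h : Adm θ a f g) :
    Adm θ (fun i => a (-i)) (fun i => g (-i)) (fun i => f (-i)) where
  toSys := h.toSys.reverse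
  right_le j h1 h2 := by
    have e1 : -(j + 1) = -j - 1 := by ring
    have e2 : -(j - 1) = -j + 1 := by ring
    simp only [e1, e2] at h2 ⊢
    exact h.left_le _ h1 h2
  left_le j h1 h2 := by
    have e1 : -(j + 1) = -j - 1 := by ring
    have e2 : -(j - 1) = -j + 1 := by ring
    simp only [e1, e2] at h2 ⊢
    exact h.right_le _ h1 h2

end Adm

/-! ### Bi-infinite continued fractions with small values -/

namespace BiCF

variable {a : ℤ → ℕ} {x y : ℤ → ℝ}

theorem bounds_of_dig (h : BiCF a x y) (hd : ∀ i, a i = 1 ∨ a i = 2) (i : ℤ) :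
    4 / 11 ≤ x i ∧ x i ≤ 3 / 4 ∧ 4 / 11 ≤ y i ∧ y i ≤ 3 / 4 := by
  have hA : ∀ i, (1 : ℝ) ≤ a i ∧ (a i : ℝ) ≤ 2 := by
    intro i
    rcases hd i with h1 | h1 <;> rw [h1] <;> norm_num
  have h1 : ∀ i, 1 / 3 ≤ x i ∧ 1 / 3 ≤ y i := by
    intro i
    have := h.x_rec i
    have := h.y_rec i
    have := h.x_pos i
    have := h.y_pos i
    have := h.x_lt (i + 1)
    have := h.y_lt (i - 1)
    have := hA i
    constructor <;> nlinarith
  have h2 : ∀ i, x i ≤ 3 / 4 ∧ y i ≤ 3 / 4 := by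
    intro i
    have := h.x_rec i
    have := h.y_rec i
    have := h.x_pos i
    have := h.y_pos i
    have := h1 (i + 1)
    have := h1 (i - 1)
    have := hA i
    constructor <;> nlinarith
  refine ⟨?_, (h2 i).1, ?_, (h2 i).2⟩
  · have := h.x_rec i
    have := h.x_pos i
    have := h2 (i + 1)
    have := hA i
    nlinarith
  · have := h.y_rec i
    have := h.y_pos i
    have := h2 (i - 1)
    have := hA i
    nlinarith

theorem sys (h : BiCF a x y) (hd : ∀ i, a i = 1 ∨ a i = 2)
    (hn : ∀ i, a i = 1 → a (i + 1) = 2 → a (i + 2) = 2) :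
    Sys a (fun i => phi (x i)) (fun i => phi (y i)) where
  dig := hd
  f_two i hi := phi_two (h.x_pos i) (h.x_pos _) (by have := h.x_rec i; rwa [hi] at this)
  f_one i hi := phi_one (h.x_pos i) (h.x_pos _) (by simpa [hi] using h.x_rec i)
  g_two i hi := phi_two (h.y_pos i) (h.y_pos _) (by have := h.y_rec i; rwa [hi] at this)
  g_one i hi := phi_one (h.y_pos i) (h.y_pos _) (by simpa [hi] using h.y_rec i)
  nice := hn
  f_lo i := (phi_range (h.bounds_of_dig hd i).1 (h.bounds_of_dig hd i).2.1).1
  f_hi i := (phi_range (h.bounds_of_dig hd i).1 (h.bounds_of_dig hd i).2.1).2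
  g_lo i := (phi_range (h.bounds_of_dig hd i).2.2.1 (h.bounds_of_dig hd i).2.2.2).1
  g_hi i := (phi_range (h.bounds_of_dig hd i).2.2.1 (h.bounds_of_dig hd i).2.2.2).2

theorem bilam_right (h : BiCF a x y) {j : ℤ} (h1 : a j = 1) :
    bilam a x y (j + 1) = 1 + 3 / √2 + √2 * HH (phi (x (j + 1))) (phi (y (j - 1))) := by
  rw [← HH_eq (h.x_pos _) (h.y_pos _)]
  have e1 := h.x_rec (j + 1)
  have e2 := h.y_rec j
  have p1 := h.x_pos (j + 1)
  have p2 := h.y_pos (j - 1)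
  rw [h1] at e2
  unfold bilam
  have e3 : 1 / x (j + 1) = a (j + 1) + x (j + 1 + 1) := by
    rw [div_eq_iff p1.ne']; linarith
  have e4 : 1 / (1 + y (j - 1)) = y j := by
    rw [div_eq_iff (by linarith)]; push_cast at e2; linarith
  rw [e3, e4, add_sub_cancel_right]

theorem bilam_left (h : BiCF a x y) {j : ℤ} (h1 : a j = 1) :
    bilam a x y (j - 1) = 1 + 3 / √2 + √2 * HH (phi (y (j - 1))) (phi (x (j + 1))) := by
  rw [← HH_eq (h.y_pos _) (h.x_pos _)]
  have e1 := h.y_rec (j - 1)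
  have e2 := h.x_rec j
  have p1 := h.y_pos (j - 1)
  have p2 := h.x_pos (j + 1)
  rw [h1] at e2
  unfold bilam
  have e3 : 1 / y (j - 1) = a (j - 1) + y (j - 1 - 1) := by
    rw [div_eq_iff p1.ne']; linarith
  have e4 : 1 / (1 + x (j + 1)) = x j := by
    rw [div_eq_iff (by linarith)]; push_cast at e2; linarith
  rw [e3, e4, sub_add_cancel]
  ring

theorem dig_of_bilam_le (h : BiCF a x y) (hle : ∀ i, bilam a x y i ≤ 3.13) (i : ℤ) :
    a i = 1 ∨ a i = 2 := by
  have h1 : ∀ i, a i ≤ 3 := by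
    intro i
    by_contra hc
    have : (4 : ℝ) ≤ a i := by exact_mod_cast (by omega : 4 ≤ a i)
    have := hle i
    have := h.x_pos (i + 1)
    have := h.y_pos (i - 1)
    unfold bilam at *
    linarith
  have h2 : ∀ i, 1 / 4 < x i ∧ 1 / 4 < y i := by
    intro i
    have : (a i : ℝ) ≤ 3 := by exact_mod_cast h1 i
    have := h.x_rec i
    have := h.y_rec i
    have := h.x_pos i
    have := h.y_pos i
    have := h.x_lt (i + 1)
    have := h.y_lt (i - 1)
    constructor <;> nlinarith
  have h3 := h.one_le i
  have h4 := h1 i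
  by_contra hc
  have : (a i : ℝ) = 3 := by exact_mod_cast (by omega : a i = 3)
  have := hle i
  have := h2 (i + 1)
  have := h2 (i - 1)
  unfold bilam at *
  linarith

theorem nice_of_bilam_le (h : BiCF a x y) (hle : ∀ i, bilam a x y i ≤ 3.13) (i : ℤ)
    (h1 : a i = 1) (h2 : a (i + 1) = 2) : a (i + 2) = 2 := by
  have hd := h.dig_of_bilam_le hle
  by_contra hc
  have h3 := (hd _).resolve_right hc
  have e1 := h.x_rec (i + 2)
  have e2 := h.y_rec i
  have b1 := h.bounds_of_dig hd (i + 2 + 1)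
  have b2 := h.bounds_of_dig hd (i - 1)
  have b3 := h.bounds_of_dig hd (i + 2)
  have b4 := h.bounds_of_dig hd i
  have h4 := hle (i + 1)
  unfold bilam at h4
  rw [show i + 1 + 1 = i + 2 by ring, add_sub_cancel_right, h2] at h4
  rw [h3] at e1
  rw [h1] at e2
  push_cast at *
  nlinarith

theorem adm (h : BiCF a x y) {θ : ℝ} (hθ : θ ≤ 0.0004)
    (hle : ∀ i, bilam a x y i ≤ 1 + 3 / √2 + √2 * θ) :
    Adm θ a (fun i => phi (x i)) (fun i => phi (y i)) := by
  have s1 := sqrt_two_bounds.1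
  have s2 := sqrt_two_bounds.2.1
  have s3 := sqrt_two_bounds.2.2
  have hle' : ∀ i, bilam a x y i ≤ 3.13 := by
    intro i
    have e3 : 3 / √2 = 3 * √2 / 2 := by
      rw [div_eq_div_iff (by positivity) (by norm_num)]; linear_combination -3 * s3
    have := hle i
    rw [e3] at this
    nlinarith
  have hpos : 0 < √2 := by linarith
  exact {
    toSys := h.sys (h.dig_of_bilam_le hle') (h.nice_of_bilam_le hle')
    right_le := fun j h1 _ => by
      have := hle (j + 1)
      rw [h.bilam_right h1] at this
      exact le_of_mul_le_mul_left (by linarith) hpos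
    left_le := fun j h1 _ => by
      have := hle (j - 1)
      rw [h.bilam_left h1] at this
      exact le_of_mul_le_mul_left (by linarith) hpos }

theorem bilam_lt_of_one (h : BiCF a x y) {i : ℤ} (h1 : a i = 1) : bilam a x y i < 3 := by
  have := h.x_lt (i + 1)
  have := h.y_lt (i - 1)
  unfold bilam
  rw [h1]; push_cast; linarith

theorem bilam_lt_of_two (h : BiCF a x y) {i : ℤ} (h1 : a i = 2) (h2 : a (i - 1) = 2)
    (h3 : a (i + 1) = 2) : bilam a x y i < 3 := by
  have e1 := h.x_rec (i + 1)
  have e2 := h.y_rec (i - 1)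
  have := h.x_pos (i + 1 + 1)
  have := h.x_pos (i + 1)
  have := h.y_pos (i - 1 - 1)
  have := h.y_pos (i - 1)
  rw [h3] at e1
  rw [h2] at e2
  unfold bilam
  rw [h1]; push_cast at *; nlinarith

end BiCF

/-! ### Numerical estimates at the scale `e = qq ^ (2 * k + 1)` -/

theorem gm_ge_of_le {s : ℝ} (h1 : -0.02 ≤ s) (h2 : s ≤ 0.0000001) : 0.0938358 ≤ gm s := by
  refine le_trans ?_ (gm_anti h1 h2)
  obtain ⟨c, hc1, hc2, hc⟩ := gm_lip (s := 0.0000001) (t := 0) (by norm_num) (by norm_num)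
    (by norm_num) (by norm_num)
  have := gm_zero_bounds.1
  linarith

theorem gm_le_of_ge {s : ℝ} (h1 : -0.0000001 ≤ s) : gm s ≤ 0.0938372 := by
  refine le_trans (gm_anti (by norm_num) h1) ?_
  obtain ⟨c, hc1, hc2, hc⟩ := gm_lip (s := -0.0000001) (t := 0) (by norm_num) (by norm_num)
    (by norm_num) (by norm_num)
  have := gm_zero_bounds.2
  linarith

theorem neg_two_mul_div_le {u M : ℝ} (hu : -0.0183 ≤ u) :
    -2 * u / (qq + u) ≤ M ↔ -2 * u ≤ M * (qq + u) :=
  div_le_iff₀ (by linarith [qq_lower])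

theorem div_one_add_le {v : ℝ} (hv : -0.0183 ≤ v) : v / (1 + v) ≤ v := by
  rw [div_le_iff₀ (by linarith)]
  nlinarith [sq_nonneg v]

/-- The contraction factor `e` of a block of `2 * k + 1` digits `2` is small and comparable to `θ`. -/
structure Scale (k : ℕ) (e θ : ℝ) : Prop where
  one_le : 1 ≤ k
  pow_eq : qq ^ (2 * k + 1) = e
  le_small : e ≤ 0.0000001
  lo : 1.0965 * e ≤ θ
  hi : θ ≤ 1.0967 * e

namespace Scale

variable {k : ℕ} {e θ : ℝ}

theorem pos (h : Scale k e θ) : 0 < e := h.pow_eq ▸ pow_pos qq_pos _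

theorem powA (h : Scale k e θ) : (-qq) ^ (2 * k + 1) = -e := by
  rw [← h.pow_eq, Odd.neg_pow ⟨k, rfl⟩]

theorem powB (h : Scale k e θ) : (-qq) ^ (2 * k + 2) = e * qq := by
  rw [pow_succ, h.powA]; ring

theorem powC (h : Scale k e θ) : (-qq) ^ (2 * k + 3) = -(e * qq ^ 2) := by
  rw [pow_succ, h.powB]; ring

theorem pow_one_less (h : Scale k e θ) : (-qq) ^ (2 * k) = e / qq := by
  rw [eq_div_iff qq_pos.ne', ← h.pow_eq, pow_succ, Even.neg_pow ⟨k, by ring⟩]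

theorem pow_three_less (h : Scale k e θ) : (-qq) ^ (2 * k - 2) = e / qq ^ 3 := by
  have := h.one_le
  rw [eq_div_iff (pow_pos qq_pos 3).ne', ← h.pow_eq, Even.neg_pow ⟨k - 1, by omega⟩, ← pow_add]
  congr 1
  omega

end Scale

/-- Bounds for the powers of `qq` entering the estimates. -/
theorem qq_pow_bounds : 0.0294372 < qq ^ 2 ∧ qq ^ 2 < 0.0294373 ∧ 0.0050506 < qq ^ 3 ∧
    qq ^ 3 < 0.0050507 := by
  have h1 := qq_lower
  have h2 := qq_upper
  have h3 := qq_pos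
  have e2 : qq ^ 2 = qq * qq := by ring
  have e3 : qq ^ 3 = qq * qq * qq := by ring
  have a : 0.0294372 < qq * qq := by nlinarith
  have b : qq * qq < 0.0294373 := by nlinarith
  rw [e2, e3]
  refine ⟨a, b, ?_, ?_⟩ <;> nlinarith

theorem num_first {e θ t w : ℝ} (he : 0 < e) (hθ : θ ≤ 1.0967 * e) (hw : w ≤ 0.02 * e)
    (hw' : -0.0183 ≤ w) (ht : -0.0183 ≤ t) (h : HH t w ≤ θ) : -0.0958 * e ≤ t := by
  have h1 := div_one_add_le hw'
  unfold HH at h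
  have h2 : -2 * t / (qq + t) ≤ 1.1167 * e := by linarith
  rw [neg_two_mul_div_le ht] at h2
  by_contra! hc
  have h3 : t < 0 := by nlinarith
  nlinarith [qq_upper, mul_pos he (neg_pos.mpr h3)]

theorem num_second {e θ t s : ℝ} (he : 0 < e) (he' : e ≤ 0.0000001) (hθ : θ ≤ 1.0967 * e)
    (hs : s ≤ 0.02 * e) (hs' : -0.0183 ≤ s) (ht : -0.0183 ≤ t)
    (h : HH (-e * gm s) t ≤ θ) : -0.003 * e ≤ t := by
  have h0 := gm_ge_of_le (s := s) (by linarith) (by linarith)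
  have h00 := gm_le (T := s) (b := 0.2) (by linarith) (by
    nlinarith [sqrt_two_bounds.1, sqrt_two_bounds.2.1])
  have h1 := div_one_add_le ht
  unfold HH at h
  have h2 : 1.0937 * e ≤ -2 * (-e * gm s) / (qq + -e * gm s) := by
    rw [le_div_iff₀ (by nlinarith [qq_lower])]
    have : 0 ≤ e * gm s := by positivity
    nlinarith [qq_upper]
  linarith

theorem num_rel_ratio {q c d X X' Y Y' : ℝ} (hq : 0.1715 < q) (hq' : q < 0.1716)
    (hc : 0.409 ≤ c ∧ c ≤ 0.411) (hd : 0.409 ≤ d ∧ d ≤ 0.411)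
    (hX : -0.00000001 ≤ X ∧ X ≤ 0) (hX' : -0.00000001 ≤ X' ∧ X' ≤ 0)
    (hY : -0.00000001 ≤ Y ∧ Y ≤ 0) (hY' : -0.00000001 ≤ Y' ∧ Y' ≤ 0) :
    0.99 ≤ d * ((q + X) * (q + X')) / (c * q ^ 2 * ((1 + Y) * (1 + Y'))) ∧
      d * ((q + X) * (q + X')) / (c * q ^ 2 * ((1 + Y) * (1 + Y'))) ≤ 1.01 := by
  obtain ⟨hc1, hc2⟩ := hc
  obtain ⟨hd1, hd2⟩ := hd
  have p3 : 0 < 1 + Y := by linarith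
  have p4 : 0 < 1 + Y' := by linarith
  have p0 : 0 < c := by linarith
  have b1 : (q - 0.00000001) * (q - 0.00000001) ≤ (q + X) * (q + X') :=
    mul_le_mul (by linarith) (by linarith) (by linarith) (by linarith)
  have b2 : (q + X) * (q + X') ≤ q * q :=
    mul_le_mul (by linarith) (by linarith) (by linarith) (by linarith)
  have b3 : (1 + Y) * (1 + Y') ≤ 1 * 1 :=
    mul_le_mul (by linarith) (by linarith) (by linarith) (by linarith)
  have b4 : (1 - 0.00000001) * (1 - 0.00000001) ≤ (1 + Y) * (1 + Y') :=
    mul_le_mul (by linarith) (by linarith) (by norm_num) (by linarith)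
  constructor
  · rw [le_div_iff₀ (by positivity)]
    have a3 : c * q ^ 2 * ((1 + Y) * (1 + Y')) ≤ 0.411 * q ^ 2 * (1 * 1) := by gcongr
    have a4 : 0.409 * ((q - 0.00000001) * (q - 0.00000001)) ≤ d * ((q + X) * (q + X')) :=
      mul_le_mul hd1 b1 (by nlinarith) (by linarith)
    nlinarith
  · rw [div_le_iff₀ (by positivity)]
    have a3 : 0.409 * q ^ 2 * ((1 - 0.00000001) * (1 - 0.00000001)) ≤
        c * q ^ 2 * ((1 + Y) * (1 + Y')) := by
      gcongr
    have a4 : d * ((q + X) * (q + X')) ≤ 0.411 * (q * q) :=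
      mul_le_mul hd2 b2 (by nlinarith) (by norm_num)
    nlinarith

theorem HH_sub {u v u' v' : ℝ} (hu : qq + u ≠ 0) (hu' : qq + u' ≠ 0) (hv : 1 + v ≠ 0)
    (hv' : 1 + v' ≠ 0) : HH u v - HH u' v' =
      -(2 * qq * (u - u') / ((qq + u) * (qq + u'))) - (v - v') / ((1 + v) * (1 + v')) := by
  unfold HH
  rw [sub_sub_sub_comm, div_sub_div _ _ hu hu', div_sub_div _ _ hv hv', ← neg_div]
  congr 2 <;> ring

/-- Comparison of two configurations in which the right tail starts with a block of length `A` and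
the left tail with a block of length `C`. -/
theorem num_rel {e u v u' v' : ℝ} (he : 0 < e) (he' : e ≤ 0.0000001)
    (hu : -0.0006 ≤ u ∧ u ≤ 0.0031) (hv : -0.0006 ≤ v ∧ v ≤ 0.0031)
    (hu' : -0.0006 ≤ u' ∧ u' ≤ 0.0031) (hv' : -0.0006 ≤ v' ∧ v' ≤ 0.0031) :
    ∃ κ ρ : ℝ, 0 < κ ∧ 0.99 ≤ ρ ∧ ρ ≤ 1.01 ∧
      HH (-e * gm u) (-(e * qq ^ 2) * gm v) - HH (-e * gm u') (-(e * qq ^ 2) * gm v') =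
        -κ * (2 * (u - u') + ρ * qq ^ 3 * (v - v')) := by
  obtain ⟨c, hc1, hc2, hc⟩ := gm_lip_small hu.1 hu'.1 hu.2 hu'.2
  obtain ⟨d, hd1, hd2, hd⟩ := gm_lip_small hv.1 hv'.1 hv.2 hv'.2
  have q1 := qq_lower
  have q2 := qq_upper
  have q0 := qq_pos
  have hb : ∀ x : ℝ, 0.0925 ≤ x → x ≤ 0.0942 → -0.00000001 ≤ -e * x ∧ -e * x ≤ 0 := by
    intro x h1 h2
    constructor <;> nlinarith
  have hb' : ∀ x : ℝ, 0.0925 ≤ x → x ≤ 0.0942 → -0.00000001 ≤ -(e * qq ^ 2) * x ∧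
      -(e * qq ^ 2) * x ≤ 0 := by
    intro x h1 h2
    have := hb x h1 h2
    have e1 : -(e * qq ^ 2) * x = qq ^ 2 * (-e * x) := by ring
    rw [e1]
    have := qq_pow_bounds
    constructor <;> nlinarith
  have g1 := gm_range_single hu.1 hu.2
  have g2 := gm_range_single hv.1 hv.2
  have g3 := gm_range_single hu'.1 hu'.2
  have g4 := gm_range_single hv'.1 hv'.2
  have hX := hb _ g1.1 g1.2
  have hX' := hb _ g3.1 g3.2
  have hY := hb' _ g2.1 g2.2
  have hY' := hb' _ g4.1 g4.2
  have e1 : -e * gm u - -e * gm u' = e * c * (u - u') := by linear_combination (-e) * hc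
  have e2 : -(e * qq ^ 2) * gm v - -(e * qq ^ 2) * gm v' = e * qq ^ 2 * d * (v - v') := by
    linear_combination (-(e * qq ^ 2)) * hd
  generalize -e * gm u = X at *
  generalize -e * gm u' = X' at *
  generalize -(e * qq ^ 2) * gm v = Y at *
  generalize -(e * qq ^ 2) * gm v' = Y' at *
  have p1 : 0 < qq + X := by linarith
  have p2 : 0 < qq + X' := by linarith
  have p3 : 0 < 1 + Y := by linarith
  have p4 : 0 < 1 + Y' := by linarith
  have p0 : 0 < c := by linarith
  have hρ := num_rel_ratio (q := qq) (by linarith) (by linarith) ⟨hc1, hc2⟩ ⟨hd1, hd2⟩ hX hX'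
    hY hY'
  refine ⟨qq * e * c / ((qq + X) * (qq + X')), _, by positivity, hρ.1, hρ.2, ?_⟩
  rw [HH_sub p1.ne' p2.ne' p3.ne' p4.ne', e1, e2]
  clear hρ hX hX' hY hY' e1 e2
  field_simp
  ring

/-- Propagation of a linear relation between deviations through one block on each side. -/
theorem ratio_step {σ τ r ρ l m x x' y y' : ℝ} (hx : -0.0006 ≤ x ∧ x ≤ 0.0031)
    (hx' : -0.0006 ≤ x' ∧ x' ≤ 0.0031) (hy : -0.0006 ≤ y ∧ y ≤ 0.0031)
    (hy' : -0.0006 ≤ y' ∧ y' ≤ 0.0031) (hl : 0 ≤ l) (h1 : l ≤ ρ) (h2 : ρ ≤ m)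
    (h : 2 * (σ * gm x - σ * gm x') = -(ρ * r * (τ * gm y - τ * gm y'))) :
    ∃ ρ', 0.995 * l ≤ ρ' ∧ ρ' ≤ 1.005 * m ∧
      2 * (σ * (x - x')) = -(ρ' * r * (τ * (y - y'))) := by
  obtain ⟨c, hc1, hc2, hc⟩ := gm_lip_small hx.1 hx'.1 hx.2 hx'.2
  obtain ⟨d, hd1, hd2, hd⟩ := gm_lip_small hy.1 hy'.1 hy.2 hy'.2
  have hc0 : 0 < c := by linarith
  refine ⟨ρ * (d / c), ?_, ?_, ?_⟩
  · have : 0.995 ≤ d / c := by rw [le_div_iff₀ hc0]; linarith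
    nlinarith
  · have : d / c ≤ 1.005 := by rw [div_le_iff₀ hc0]; linarith
    nlinarith
  · have e1 : σ * gm x - σ * gm x' = -(c * (σ * (x - x'))) := by linear_combination σ * hc
    have e2 : τ * gm y - τ * gm y' = -(d * (τ * (y - y'))) := by linear_combination τ * hd
    rw [e1, e2] at h
    field_simp
    linarith

/-- Elimination of the case of a nonnegative right tail at a critical junction. -/
theorem num_neg {e θ u v : ℝ} (he : 0 < e) (hθ : 1.0965 * e ≤ θ)
    (hu : u ≤ 0.0942) (hv : -0.0183 ≤ v) (h0 : 0 ≤ u) (h : HH u v = θ)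
    (h' : v < 0 → HH v u ≤ θ) : False := by
  have q1 := qq_lower
  have q2 := qq_upper
  unfold HH at h h'
  have d1 : 0 < qq + u := by linarith
  have h2 : 7 * u ≤ 2 * u / (qq + u) := by
    rw [le_div_iff₀ d1]; nlinarith
  have h3 : -2 * u / (qq + u) = -(2 * u / (qq + u)) := by ring
  have h4 : -v / (1 + v) = -(v / (1 + v)) := by ring
  have h5 : θ + 7 * u ≤ -v / (1 + v) := by linarith
  rw [le_div_iff₀ (by linarith)] at h5
  have hθ0 : 0 < θ := by nlinarith
  have hv0 : v < 0 := by nlinarith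
  have h6 := h' hv0
  have h7 : 11 * (-v) ≤ -2 * v / (qq + v) := by
    rw [le_div_iff₀ (by linarith)]; nlinarith
  have h8 : u / (1 + u) ≤ u := div_one_add_le (by linarith)
  nlinarith

theorem Tail.exists_first {d : ℕ → ℕ} {t : ℕ → ℝ} (h : Tail d t) {m : ℕ}
    (hm : ¬ ∀ n < m, d n = 2) : ∃ n < m, (∀ i < n, d i = 2) ∧ d n = 1 := by
  classical
  push Not at hm
  refine ⟨Nat.find hm, (Nat.find_spec hm).1, fun i hi => ?_,
    (h.dig _).resolve_right (Nat.find_spec hm).2⟩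
  have := Nat.find_min hm hi
  by_contra hc
  exact this ⟨hi.trans (Nat.find_spec hm).1, hc⟩

/-! ### Steps along blocks -/

/-- The consequences of a block of `m` digits `2` between the digits `1` at `j < j'`, followed by
a digit `2`; here `s = (-qq) ^ m`. -/
structure RStep (a : ℤ → ℕ) (f g : ℤ → ℝ) (s : ℝ) (m : ℕ) (j j' : ℤ) : Prop where
  pos : j' = j + m + 1
  blk : Blk a j m
  one : a j' = 1
  pre : a (j' - 1) = 2
  post : a (j' + 1) = 2
  feq : f (j + 1) = s * gm (f (j' + 1))
  geq : g (j' - 1) = s * gm (g (j - 1))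
  lo : -0.0006 ≤ f (j' + 1)
  hi : f (j' + 1) ≤ 0.0031

/-- The mirror image of `RStep`: here `j' < j`, and the block is preceded by a digit `2`. -/
structure LStep (a : ℤ → ℕ) (f g : ℤ → ℝ) (s : ℝ) (m : ℕ) (j j' : ℤ) : Prop where
  pos : j' = j - m - 1
  blk : Blk a j' m
  one : a j' = 1
  pre : a (j' + 1) = 2
  post : a (j' - 1) = 2
  geq : g (j - 1) = s * gm (g (j' - 1))
  feq : f (j' + 1) = s * gm (f (j + 1))
  lo : -0.0006 ≤ g (j' - 1)
  hi : g (j' - 1) ≤ 0.0031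

namespace Sys

variable {a : ℤ → ℕ} {f g : ℤ → ℝ}

theorem rstep_of_blk (h : Sys a f g) {m : ℕ} {s : ℝ} {j j' : ℤ} (hs : (-qq) ^ m = s)
    (hm : 1 ≤ m) (hb : Blk a j m) (hj' : j' = j + m + 1) (hp : a (j' + 1) = 2) :
    RStep a f g s m j j' := by
  have h1 := h.blk_eq hb
  have h3 : a j' = 1 := hj' ▸ hb.2.2
  have h4 := (h.tail (j' + 1)).two_two (n := 0) (by simpa using hp)
    (by have := h.nice _ h3 hp; convert this using 2; push_cast; ring)
  simp only [Nat.cast_zero, add_zero] at h4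
  rw [hs] at h1
  refine ⟨hj', hb, h3, hb.2.1 _ (by omega) (by omega), hp, ?_, ?_, h4.1, h4.2⟩
  · rw [h1.1, hj']; congr 3; ring
  · rw [← h1.2, hj']; congr 1; ring

theorem rstep (h : Sys a f g) {m : ℕ} {s : ℝ} {j j' : ℤ} (hs : (-qq) ^ m = s)
    (hm : 1 ≤ m) (hj : a j = 1) (hj' : j' = j + m + 1)
    (h1 : s * f (j + 1) < 1.8 * s ^ 2) (h2 : 0.0729 * s ^ 2 < s * f (j + 1)) :
    RStep a f g s m j j' := by
  obtain ⟨b1, b2, -⟩ := h.right_block hj hs h1 h2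
  refine h.rstep_of_blk hs hm b1 hj' ?_
  rw [hj', ← b2]; congr 1; ring

theorem lstep_of_blk (h : Sys a f g) {m : ℕ} {s : ℝ} {j j' : ℤ} (hs : (-qq) ^ m = s)
    (hm : 1 ≤ m) (hb : Blk a j' m) (hj' : j' = j - m - 1) (hp : a (j' - 1) = 2) :
    LStep a f g s m j j' := by
  have e1 : -(-j' + 1) = j' - 1 := by ring
  have e2 : -(-j' - 1) = j' + 1 := by ring
  have e3 : -(-j + 1) = j - 1 := by ring
  have e4 : -(-j - 1) = j + 1 := by ring
  have hb' := hb.to_reverse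
  rw [show -j' - m - 1 = -j by rw [hj']; ring] at hb'
  have := h.reverse.rstep_of_blk hs hm hb' (j' := -j') (by rw [hj']; ring) (by rwa [e1])
  obtain ⟨-, -, c1, c2, c3, c4, c5, c6, c7⟩ := this
  simp only [e1, e2, e3, e4, neg_neg] at *
  exact ⟨hj', hb, c1, c2, c3, c4, c5, c6, c7⟩

theorem lstep (h : Sys a f g) {m : ℕ} {s : ℝ} {j j' : ℤ} (hs : (-qq) ^ m = s)
    (hm : 1 ≤ m) (hj : a j = 1) (hj' : j' = j - m - 1)
    (h1 : s * g (j - 1) < 1.8 * s ^ 2) (h2 : 0.0729 * s ^ 2 < s * g (j - 1)) :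
    LStep a f g s m j j' := by
  obtain ⟨b1, b2, -⟩ := h.left_block hj hs h1 h2
  refine h.lstep_of_blk hs hm (hj' ▸ b1) hj' ?_
  rw [hj', ← b2]; congr 1; ring

variable {k : ℕ} {e θ : ℝ}

theorem rstepA (h : Sys a f g) (hk : Scale k e θ) {j j' : ℤ} (hj : a j = 1)
    (hj' : j' = j + (2 * k + 2)) (h1 : -1.8 * e < f (j + 1)) (h2 : f (j + 1) < -0.0729 * e) :
    RStep a f g (-e) (2 * k + 1) j j' := by
  have := hk.pos
  exact h.rstep hk.powA (by omega) hj (by push_cast; omega) (by nlinarith) (by nlinarith)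

theorem rstepB (h : Sys a f g) (hk : Scale k e θ) {j j' : ℤ} (hj : a j = 1)
    (hj' : j' = j + (2 * k + 3)) (h1 : 0.0126 * e < f (j + 1)) (h2 : f (j + 1) < 0.3088 * e) :
    RStep a f g (e * qq) (2 * k + 2) j j' := by
  have := mul_pos hk.pos qq_pos
  have q1 := mul_lt_mul_of_pos_left qq_lower hk.pos
  have q2 := mul_lt_mul_of_pos_left qq_upper hk.pos
  exact h.rstep hk.powB (by omega) hj (by push_cast; omega) (by nlinarith) (by nlinarith)

theorem rstepC (h : Sys a f g) (hk : Scale k e θ) {j j' : ℤ} (hj : a j = 1)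
    (hj' : j' = j + (2 * k + 4)) (h1 : -0.0529 * e < f (j + 1)) (h2 : f (j + 1) < -0.0022 * e) :
    RStep a f g (-(e * qq ^ 2)) (2 * k + 3) j j' := by
  have := mul_pos hk.pos (pow_pos qq_pos 2)
  have q1 := mul_lt_mul_of_pos_left qq_pow_bounds.1 hk.pos
  have q2 := mul_lt_mul_of_pos_left qq_pow_bounds.2.1 hk.pos
  exact h.rstep hk.powC (by omega) hj (by push_cast; omega) (by nlinarith) (by nlinarith)

theorem lstepA (h : Sys a f g) (hk : Scale k e θ) {j j' : ℤ} (hj : a j = 1)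
    (hj' : j' = j - (2 * k + 2)) (h1 : -1.8 * e < g (j - 1)) (h2 : g (j - 1) < -0.0729 * e) :
    LStep a f g (-e) (2 * k + 1) j j' := by
  have := hk.pos
  exact h.lstep hk.powA (by omega) hj (by push_cast; omega) (by nlinarith) (by nlinarith)

theorem lstepB (h : Sys a f g) (hk : Scale k e θ) {j j' : ℤ} (hj : a j = 1)
    (hj' : j' = j - (2 * k + 3)) (h1 : 0.0126 * e < g (j - 1)) (h2 : g (j - 1) < 0.3088 * e) :
    LStep a f g (e * qq) (2 * k + 2) j j' := by
  have := mul_pos hk.pos qq_pos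
  have q1 := mul_lt_mul_of_pos_left qq_lower hk.pos
  have q2 := mul_lt_mul_of_pos_left qq_upper hk.pos
  exact h.lstep hk.powB (by omega) hj (by push_cast; omega) (by nlinarith) (by nlinarith)

theorem lstepC (h : Sys a f g) (hk : Scale k e θ) {j j' : ℤ} (hj : a j = 1)
    (hj' : j' = j - (2 * k + 4)) (h1 : -0.0529 * e < g (j - 1)) (h2 : g (j - 1) < -0.0022 * e) :
    LStep a f g (-(e * qq ^ 2)) (2 * k + 3) j j' := by
  have := mul_pos hk.pos (pow_pos qq_pos 2)
  have q1 := mul_lt_mul_of_pos_left qq_pow_bounds.1 hk.pos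
  have q2 := mul_lt_mul_of_pos_left qq_pow_bounds.2.1 hk.pos
  exact h.lstep hk.powC (by omega) hj (by push_cast; omega) (by nlinarith) (by nlinarith)

theorem f_upperA (h : Sys a f g) (hk : Scale k e θ) {j : ℤ} (h1 : -1.8 * e < f j) :
    -0.0942 * e ≤ f j := by
  have := hk.pos
  have := h.f_upper j hk.powA (by nlinarith)
  nlinarith

theorem g_upperA (h : Sys a f g) (hk : Scale k e θ) {j : ℤ} (h1 : -1.8 * e < g j) :
    -0.0942 * e ≤ g j := by
  have := hk.pos
  have := h.g_upper j hk.powA (by nlinarith)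
  nlinarith

theorem f_upperC (h : Sys a f g) (hk : Scale k e θ) {j : ℤ} (h1 : -0.0529 * e < f j) :
    -0.0027731 * e ≤ f j := by
  have := mul_pos hk.pos (pow_pos qq_pos 2)
  have q1 := mul_lt_mul_of_pos_left qq_pow_bounds.1 hk.pos
  have q2 := mul_lt_mul_of_pos_left qq_pow_bounds.2.1 hk.pos
  have h3 := h.f_upper j hk.powC (by nlinarith)
  have : -(0.0942 * (e * qq ^ 2)) ≤ f j := by
    refine le_of_mul_le_mul_left ?_ this
    linarith
  linarith

theorem g_upperC (h : Sys a f g) (hk : Scale k e θ) {j : ℤ} (h1 : -0.0529 * e < g j) :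
    -0.0027731 * e ≤ g j := by
  have := h.reverse.f_upperC hk (j := -j) (by simpa using h1)
  simpa using this

theorem g_upperB (h : Sys a f g) (hk : Scale k e θ) {j : ℤ} (h1 : g j < 0.3088 * e) :
    g j ≤ 0.016163 * e := by
  have := mul_pos hk.pos qq_pos
  have q1 := mul_lt_mul_of_pos_left qq_lower hk.pos
  have q2 := mul_lt_mul_of_pos_left qq_upper hk.pos
  have h3 := h.g_upper j hk.powB (by nlinarith)
  have : g j ≤ 0.0942 * (e * qq) := by
    refine le_of_mul_le_mul_left ?_ this
    linarith
  linarith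

theorem g_upper_one_less (h : Sys a f g) (hk : Scale k e θ) {j : ℤ} (h1 : g j < 10.49 * e) :
    g j ≤ 0.54905 * e := by
  have he := hk.pos
  have hq := qq_pos
  have hp : 0 < e / qq := by positivity
  have q1 : 5.8284 * e < e / qq := by rw [lt_div_iff₀ hq]; nlinarith [qq_upper]
  have q2 : e / qq < 5.82843 * e := by rw [div_lt_iff₀ hq]; nlinarith [qq_lower]
  have h3 := h.g_upper j hk.pow_one_less (by nlinarith)
  have : g j ≤ 0.0942 * (e / qq) := by
    refine le_of_mul_le_mul_left ?_ hp
    linarith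
  linarith

theorem g_upper_three_less (h : Sys a f g) (hk : Scale k e θ) {j : ℤ} (h1 : g j < 350 * e) :
    g j ≤ 18.66 * e := by
  have he := hk.pos
  have hq := qq_pow_bounds
  have hp : 0 < e / qq ^ 3 := by have := qq_pos; positivity
  have q1 : 197.9 * e < e / qq ^ 3 := by rw [lt_div_iff₀ (by linarith)]; nlinarith
  have q2 : e / qq ^ 3 < 198 * e := by rw [div_lt_iff₀ (by linarith)]; nlinarith
  have h3 := h.g_upper j hk.pow_three_less (by nlinarith)
  have : g j ≤ 0.0942 * (e / qq ^ 3) := by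
    refine le_of_mul_le_mul_left ?_ hp
    linarith
  linarith

end Sys

namespace Adm

variable {k : ℕ} {e θ : ℝ} {a : ℤ → ℕ} {f g : ℤ → ℝ}

theorem first_right (h : Adm θ a f g) (hk : Scale k e θ) {j : ℤ} (hj : a j = 1)
    (hj' : a (j + 1) = 2) (hw : g (j - 1) ≤ 0.02 * e) : -0.0942 * e ≤ f (j + 1) := by
  have := num_first hk.pos hk.hi hw (h.g_lo _) (h.f_lo _) (h.right_le j hj hj')
  exact h.f_upperA hk (by linarith [hk.pos])

theorem first_left (h : Adm θ a f g) (hk : Scale k e θ) {j : ℤ} (hj : a j = 1)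
    (hj' : a (j - 1) = 2) (hw : f (j + 1) ≤ 0.02 * e) : -0.0942 * e ≤ g (j - 1) := by
  have := num_first hk.pos hk.hi hw (h.f_lo _) (h.g_lo _) (h.left_le j hj hj')
  exact h.g_upperA hk (by linarith [hk.pos])

theorem second_right (h : Adm θ a f g) (hk : Scale k e θ) {j : ℤ} {s : ℝ} (hj : a j = 1)
    (hj' : a (j - 1) = 2) (hg : g (j - 1) = -e * gm s) (hs : s ≤ 0.02 * e)
    (hs' : -0.0183 ≤ s) : -0.00278 * e ≤ f (j + 1) := by
  have := num_second hk.pos hk.le_small hk.hi hs hs' (h.f_lo _) (hg ▸ h.left_le j hj hj')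
  have := h.f_upperC hk (j := j + 1) (by linarith [hk.pos])
  linarith [hk.pos]

theorem second_left (h : Adm θ a f g) (hk : Scale k e θ) {j : ℤ} {s : ℝ} (hj : a j = 1)
    (hj' : a (j + 1) = 2) (hf : f (j + 1) = -e * gm s) (hs : s ≤ 0.02 * e)
    (hs' : -0.0183 ≤ s) : -0.00278 * e ≤ g (j - 1) := by
  have := num_second hk.pos hk.le_small hk.hi hs hs' (h.g_lo _) (hf ▸ h.right_le j hj hj')
  have := h.g_upperC hk (j := j - 1) (by linarith [hk.pos])
  linarith [hk.pos]

end Adm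

/-! ### The reference configuration -/

/-- The coordinates of the tails of the reference configuration. -/
structure RefConf (e θ : ℝ) (u v : ℕ → ℝ) : Prop where
  value : HH (-e * gm (u 1)) (-(e * qq ^ 2) * gm (v 1)) = θ
  u1 : u 1 = e * qq * gm (u 2)
  u2 : u 2 = -(e * qq ^ 2) * gm (u 3)
  u3 : u 3 = -e * gm (u 4)
  u4 : u 4 = e * qq * gm (u 5)
  u5 : -0.0000001 ≤ u 5 ∧ u 5 ≤ -0.09 * e
  v1 : v 1 = e * qq * gm (v 2)
  v2 : v 2 = -e * gm (v 3)
  v3 : v 3 = -(e * qq ^ 2) * gm (v 4)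
  v4 : v 4 = e * qq * gm (v 5)
  v5 : -0.0000001 ≤ v 5 ∧ v 5 ≤ 0

theorem blockA_bounds {e s : ℝ} (he : 0 < e) (h1 : -0.0000001 ≤ s) (h2 : s ≤ 0.0000001) :
    -0.0938372 * e ≤ -e * gm s ∧ -e * gm s ≤ -0.0938358 * e := by
  have := gm_ge_of_le (by linarith) h2
  have := gm_le_of_ge h1
  constructor <;> nlinarith

theorem blockB_bounds {e s : ℝ} (he : 0 < e) (h1 : -0.0000001 ≤ s) (h2 : s ≤ 0.0000001) :
    0.016099 * e ≤ e * qq * gm s ∧ e * qq * gm s ≤ 0.016101 * e := by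
  have h3 := gm_ge_of_le (by linarith) h2
  have h4 := gm_le_of_ge h1
  have q1 := qq_lower
  have q2 := qq_upper
  have h5 : 0.016099 ≤ qq * gm s := by nlinarith
  have h6 : qq * gm s ≤ 0.016101 := by nlinarith
  constructor <;> nlinarith

theorem blockC_bounds {e s : ℝ} (he : 0 < e) (h1 : -0.0000001 ≤ s) (h2 : s ≤ 0.0000001) :
    -0.0027624 * e ≤ -(e * qq ^ 2) * gm s ∧ -(e * qq ^ 2) * gm s ≤ -0.0027622 * e := by
  have h3 := gm_ge_of_le (by linarith) h2
  have h4 := gm_le_of_ge h1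
  have q := qq_pow_bounds
  have h5 : 0.0027622 ≤ qq ^ 2 * gm s := by nlinarith
  have h6 : qq ^ 2 * gm s ≤ 0.0027624 := by nlinarith
  constructor <;> nlinarith

namespace RefConf

variable {e θ : ℝ} {u v : ℕ → ℝ}

theorem u4_bounds (h : RefConf e θ u v) (he : 0 < e) :
    0.016099 * e ≤ u 4 ∧ u 4 ≤ 0.016101 * e := by
  rw [h.u4]; exact blockB_bounds he h.u5.1 (by linarith [h.u5.2])

theorem v4_bounds (h : RefConf e θ u v) (he : 0 < e) :
    0.016099 * e ≤ v 4 ∧ v 4 ≤ 0.016101 * e := by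
  rw [h.v4]; exact blockB_bounds he h.v5.1 (by linarith [h.v5.2])

theorem u3_bounds (h : RefConf e θ u v) (he : 0 < e) (he' : e ≤ 0.0000001) :
    -0.0938372 * e ≤ u 3 ∧ u 3 ≤ -0.0938358 * e := by
  have := h.u4_bounds he
  rw [h.u3]; exact blockA_bounds he (by linarith) (by linarith)

theorem v3_bounds (h : RefConf e θ u v) (he : 0 < e) (he' : e ≤ 0.0000001) :
    -0.0027624 * e ≤ v 3 ∧ v 3 ≤ -0.0027622 * e := by
  have := h.v4_bounds he
  rw [h.v3]; exact blockC_bounds he (by linarith) (by linarith)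

theorem u2_bounds (h : RefConf e θ u v) (he : 0 < e) (he' : e ≤ 0.0000001) :
    -0.0027624 * e ≤ u 2 ∧ u 2 ≤ -0.0027622 * e := by
  have := h.u3_bounds he he'
  rw [h.u2]; exact blockC_bounds he (by linarith) (by linarith)

theorem v2_bounds (h : RefConf e θ u v) (he : 0 < e) (he' : e ≤ 0.0000001) :
    -0.0938372 * e ≤ v 2 ∧ v 2 ≤ -0.0938358 * e := by
  have := h.v3_bounds he he'
  rw [h.v2]; exact blockA_bounds he (by linarith) (by linarith)

theorem u1_bounds (h : RefConf e θ u v) (he : 0 < e) (he' : e ≤ 0.0000001) :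
    0.016099 * e ≤ u 1 ∧ u 1 ≤ 0.016101 * e := by
  have := h.u2_bounds he he'
  rw [h.u1]; exact blockB_bounds he (by linarith) (by linarith)

theorem v1_bounds (h : RefConf e θ u v) (he : 0 < e) (he' : e ≤ 0.0000001) :
    0.016099 * e ≤ v 1 ∧ v 1 ≤ 0.016101 * e := by
  have := h.v2_bounds he he'
  rw [h.v1]; exact blockB_bounds he (by linarith) (by linarith)

end RefConf

/-! ### The critical junction -/

theorem num_crit_neg {e θ u v : ℝ} (he : 0 < e) (he' : e ≤ 0.0000001) (hθ : 1.0965 * e ≤ θ)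
    (hθ' : θ ≤ 1.0967 * e) (hu : -0.0183 ≤ u) (hv : -0.0942 * e ≤ v) (hv' : v < 0)
    (h : HH u v = θ) : -0.0942 * e ≤ u ∧ u ≤ -0.0859 * e := by
  have q1 := qq_lower
  have q2 := qq_upper
  have d : 0 < qq + u := by linarith
  have h1 := div_one_add_le (v := v) (by linarith)
  have h2 : -0.0943 * e ≤ v / (1 + v) := by
    rw [le_div_iff₀ (by linarith)]; nlinarith
  unfold HH at h
  have h3 : -2 * u / (qq + u) ≤ 1.0967 * e := by linarith
  have h4 : 1.0022 * e ≤ -2 * u / (qq + u) := by linarith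
  rw [div_le_iff₀ d] at h3
  rw [le_div_iff₀ d] at h4
  have hu0 : u < 0 := by nlinarith
  constructor
  · nlinarith
  · nlinarith

theorem num_crit_pos {e θ u v : ℝ} (he : 0 < e) (he' : e ≤ 0.0000001) (hθ : 1.0965 * e ≤ θ)
    (hu : -0.0942 * e ≤ u) (hv : 0 ≤ v) (hv' : v ≤ 0.0942)
    (h : HH u v = θ) : v ≤ 0.002 * e ∧ u ≤ -0.0859 * e := by
  have q1 := qq_lower
  have q2 := qq_upper
  have d : 0 < qq + u := by linarith
  have h1 : 0 ≤ v / (1 + v) := by positivity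
  unfold HH at h
  have h3 : -2 * u / (qq + u) ≤ 1.09815 * e := by
    rw [div_le_iff₀ d]; nlinarith
  have h4 : 1.0965 * e ≤ -2 * u / (qq + u) := by linarith
  rw [le_div_iff₀ d] at h4
  have h5 : v / (1 + v) ≤ 0.00165 * e := by linarith
  rw [div_le_iff₀ (by linarith)] at h5
  constructor <;> nlinarith

theorem num_crit_large {e θ U v Q R : ℝ} (hQ : 0 < R) (hQR : Q = qq * R) (he : e ≤ qq ^ 2 * Q)
    (hθ : θ ≤ 1.0967 * e) (hθ0 : 0 ≤ θ) (hU : 0.0543 * Q ≤ U) (hU' : U ≤ 0.0942 * Q)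
    (hU'' : U ≤ 0.0183) (hv : 0 ≤ v) (hv' : v ≤ 0.0942) (h : HH (-U) v = θ) :
    v < 1.8 * R ∧ 0.0942 * R < v := by
  have q1 := qq_lower
  have q2 := qq_upper
  have hq0 := qq_pos
  have q3 := qq_pow_bounds
  have hQ0 : 0 < Q := by rw [hQR]; positivity
  have d : 0 < qq + -U := by linarith
  unfold HH at h
  have h1 : v / (1 + v) ≤ v := div_one_add_le (by linarith)
  have h2 : 0.632 * Q ≤ -2 * -U / (qq + -U) := by
    rw [le_div_iff₀ d]; nlinarith
  have h3 : -2 * -U / (qq + -U) ≤ 1.3 * Q := by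
    rw [div_le_iff₀ d]; nlinarith
  have h4 : v / (1 + v) ≤ 1.3 * Q := by linarith
  rw [div_le_iff₀ (by linarith)] at h4
  have h6 : v ≤ 1.5 * Q := by nlinarith
  have h7 : θ ≤ 0.033 * Q := by nlinarith
  have h8 : 0.599 * Q ≤ v := by linarith
  rw [hQR] at h6 h8
  constructor <;> nlinarith

namespace Adm

variable {k : ℕ} {e θ : ℝ} {a : ℤ → ℕ} {f g : ℤ → ℝ}

theorem not_large (h : Adm θ a f g) (hk : Scale k e θ) {j : ℤ} (hv : 0 ≤ g (j - 1))
    (hu : f (j + 1) ≤ -1.8 * e) (hH : HH (f (j + 1)) (g (j - 1)) = θ) : False := by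
  have he := hk.pos
  have hq := qq_pos
  have ht := h.tail (j + 1)
  have hnot : ¬ ∀ n < 2 * k + 1, (fun n : ℕ => a (j + 1 + n)) n = 2 := by
    intro hc
    have h1 := ht.block hc
    simp only [Nat.cast_zero, add_zero] at h1
    rw [hk.powA] at h1
    have h2 := ht.lo (2 * k + 1)
    have h3 := ht.hi (2 * k + 1)
    rw [h1] at hu
    nlinarith
  obtain ⟨n, hn, h2, h1⟩ := ht.exists_first hnot
  have h3 := ht.block h2
  have h4 := ht.ge_of_one' h1
  have h5 := ht.le_fine n
  simp only [Nat.cast_zero, add_zero] at h3 h4 h5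
  rcases Nat.even_or_odd n with hpar | ⟨r, rfl⟩
  · rw [hpar.neg_pow] at h3
    have : 0 < qq ^ n := by positivity
    nlinarith
  · rw [Odd.neg_pow ⟨r, rfl⟩] at h3
    have hQ : 0 < qq ^ (2 * r + 1) := by positivity
    have hR : 0 < qq ^ (2 * r) := by positivity
    have heQ : e ≤ qq ^ 2 * qq ^ (2 * r + 1) := by
      rw [← hk.pow_eq, ← pow_add]
      exact pow_le_pow_of_le_one hq.le qq_lt_one.le (by omega)
    have hθ0 : 0 ≤ θ := by linarith [hk.lo]
    have h6 := h.f_lo (j + 1)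
    have := num_crit_large (U := -f (j + 1)) hR (pow_succ' _ _) heQ hk.hi hθ0 (by nlinarith)
      (by nlinarith) (by linarith) hv (h.g_le _) (by rw [neg_neg]; exact hH)
    have h7 : (-qq) ^ (2 * r) = qq ^ (2 * r) := Even.neg_pow ⟨r, by ring⟩ _
    have := h.g_upper (j - 1) h7 (by nlinarith)
    nlinarith

/-- At a critical junction the right tail starts with a block of length `A`. -/
theorem crit_right (h : Adm θ a f g) (hk : Scale k e θ) {j j1 : ℤ} (hj : a j = 1)
    (hH : HH (f (j + 1)) (g (j - 1)) = θ) (hj1 : j1 = j + (2 * k + 2)) :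
    RStep a f g (-e) (2 * k + 1) j j1 ∧ -0.0942 * e ≤ g (j - 1) ∧ g (j - 1) ≤ 0.002 * e := by
  have he := hk.pos
  have hleft : g (j - 1) < 0 → a (j - 1) = 2 := by
    intro hv
    refine (h.dig _).resolve_left fun hc => ?_
    have := (h.tail_left (j - 1)).ge_of_one (n := 0) (by simpa using hc)
    simp only [Nat.cast_zero, sub_zero] at this
    linarith
  have hu0 : f (j + 1) < 0 := by
    by_contra! hc
    exact num_neg he hk.lo (h.f_le _) (h.g_lo _) hc hH fun hv => h.left_le j hj (hleft hv)
  by_cases hv : g (j - 1) < 0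
  · have h1 := h.first_left hk hj (hleft hv) (by linarith)
    have h2 := num_crit_neg he hk.le_small hk.lo hk.hi (h.f_lo _) h1 hv hH
    exact ⟨h.rstepA hk hj hj1 (by linarith) (by linarith), h1, by linarith⟩
  · push Not at hv
    by_cases hU : -1.8 * e < f (j + 1)
    · have h1 := h.f_upperA hk hU
      have h2 := num_crit_pos he hk.le_small hk.lo h1 hv (h.g_le _) hH
      exact ⟨h.rstepA hk hj hj1 (by linarith) (by linarith), by linarith, h2.1⟩
    · push Not at hU
      exact (h.not_large hk hv hU hH).elim

theorem num_crit_left {u1 v : ℝ} (hk : Scale k e θ) (h1 : -0.00278 * e ≤ u1) (h2 : u1 ≤ 0.0031)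
    (hv : -0.0183 ≤ v) (h : HH (-e * gm u1) v = θ) :
    -0.019 * e ≤ v ∧ v ≤ -0.0025 * e := by
  have he := hk.pos
  have hθ := hk.lo
  have hθ' := hk.hi
  have he' := hk.le_small
  have q1 := qq_lower
  have q2 := qq_upper
  have g1 := gm_le_of_ge (s := u1) (by linarith)
  have g2 := (gm_range_single (T := u1) (by linarith) h2).1
  set G := gm u1
  have hG : e * G ≤ 0.00000001 := by nlinarith
  have d : 0 < qq + -e * G := by linarith
  unfold HH at h
  have h3 : -2 * (-e * G) / (qq + -e * G) ≤ 1.0939 * e := by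
    rw [div_le_iff₀ d]; nlinarith
  have h4 : 1.078 * e ≤ -2 * (-e * G) / (qq + -e * G) := by
    rw [le_div_iff₀ d]
    have : 0.0925 * e ≤ e * G := by nlinarith
    nlinarith [mul_lt_mul_of_pos_left q2 he]
  have h5 : v / (1 + v) ≤ -0.0026 * e := by linarith
  have h6 : -0.01875 * e ≤ v / (1 + v) := by linarith
  rw [div_le_iff₀ (by linarith)] at h5
  rw [le_div_iff₀ (by linarith)] at h6
  constructor <;> nlinarith

/-- At a critical junction the left tail ends with a block of length `C`. -/
theorem crit_left (h : Adm θ a f g) (hk : Scale k e θ) {j j1 i1 : ℤ} (hj : a j = 1)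
    (hH : HH (f (j + 1)) (g (j - 1)) = θ) (hj1 : j1 = j + (2 * k + 2))
    (hi1 : i1 = j - (2 * k + 4)) :
    LStep a f g (-(e * qq ^ 2)) (2 * k + 3) j i1 ∧ -0.00278 * e ≤ f (j1 + 1) := by
  have he := hk.pos
  obtain ⟨hr, h1, h2⟩ := h.crit_right hk hj hH hj1
  have h3 := h.second_right hk hr.one hr.pre hr.geq (by linarith) (h.g_lo _)
  rw [hr.feq] at hH
  have h4 := num_crit_left hk h3 hr.hi (h.g_lo _) hH
  exact ⟨h.lstepC hk hj hi1 (by linarith) (by linarith), h3⟩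

/-- The right tail at `J` starts with a block of length `B` if it is tied to the left tail at `I`
by the linear relation `hrel`. -/
theorem tied_block (h : Adm θ a f g) (hk : Scale k e θ) {I J J' : ℤ} {u v ρ : ℝ}
    (hJ : a J = 1) (hJ' : J' = J + (2 * k + 3))
    (hu : 0.016099 * e ≤ u ∧ u ≤ 0.016101 * e) (hv : 0.016099 * e ≤ v ∧ v ≤ 0.016101 * e)
    (hρ : 0.96 ≤ ρ) (hρ' : ρ ≤ 1.04)
    (hrel : 2 * (f (J + 1) - u) = -(ρ * qq ^ 3 * (g (I - 1) - v)))
    (h1 : -0.00278 * e ≤ f (J + 1)) (h2 : -0.0942 * e ≤ g (I - 1)) :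
    RStep a f g (e * qq) (2 * k + 2) J J' ∧ g (I - 1) ≤ 0.016163 * e := by
  have he := hk.pos
  have q := qq_pow_bounds
  have hc1 : 0.00484 < ρ * qq ^ 3 := by nlinarith
  have hc2 : ρ * qq ^ 3 < 0.00526 := by nlinarith
  set c := ρ * qq ^ 3
  by_cases hv1 : g (I - 1) < 0.3088 * e
  · have h3 := h.g_upperB hk hv1
    exact ⟨h.rstepB hk hJ hJ' (by nlinarith) (by nlinarith), h3⟩
  by_cases hv2 : g (I - 1) < 10.49 * e
  · have h3 := h.g_upper_one_less hk hv2
    have hs := h.rstepB hk hJ hJ' (by nlinarith) (by nlinarith)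
    exfalso
    have h4 := hs.feq
    have h5 := (gm_range_single hs.lo hs.hi).1
    have h6 : 0.01587 * e ≤ f (J + 1) := by
      rw [h4]
      have : 0.01587 ≤ qq * gm (f (J' + 1)) := by nlinarith [qq_lower]
      nlinarith
    nlinarith
  · exfalso
    nlinarith

end Adm

/-! ### The window around a critical junction -/

theorem blockB_le {e s : ℝ} (he : 0 < e) (h1 : -0.0183 ≤ s) (h2 : s ≤ 0.0942) :
    e * qq * gm s ≤ 0.02 * e := by
  have h3 := (gm_range h1 (by linarith)).2
  have h4 : qq * gm s ≤ 0.02 := by nlinarith [qq_lower, qq_upper]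
  nlinarith

theorem blockC_le {e s : ℝ} (he : 0 < e) (h1 : -0.0183 ≤ s) (h2 : s ≤ 0.0942) :
    -(e * qq ^ 2) * gm s ≤ 0.02 * e := by
  have := (gm_range h1 (by linarith)).1
  have : 0 < e * qq ^ 2 * gm s := by have := qq_pos; positivity
  nlinarith

/-- The blocks around a critical junction. -/
structure Win (k : ℕ) (e : ℝ) (a : ℤ → ℕ) (f g : ℤ → ℝ) (j : ℤ) : Prop where
  r1 : RStep a f g (-e) (2 * k + 1) j (j + (2 * k + 2))
  r2 : RStep a f g (e * qq) (2 * k + 2) (j + (2 * k + 2)) (j + (4 * k + 5))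
  r3 : RStep a f g (-(e * qq ^ 2)) (2 * k + 3) (j + (4 * k + 5)) (j + (6 * k + 9))
  r4 : RStep a f g (-e) (2 * k + 1) (j + (6 * k + 9)) (j + (8 * k + 11))
  r5 : RStep a f g (e * qq) (2 * k + 2) (j + (8 * k + 11)) (j + (10 * k + 14))
  l1 : LStep a f g (-(e * qq ^ 2)) (2 * k + 3) j (j - (2 * k + 4))
  l2 : LStep a f g (e * qq) (2 * k + 2) (j - (2 * k + 4)) (j - (4 * k + 7))
  l3 : LStep a f g (-e) (2 * k + 1) (j - (4 * k + 7)) (j - (6 * k + 9))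
  l4 : LStep a f g (-(e * qq ^ 2)) (2 * k + 3) (j - (6 * k + 9)) (j - (8 * k + 13))

theorem ratio_step_eq {σ r ρ l m x x' y y' : ℝ} (hσ : σ ≠ 0) (hx : -0.0006 ≤ x ∧ x ≤ 0.0031)
    (hx' : -0.0006 ≤ x' ∧ x' ≤ 0.0031) (hy : -0.0006 ≤ y ∧ y ≤ 0.0031)
    (hy' : -0.0006 ≤ y' ∧ y' ≤ 0.0031) (hl : 0 ≤ l) (h1 : l ≤ ρ) (h2 : ρ ≤ m)
    (h : 2 * (σ * gm x - σ * gm x') = -(ρ * r * (σ * gm y - σ * gm y'))) :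
    ∃ ρ', 0.995 * l ≤ ρ' ∧ ρ' ≤ 1.005 * m ∧ 2 * (x - x') = -(ρ' * r * (y - y')) := by
  obtain ⟨ρ', h3, h4, h5⟩ := ratio_step hx hx' hy hy' hl h1 h2 h
  refine ⟨ρ', h3, h4, mul_left_cancel₀ hσ ?_⟩
  linear_combination h5

/-- The relation between the deviations, from the equality of heights at the junction. -/
theorem RefConf.rel {e θ : ℝ} {U V : ℕ → ℝ} (hr : RefConf e θ U V) (he : 0 < e)
    (he' : e ≤ 0.0000001)
    {u v : ℝ} (hu : -0.0006 ≤ u ∧ u ≤ 0.0031) (hv : -0.0006 ≤ v ∧ v ≤ 0.0031)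
    (h : HH (-e * gm u) (-(e * qq ^ 2) * gm v) = θ) :
    ∃ ρ : ℝ, 0.99 ≤ ρ ∧ ρ ≤ 1.01 ∧ 2 * (u - U 1) = -(ρ * qq ^ 3 * (v - V 1)) := by
  have hU := hr.u1_bounds he he'
  have hV := hr.v1_bounds he he'
  obtain ⟨κ, ρ, h1, h2, h3, h4⟩ := num_rel he he' hu hv (u' := U 1) (v' := V 1)
    (by constructor <;> linarith) (by constructor <;> linarith)
  refine ⟨ρ, h2, h3, ?_⟩
  rw [h, hr.value, sub_self] at h4
  have : 2 * (u - U 1) + ρ * qq ^ 3 * (v - V 1) = 0 := by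
    by_contra hc
    exact mul_ne_zero (neg_ne_zero.2 h1.ne') hc h4.symm
  linarith

theorem num_first_block {e U1 U2 V1 u1 u2 v1 ρ : ℝ} (he : 0 < e) (he' : e ≤ 0.0000001)
    (hρ : 0.99 ≤ ρ) (hU1 : U1 = e * qq * gm U2) (hu1 : u1 = e * qq * gm u2)
    (hU2 : -0.0027624 * e ≤ U2 ∧ U2 ≤ -0.0027622 * e) (hV1 : 0.016099 * e ≤ V1)
    (hu2 : -0.0942 * e ≤ u2) (hu2' : u2 ≤ 0.0031)
    (h : 2 * (u1 - U1) = -(ρ * qq ^ 3 * (v1 - V1))) : 0.016 * e ≤ v1 := by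
  obtain ⟨c, hc1, hc2, hc⟩ := gm_lip_small (s := u2) (t := U2) (by linarith) (by linarith)
    (by linarith) (by linarith)
  have q3 := qq_pow_bounds
  have q1 := qq_upper
  have q0 := qq_pos
  have h1 : u1 - U1 = -(e * qq * c * (u2 - U2)) := by rw [hu1, hU1]; linear_combination e * qq * hc
  have h2 : e * qq * c * (-0.0915 * e) ≤ e * qq * c * (u2 - U2) :=
    mul_le_mul_of_nonneg_left (by linarith) (by positivity)
  have h3 : e * qq * c * (0.0915 * e) ≤ 0.0071 * 0.0000001 * e := by
    have : qq * c ≤ 0.0706 := by nlinarith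
    have h4 : (qq * c) * (0.0915 * e) ≤ 0.0706 * (0.0915 * 0.0000001) :=
      mul_le_mul this (by linarith) (by positivity) (by norm_num)
    nlinarith
  have h5 : 0.0049 ≤ ρ * qq ^ 3 := by nlinarith
  by_contra! hc
  have : ρ * qq ^ 3 * (v1 - V1) ≤ 0.0049 * (-0.000099 * e) := by
    nlinarith
  nlinarith

theorem num_second_block {e U2 V2 u2 v2 ρ : ℝ} (he : 0 < e)
    (hρ : 0.98505 ≤ ρ) (hρ' : ρ ≤ 1.01505)
    (hU2 : -0.0027624 * e ≤ U2 ∧ U2 ≤ -0.0027622 * e)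
    (hV2 : -0.0938372 * e ≤ V2 ∧ V2 ≤ -0.0938358 * e)
    (h : 2 * (u2 - U2) = -(ρ * qq ^ 3 * (v2 - V2))) (hu : -0.0942 * e ≤ u2)
    (hv : -0.0942 * e ≤ v2) :
    u2 ≤ -0.00276 * e ∧ (u2 ≤ -0.0529 * e → 19 * e ≤ v2 ∧ v2 ≤ 38 * e) ∧
      (-0.0027731 * e ≤ u2 → v2 ≤ -0.08 * e) := by
  have q3 := qq_pow_bounds
  have c1 : 0.00497 ≤ ρ * qq ^ 3 := by nlinarith
  have c2 : ρ * qq ^ 3 ≤ 0.00513 := by nlinarith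
  set c := ρ * qq ^ 3
  refine ⟨by nlinarith, fun hc => ⟨?_, ?_⟩, fun hc => ?_⟩
  · by_contra! hn; nlinarith
  · by_contra! hn; nlinarith
  · by_contra! hn; nlinarith

theorem num_third_block {e U3 V3 u3 v3 ρ : ℝ} (he : 0 < e)
    (hρ : 0.98 ≤ ρ) (hρ' : ρ ≤ 1.021)
    (hU3 : U3 ≤ -0.0938358 * e) (hV3 : V3 ≤ -0.0027622 * e)
    (h : 2 * (u3 - U3) = -(ρ * qq * (v3 - V3))) (hv : -0.00278 * e ≤ v3) :
    u3 ≤ -0.0938 * e := by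
  have q1 := qq_lower
  have q2 := qq_upper
  have c1 : 0.168 ≤ ρ * qq := by nlinarith
  have c2 : ρ * qq ≤ 0.1752 := by nlinarith
  nlinarith

theorem num_fourth_block {e U3 U4 V3 u3 u4 v3 ρ : ℝ} (he : 0 < e) (he' : e ≤ 0.0000001)
    (hρ : 0.98 ≤ ρ) (hU3 : U3 = -e * gm U4) (hu3 : u3 = -e * gm u4)
    (hU4 : 0.016099 * e ≤ U4 ∧ U4 ≤ 0.016101 * e) (hV3 : V3 ≤ -0.0027622 * e)
    (hu4 : -0.00278 * e ≤ u4) (hu4' : u4 ≤ 0.0031)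
    (h : 2 * (u3 - U3) = -(ρ * qq * (v3 - V3))) : v3 ≤ -0.00276 * e := by
  obtain ⟨c, hc1, hc2, hc⟩ := gm_lip_small (s := u4) (t := U4) (by linarith) (by linarith)
    (by linarith) (by linarith)
  have q1 := qq_lower
  have h1 : u3 - U3 = e * c * (u4 - U4) := by rw [hu3, hU3]; linear_combination -e * hc
  have h2 : e * c * (-0.0189 * e) ≤ e * c * (u4 - U4) :=
    mul_le_mul_of_nonneg_left (by linarith) (by positivity)
  have h3 : e * c * (0.0189 * e) ≤ 0.0078 * 0.0000001 * e := by
    have h4 : c * (0.0189 * e) ≤ 0.411 * (0.0189 * 0.0000001) :=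
      mul_le_mul hc2 (by linarith) (by positivity) (by norm_num)
    nlinarith
  have h5 : 0.168 ≤ ρ * qq := by nlinarith
  by_contra! hc
  have : 0.168 * (0.0000022 * e) ≤ ρ * qq * (v3 - V3) :=
    mul_le_mul h5 (by linarith) (by positivity) (by linarith)
  nlinarith

namespace Adm

variable {k : ℕ} {e θ : ℝ} {a : ℤ → ℕ} {f g : ℤ → ℝ}

/-- A critical junction is surrounded by the blocks `C A B C | A B C A B`. -/
theorem win (h : Adm θ a f g) (hk : Scale k e θ) {U V : ℕ → ℝ} (hr : RefConf e θ U V) {j : ℤ}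
    (hj : a j = 1) (hH : HH (f (j + 1)) (g (j - 1)) = θ) : Win k e a f g j := by
  have he := hk.pos
  have he' := hk.le_small
  have hq := qq_pos
  have hU1 := hr.u1_bounds he he'
  have hU2 := hr.u2_bounds he he'
  have hU3 := hr.u3_bounds he he'
  have hU4 := hr.u4_bounds he
  have hV1 := hr.v1_bounds he he'
  have hV2 := hr.v2_bounds he he'
  have hV3 := hr.v3_bounds he he'
  have hV4 := hr.v4_bounds he
  obtain ⟨r1, -, -⟩ := h.crit_right hk hj hH rfl
  obtain ⟨l1, hu1⟩ := h.crit_left hk hj hH rfl rfl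
  have hv1 := h.first_left hk l1.one l1.post (l1.feq ▸ blockC_le he (h.f_lo _) (h.f_le _))
  have hH' := hH
  rw [r1.feq, l1.geq] at hH'
  obtain ⟨ρ, ρ1, ρ2, hrel⟩ := hr.rel he he' ⟨r1.lo, r1.hi⟩ ⟨l1.lo, l1.hi⟩ hH'
  obtain ⟨r2, hv1'⟩ := h.tied_block hk (J' := j + (4 * k + 5)) r1.one (by ring) hU1 hV1
    (by linarith) (by linarith) hrel hu1 hv1
  have hu2 := h.first_right hk r2.one r2.post (r2.geq ▸ blockB_le he (h.g_lo _) (h.g_le _))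
  have hv1'' := num_first_block he he' ρ1 hr.u1 r2.feq hU2 hV1.1 hu2 r2.hi hrel
  have l2 := h.lstepB hk (j' := j - (4 * k + 7)) l1.one (by ring) (by linarith) (by linarith)
  have hv2 := h.first_left hk l2.one l2.post (l2.feq ▸ blockB_le he (h.f_lo _) (h.f_le _))
  rw [r2.feq, hr.u1, l2.geq, hr.v1] at hrel
  obtain ⟨ρ', ρ1', ρ2', hrel'⟩ := ratio_step_eq (by positivity) ⟨r2.lo, r2.hi⟩
    (by constructor <;> linarith) ⟨l2.lo, l2.hi⟩ (by constructor <;> linarith) (by norm_num)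
    ρ1 ρ2 hrel
  clear hrel
  obtain ⟨hu2', hbig, hsmall⟩ := num_second_block he (by linarith) (by linarith) hU2 hV2 hrel'
    hu2 hv2
  have hu2'' : -0.0529 * e < f (j + (4 * k + 5) + 1) := by
    by_contra! hc
    have h1 := hbig hc
    have := h.g_upper_three_less hk (j := j - (4 * k + 7) - 1) (by linarith)
    linarith
  have hv2' := hsmall (h.f_upperC hk hu2'')
  have l3 := h.lstepA hk (j' := j - (6 * k + 9)) l2.one (by ring) (by linarith) (by linarith)
  have r3 := h.rstepC hk (j' := j + (6 * k + 9)) r2.one (by ring) hu2'' (by linarith)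
  have hv3 := h.second_left hk l3.one l3.pre l3.feq
    (l2.feq ▸ blockB_le he (h.f_lo _) (h.f_le _)) (h.f_lo _)
  have hu3 := h.first_right hk r3.one r3.post (r3.geq ▸ blockC_le he (h.g_lo _) (h.g_le _))
  rw [r3.feq, hr.u2, l3.geq, hr.v2] at hrel'
  obtain ⟨ρ, ρ1, ρ2, hrel⟩ := ratio_step ⟨r3.lo, r3.hi⟩
    (by constructor <;> linarith) ⟨l3.lo, l3.hi⟩ (by constructor <;> linarith) (by norm_num)
    ρ1' ρ2' hrel'
  clear hrel'
  replace hrel : 2 * (f (j + (6 * k + 9) + 1) - U 3) =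
      -(ρ * qq * (g (j - (6 * k + 9) - 1) - V 3)) := by
    refine mul_left_cancel₀ (show -(e * qq ^ 2) ≠ 0 by have := hq.ne'; simp [he.ne', this]) ?_
    linear_combination hrel
  have hu3' := num_third_block he (by linarith) (by linarith) hU3.2 hV3.2 hrel hv3
  have r4 := h.rstepA hk (j' := j + (8 * k + 11)) r3.one (by ring) (by linarith) (by linarith)
  have hu4 := h.second_right hk r4.one r4.pre r4.geq
    (r3.geq ▸ blockC_le he (h.g_lo _) (h.g_le _)) (h.g_lo _)
  have hv3' := num_fourth_block he he' (by linarith) hr.u3 r4.feq hU4 hV3.2 hu4 r4.hi hrel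
  have l4 := h.lstepC hk (j' := j - (8 * k + 13)) l3.one (by ring) (by linarith) (by linarith)
  have hv4 := h.first_left hk l4.one l4.post (l4.feq ▸ blockC_le he (h.f_lo _) (h.f_le _))
  rw [r4.feq, hr.u3, l4.geq, hr.v3] at hrel
  obtain ⟨ρ', ρ1', ρ2', hrel'⟩ := ratio_step ⟨r4.lo, r4.hi⟩
    (by constructor <;> linarith) ⟨l4.lo, l4.hi⟩ (by constructor <;> linarith) (by norm_num)
    ρ1 ρ2 hrel
  replace hrel' : 2 * (f (j + (8 * k + 11) + 1) - U 4) =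
      -(ρ' * qq ^ 3 * (g (j - (8 * k + 13) - 1) - V 4)) := by
    refine mul_left_cancel₀ (neg_ne_zero.2 he.ne') ?_
    linear_combination hrel'
  obtain ⟨r5, -⟩ := h.tied_block hk (J' := j + (10 * k + 14)) r4.one (by ring) hU4 hV4
    (by linarith) (by linarith) hrel' hu4 hv4
  exact ⟨r1, r2, r3, r4, r5, l1, l2, l3, l4⟩

end Adm

/-- The digits around a critical junction. -/
def winDigit (k : ℕ) (i : ℤ) : ℕ :=
  if i = 0 ∨ i = 2 * k + 2 ∨ i = 4 * k + 5 ∨ i = 6 * k + 9 ∨ i = 8 * k + 11 ∨ i = 10 * k + 14 ∨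
    i = -(2 * k + 4) ∨ i = -(4 * k + 7) ∨ i = -(6 * k + 9) ∨ i = -(8 * k + 13) then 1 else 2

/-- The digits of `a` around `j` are those around a critical junction. -/
def Vis (k : ℕ) (a : ℤ → ℕ) (j : ℤ) : Prop :=
  ∀ i : ℤ, -(8 * k + 14) ≤ i → i ≤ 10 * k + 15 → a (j + i) = winDigit k i

theorem Vis.one {k : ℕ} {a : ℤ → ℕ} {j i : ℤ} (h : Vis k a j)
    (hi : i = 0 ∨ i = 2 * k + 2 ∨ i = 4 * k + 5 ∨ i = 6 * k + 9 ∨ i = 8 * k + 11 ∨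
      i = 10 * k + 14 ∨ i = -(2 * k + 4) ∨ i = -(4 * k + 7) ∨ i = -(6 * k + 9) ∨
      i = -(8 * k + 13)) : a (j + i) = 1 := by
  rw [h i (by omega) (by omega), winDigit, if_pos hi]

theorem Vis.two {k : ℕ} {a : ℤ → ℕ} {j i : ℤ} (h : Vis k a j) (h1 : -(8 * k + 14) ≤ i)
    (h2 : i ≤ 10 * k + 15)
    (hi : ¬ (i = 0 ∨ i = 2 * k + 2 ∨ i = 4 * k + 5 ∨ i = 6 * k + 9 ∨ i = 8 * k + 11 ∨
      i = 10 * k + 14 ∨ i = -(2 * k + 4) ∨ i = -(4 * k + 7) ∨ i = -(6 * k + 9) ∨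
      i = -(8 * k + 13))) : a (j + i) = 2 := by
  rw [h i h1 h2, winDigit, if_neg hi]

/-- The digits of a window from its blocks. -/
theorem Vis.of_blk {k : ℕ} {a : ℤ → ℕ} {j : ℤ} (b1 : Blk a (j - (8 * k + 13)) (2 * k + 3))
    (b2 : Blk a (j - (6 * k + 9)) (2 * k + 1)) (b3 : Blk a (j - (4 * k + 7)) (2 * k + 2))
    (b4 : Blk a (j - (2 * k + 4)) (2 * k + 3)) (b5 : Blk a j (2 * k + 1))
    (b6 : Blk a (j + (2 * k + 2)) (2 * k + 2)) (b7 : Blk a (j + (4 * k + 5)) (2 * k + 3))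
    (b8 : Blk a (j + (6 * k + 9)) (2 * k + 1)) (b9 : Blk a (j + (8 * k + 11)) (2 * k + 2))
    (hl : a (j - (8 * k + 13) - 1) = 2) (hr : a (j + (10 * k + 14) + 1) = 2) : Vis k a j := by
  intro i h1 h2
  unfold winDigit
  split_ifs with hi
  · rcases hi with rfl | rfl | rfl | rfl | rfl | rfl | rfl | rfl | rfl | rfl
    · simpa using b5.1
    · exact b6.1
    · exact b7.1
    · exact b8.1
    · exact b9.1
    · rw [← b9.2.2]; congr 1; push_cast; ring
    · exact b4.1
    · exact b3.1
    · exact b2.1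
    · exact b1.1
  · push Not at hi
    obtain ⟨n0, n1, n2, n3, n4, n5, n6, n7, n8, n9⟩ := hi
    by_cases c0 : i < -(8 * k + 13)
    · rw [← hl]; congr 1; omega
    by_cases c1 : i < -(6 * k + 9)
    · exact b1.2.1 _ (by omega) (by omega)
    by_cases c2 : i < -(4 * k + 7)
    · exact b2.2.1 _ (by omega) (by omega)
    by_cases c3 : i < -(2 * k + 4)
    · exact b3.2.1 _ (by omega) (by omega)
    by_cases c4 : i < 0
    · exact b4.2.1 _ (by omega) (by omega)
    by_cases c5 : i < 2 * k + 2
    · exact b5.2.1 _ (by omega) (by omega)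
    by_cases c6 : i < 4 * k + 5
    · exact b6.2.1 _ (by omega) (by omega)
    by_cases c7 : i < 6 * k + 9
    · exact b7.2.1 _ (by omega) (by omega)
    by_cases c8 : i < 8 * k + 11
    · exact b8.2.1 _ (by omega) (by omega)
    by_cases c9 : i < 10 * k + 14
    · exact b9.2.1 _ (by omega) (by omega)
    · rw [← hr]; congr 1; omega

theorem Win.vis {k : ℕ} {e : ℝ} {a : ℤ → ℕ} {f g : ℤ → ℝ} {j : ℤ} (h : Win k e a f g j) :
    Vis k a j :=
  .of_blk h.l4.blk h.l3.blk h.l2.blk h.l1.blk h.r1.blk h.r2.blk h.r3.blk h.r4.blk h.r5.blk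
    h.l4.post h.r5.post

theorem Vis.win {k : ℕ} {e θ : ℝ} {a : ℤ → ℕ} {f g : ℤ → ℝ} {j : ℤ} (hv : Vis k a j)
    (h : Sys a f g) (hk : Scale k e θ) : Win k e a f g j := by
  have key : ∀ t : ℤ, a t = a (j + (t - j)) := fun t => by congr 1; ring
  have blk : ∀ (i : ℤ) (m : ℕ), a i = 1 → a (i + m + 1) = 1 →
      (∀ t, i < t → t ≤ i + m → a (j + (t - j)) = 2) → Blk a i m := fun i m h1 h2 h3 =>
    ⟨h1, fun t ht ht' => (key t).trans (h3 t ht ht'), h2⟩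
  refine ⟨h.rstep_of_blk hk.powA (by omega) (blk _ _ ?_ ?_ fun t _ _ => hv.two ?_ ?_ ?_) ?_ ?_,
    h.rstep_of_blk hk.powB (by omega) (blk _ _ ?_ ?_ fun t _ _ => hv.two ?_ ?_ ?_) ?_ ?_,
    h.rstep_of_blk hk.powC (by omega) (blk _ _ ?_ ?_ fun t _ _ => hv.two ?_ ?_ ?_) ?_ ?_,
    h.rstep_of_blk hk.powA (by omega) (blk _ _ ?_ ?_ fun t _ _ => hv.two ?_ ?_ ?_) ?_ ?_,
    h.rstep_of_blk hk.powB (by omega) (blk _ _ ?_ ?_ fun t _ _ => hv.two ?_ ?_ ?_) ?_ ?_,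
    h.lstep_of_blk hk.powC (by omega) (blk _ _ ?_ ?_ fun t _ _ => hv.two ?_ ?_ ?_) ?_ ?_,
    h.lstep_of_blk hk.powB (by omega) (blk _ _ ?_ ?_ fun t _ _ => hv.two ?_ ?_ ?_) ?_ ?_,
    h.lstep_of_blk hk.powA (by omega) (blk _ _ ?_ ?_ fun t _ _ => hv.two ?_ ?_ ?_) ?_ ?_,
    h.lstep_of_blk hk.powC (by omega) (blk _ _ ?_ ?_ fun t _ _ => hv.two ?_ ?_ ?_) ?_ ?_⟩
  all_goals first
    | omega
    | (rw [key]; exact hv.two (by omega) (by omega) (by omega))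
    | (rw [key]; exact hv.one (by omega))

/-! ### Propagation of the window to the left -/

theorem chain_three {e v1 v2 v3 v4 V1 V2 V3 V4 : ℝ}
    (h1 : v1 = e * qq * gm v2) (h2 : v2 = -e * gm v3) (h3 : v3 = -(e * qq ^ 2) * gm v4)
    (H1 : V1 = e * qq * gm V2) (H2 : V2 = -e * gm V3) (H3 : V3 = -(e * qq ^ 2) * gm V4)
    (r2 : -0.0006 ≤ v2 ∧ v2 ≤ 0.0031) (r3 : -0.0006 ≤ v3 ∧ v3 ≤ 0.0031)
    (r4 : -0.0006 ≤ v4 ∧ v4 ≤ 0.0031) (R2 : -0.0006 ≤ V2 ∧ V2 ≤ 0.0031)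
    (R3 : -0.0006 ≤ V3 ∧ V3 ≤ 0.0031) (R4 : -0.0006 ≤ V4 ∧ V4 ≤ 0.0031) :
    ∃ C : ℝ, 0.068 ≤ C ∧ C ≤ 0.07 ∧ v1 - V1 = -(C * e ^ 3 * qq ^ 3) * (v4 - V4) := by
  obtain ⟨c2, l2, m2, k2⟩ := gm_lip_small r2.1 R2.1 r2.2 R2.2
  obtain ⟨c3, l3, m3, k3⟩ := gm_lip_small r3.1 R3.1 r3.2 R3.2
  obtain ⟨c4, l4, m4, k4⟩ := gm_lip_small r4.1 R4.1 r4.2 R4.2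
  have d2 : v1 - V1 = -(e * qq * c2) * (v2 - V2) := by rw [h1, H1]; linear_combination e * qq * k2
  have d3 : v2 - V2 = e * c3 * (v3 - V3) := by rw [h2, H2]; linear_combination -e * k3
  have d4 : v3 - V3 = e * qq ^ 2 * c4 * (v4 - V4) := by
    rw [h3, H3]; linear_combination -(e * qq ^ 2) * k4
  refine ⟨c2 * c3 * c4, ?_, ?_, ?_⟩
  · have : 0.409 * 0.409 ≤ c2 * c3 := mul_le_mul l2 l3 (by norm_num) (by linarith)
    have : 0.409 * 0.409 * 0.409 ≤ c2 * c3 * c4 :=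
      mul_le_mul this l4 (by norm_num) (by positivity)
    linarith
  · have : c2 * c3 ≤ 0.411 * 0.411 := mul_le_mul m2 m3 (by linarith) (by norm_num)
    have : c2 * c3 * c4 ≤ 0.411 * 0.411 * 0.411 :=
      mul_le_mul this m4 (by linarith) (by norm_num)
    linarith
  · rw [d2, d3, d4]; ring

theorem chain_four {e u1 u2 u3 u4 u5 U1 U2 U3 U4 U5 : ℝ}
    (h1 : u1 = e * qq * gm u2) (h2 : u2 = -(e * qq ^ 2) * gm u3) (h3 : u3 = -e * gm u4)
    (h4 : u4 = e * qq * gm u5)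
    (H1 : U1 = e * qq * gm U2) (H2 : U2 = -(e * qq ^ 2) * gm U3) (H3 : U3 = -e * gm U4)
    (H4 : U4 = e * qq * gm U5)
    (r2 : -0.0006 ≤ u2 ∧ u2 ≤ 0.0031) (r3 : -0.0006 ≤ u3 ∧ u3 ≤ 0.0031)
    (r4 : -0.0006 ≤ u4 ∧ u4 ≤ 0.0031) (r5 : -0.0006 ≤ u5 ∧ u5 ≤ 0.0031)
    (R2 : -0.0006 ≤ U2 ∧ U2 ≤ 0.0031) (R3 : -0.0006 ≤ U3 ∧ U3 ≤ 0.0031)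
    (R4 : -0.0006 ≤ U4 ∧ U4 ≤ 0.0031) (R5 : -0.0006 ≤ U5 ∧ U5 ≤ 0.0031) :
    ∃ C : ℝ, 0.027 ≤ C ∧ C ≤ 0.029 ∧ u1 - U1 = C * e ^ 4 * qq ^ 4 * (u5 - U5) := by
  obtain ⟨c2, l2, m2, k2⟩ := gm_lip_small r2.1 R2.1 r2.2 R2.2
  obtain ⟨c3, l3, m3, k3⟩ := gm_lip_small r3.1 R3.1 r3.2 R3.2
  obtain ⟨c4, l4, m4, k4⟩ := gm_lip_small r4.1 R4.1 r4.2 R4.2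
  obtain ⟨c5, l5, m5, k5⟩ := gm_lip_small r5.1 R5.1 r5.2 R5.2
  have d2 : u1 - U1 = -(e * qq * c2) * (u2 - U2) := by rw [h1, H1]; linear_combination e * qq * k2
  have d3 : u2 - U2 = e * qq ^ 2 * c3 * (u3 - U3) := by
    rw [h2, H2]; linear_combination -(e * qq ^ 2) * k3
  have d4 : u3 - U3 = e * c4 * (u4 - U4) := by rw [h3, H3]; linear_combination -e * k4
  have d5 : u4 - U4 = -(e * qq * c5) * (u5 - U5) := by rw [h4, H4]; linear_combination e * qq * k5
  refine ⟨c2 * c3 * (c4 * c5), ?_, ?_, ?_⟩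
  · have p1 : 0.409 * 0.409 ≤ c2 * c3 := mul_le_mul l2 l3 (by norm_num) (by linarith)
    have p2 : 0.409 * 0.409 ≤ c4 * c5 := mul_le_mul l4 l5 (by norm_num) (by linarith)
    have := mul_le_mul p1 p2 (by norm_num) (by positivity)
    linarith
  · have p1 : c2 * c3 ≤ 0.411 * 0.411 := mul_le_mul m2 m3 (by linarith) (by norm_num)
    have p2 : c4 * c5 ≤ 0.411 * 0.411 := mul_le_mul m4 m5 (by linarith) (by norm_num)
    have := mul_le_mul p1 p2 (by positivity) (by norm_num)
    linarith
  · rw [d2, d3, d4, d5]; ring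

/-- The deviations at a junction whose height is at most that of the reference configuration. -/
theorem RefConf.rel_le {e θ : ℝ} {U V : ℕ → ℝ} (hr : RefConf e θ U V) (he : 0 < e)
    (he' : e ≤ 0.0000001) {u v : ℝ} (hu : -0.0006 ≤ u ∧ u ≤ 0.0031) (hv : -0.0006 ≤ v ∧ v ≤ 0.0031)
    (h : HH (-e * gm u) (-(e * qq ^ 2) * gm v) ≤ θ) :
    ∃ ρ : ℝ, 0.99 ≤ ρ ∧ 0 ≤ 2 * (u - U 1) + ρ * qq ^ 3 * (v - V 1) := by
  have hU := hr.u1_bounds he he'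
  have hV := hr.v1_bounds he he'
  obtain ⟨κ, ρ, h1, h2, -, h4⟩ := num_rel he he' hu hv (u' := U 1) (v' := V 1)
    (by constructor <;> linarith) (by constructor <;> linarith)
  refine ⟨ρ, h2, ?_⟩
  rw [hr.value] at h4
  have : 0 ≤ κ * (2 * (u - U 1) + ρ * qq ^ 3 * (v - V 1)) := by linarith
  exact nonneg_of_mul_nonneg_right this h1

theorem num_prop_upper {e C C' ρ x y : ℝ} (he : 0 < e) (hρ : 0.99 ≤ ρ) (hC : 0.027 ≤ C)
    (hC' : C ≤ 0.029) (hD : 0.068 ≤ C') (hx : x ≤ 0.0032)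
    (h : 0 ≤ 2 * (C * e ^ 4 * qq ^ 4 * x) + ρ * qq ^ 3 * (-(C' * e ^ 3 * qq ^ 3) * y)) :
    y ≤ 0.12 * e := by
  have hC0 : 0 < C := by linarith
  have hq := qq_pos
  have q := qq_pow_bounds
  have h1 : 0 ≤ e ^ 3 * qq ^ 4 * (2 * (C * e * x) - ρ * C' * qq ^ 2 * y) := by
    linear_combination h
  have h2 := nonneg_of_mul_nonneg_right h1 (by positivity)
  have h3 : 0.0019 ≤ ρ * C' * qq ^ 2 := by
    have : 0.0673 ≤ ρ * C' := by nlinarith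
    nlinarith
  by_contra! hc
  have h4 : 0.0019 * (0.12 * e) ≤ ρ * C' * qq ^ 2 * y :=
    mul_le_mul h3 hc.le (by positivity) (by linarith)
  have h5 : C * e * x ≤ 0.029 * 0.0032 * e := by
    have : C * x ≤ 0.029 * 0.0032 := by nlinarith
    nlinarith
  linarith

theorem num_prop_lower {e C ρ x y : ℝ} (he : 0 < e) (hρ : 0.99 ≤ ρ) (hC : 0.027 ≤ C)
    (hC' : C ≤ 0.029) (hx : x ≤ 0.0000001)
    (h : 0 ≤ 2 * (C * e ^ 4 * qq ^ 4 * x) + ρ * qq ^ 3 * y) : -(0.00000001 * e ^ 4 * qq) ≤ y := by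
  have hq := qq_pos
  have hC0 : 0 < C := by linarith
  have h1 : 0 ≤ qq ^ 3 * (2 * (C * e ^ 4 * qq * x) + ρ * y) := by linear_combination h
  have h2 := nonneg_of_mul_nonneg_right h1 (by positivity)
  have h4 : C * x ≤ 0.029 * 0.0000001 := by nlinarith
  have he4 : 0 < e ^ 4 * qq := by positivity
  have h5 : C * x * (e ^ 4 * qq) ≤ 0.029 * 0.0000001 * (e ^ 4 * qq) :=
    mul_le_mul_of_nonneg_right h4 he4.le
  by_contra! hc
  nlinarith

theorem num_pow_le {e : ℝ} (he : 0 < e) (he' : e ≤ 0.0000001) :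
    0.00000001 * e ^ 4 * qq ≤ 0.00000001 * e ∧ e ^ 3 ≤ e ∧ e ^ 2 ≤ e := by
  have h3 : e ^ 3 ≤ 1 := pow_le_one₀ he.le (by linarith)
  have h2 : e ^ 2 ≤ 1 := pow_le_one₀ he.le (by linarith)
  have h4 : e ^ 3 * qq ≤ 1 := mul_le_one₀ h3 qq_pos.le (by linarith [qq_upper])
  refine ⟨?_, ?_, ?_⟩ <;> nlinarith

theorem num_div_le {c p K x : ℝ} (hp : 0 < p) (hK : 0 < K) (hc : 0.409 ≤ c)
    (h : c * x ≤ K * p) : x ≤ 10 * K * p := by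
  have := mul_pos hK hp
  by_contra! hn
  nlinarith

namespace Adm

variable {k : ℕ} {e θ : ℝ} {a : ℤ → ℕ} {f g : ℤ → ℝ}

/-- The height at `j` bounds the coordinate on the left of the window from above. -/
theorem vis_upper (h : Adm θ a f g) (hk : Scale k e θ) {U V : ℕ → ℝ} (hr : RefConf e θ U V)
    {j : ℤ} (hv : Vis k a j) : g (j - (8 * k + 13) - 1) ≤ 0.016163 * e := by
  have he := hk.pos
  have he' := hk.le_small
  have hq := qq_pos
  have hU1 := hr.u1_bounds he he'
  have hU2 := hr.u2_bounds he he'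
  have hU3 := hr.u3_bounds he he'
  have hU4 := hr.u4_bounds he
  have hU5 := hr.u5
  have hV1 := hr.v1_bounds he he'
  have hV2 := hr.v2_bounds he he'
  have hV3 := hr.v3_bounds he he'
  have hV4 := hr.v4_bounds he
  obtain ⟨r1, r2, r3, r4, r5, l1, l2, l3, l4⟩ := hv.win h.toSys hk
  have hj : a j = 1 := by simpa using hv.one (i := 0) (by simp)
  have hj' : a (j + 1) = 2 := r1.blk.2.1 _ (by omega) (by push_cast; omega)
  have hH := h.right_le j hj hj'
  rw [r1.feq, l1.geq] at hH
  obtain ⟨ρ, hρ, hrel⟩ := hr.rel_le he he' ⟨r1.lo, r1.hi⟩ ⟨l1.lo, l1.hi⟩ hH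
  obtain ⟨C, hC, hC', hu⟩ := chain_four r2.feq r3.feq r4.feq r5.feq hr.u1 hr.u2 hr.u3 hr.u4
    ⟨r2.lo, r2.hi⟩ ⟨r3.lo, r3.hi⟩ ⟨r4.lo, r4.hi⟩ ⟨r5.lo, r5.hi⟩ (by constructor <;> linarith)
    (by constructor <;> linarith) (by constructor <;> linarith) (by constructor <;> linarith)
  obtain ⟨C', hD, -, hv'⟩ := chain_three l2.geq l3.geq l4.geq hr.v1 hr.v2 hr.v3
    ⟨l2.lo, l2.hi⟩ ⟨l3.lo, l3.hi⟩ ⟨l4.lo, l4.hi⟩ (by constructor <;> linarith)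
    (by constructor <;> linarith) (by constructor <;> linarith)
  rw [hu, hv'] at hrel
  have hup := num_prop_upper he hρ hC hC' hD (by linarith [r5.hi]) hrel
  exact h.g_upperB hk (by linarith)

theorem vis_left (h : Adm θ a f g) (hk : Scale k e θ) {U V : ℕ → ℝ} (hr : RefConf e θ U V)
    {j : ℤ} (hv : Vis k a j) : Vis k a (j - (6 * k + 9)) := by
  have he := hk.pos
  have he' := hk.le_small
  have hq := qq_pos
  have hU1 := hr.u1_bounds he he'
  have hU2 := hr.u2_bounds he he'
  have hU3 := hr.u3_bounds he he'
  have hU4 := hr.u4_bounds he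
  have hU5 := hr.u5
  have hV1 := hr.v1_bounds he he'
  have hV2 := hr.v2_bounds he he'
  have hV3 := hr.v3_bounds he he'
  have hw := h.vis_upper hk hr hv
  obtain ⟨r1, r2, r3, -, -, l1, l2, l3, l4⟩ := hv.win h.toSys hk
  have hj' : a (j + 1) = 2 := r1.blk.2.1 _ (by omega) (by push_cast; omega)
  have rA := h.rstep_of_blk hk.powA (by omega) l3.blk (j' := j - (4 * k + 7))
    (by push_cast; ring) l2.pre
  have rB := h.rstep_of_blk hk.powB (by omega) l2.blk (j' := j - (2 * k + 4))
    (by push_cast; ring) l1.pre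
  have rC := h.rstep_of_blk hk.powC (by omega) l1.blk (j' := j) (by push_cast; ring) hj'
  have hH := h.right_le _ l3.one l3.pre
  rw [rA.feq, l4.geq] at hH
  obtain ⟨ρ, hρ, hrel⟩ := hr.rel_le he he' ⟨rA.lo, rA.hi⟩ ⟨l4.lo, l4.hi⟩ hH
  obtain ⟨C, hC, hC', hu⟩ := chain_four rB.feq rC.feq r1.feq r2.feq hr.u1 hr.u2 hr.u3 hr.u4
    ⟨rB.lo, rB.hi⟩ ⟨rC.lo, rC.hi⟩ ⟨r1.lo, r1.hi⟩ ⟨r2.lo, r2.hi⟩ (by constructor <;> linarith)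
    (by constructor <;> linarith) (by constructor <;> linarith) (by constructor <;> linarith)
  have hneg : f (j + (4 * k + 5) + 1) ≤ 0 := by
    rw [r3.feq]
    have := (gm_range (h.f_lo (j + (6 * k + 9) + 1)) (by linarith [r3.hi])).1
    have : 0 < e * qq ^ 2 * gm (f (j + (6 * k + 9) + 1)) := by positivity
    linarith
  rw [hu] at hrel
  have hlow := num_prop_lower he hρ hC hC' (by linarith) hrel
  clear hrel hu hC hC' hρ hH
  obtain ⟨he4, he3, he2⟩ := num_pow_le he he'
  have l5 := h.lstepB hk (j' := j - (10 * k + 16)) l4.one (by ring) (by linarith) (by linarith)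
  have hv2 := h.first_left hk l5.one l5.post (l5.feq ▸ blockB_le he (h.f_lo _) (h.f_le _))
  obtain ⟨c, hc, -, hc'⟩ := gm_lip_small l5.lo (t := V 2) (by linarith) l5.hi (by linarith)
  rw [l5.geq, hr.v1, ← mul_sub, hc'] at hlow
  have hb : g (j - (10 * k + 16) - 1) - V 2 ≤ 10 * 0.00000001 * e ^ 3 := by
    have h1 : 0 ≤ e * qq * (0.00000001 * e ^ 3 - c * (g (j - (10 * k + 16) - 1) - V 2)) := by
      linear_combination hlow
    have h2 := nonneg_of_mul_nonneg_right h1 (by positivity)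
    exact num_div_le (p := e ^ 3) (by positivity) (by norm_num) hc (by linarith)
  clear hlow hc hc' c
  have l6 := h.lstepA hk (j' := j - (12 * k + 18)) l5.one (by ring) (by linarith) (by linarith)
  have hv3 := h.second_left hk l6.one l6.pre l6.feq
    (l5.feq ▸ blockB_le he (h.f_lo _) (h.f_le _)) (h.f_lo _)
  obtain ⟨c, hc, -, hc'⟩ := gm_lip_small l6.lo (t := V 3) (by linarith) l6.hi (by linarith)
  rw [l6.geq, hr.v2, ← mul_sub, hc'] at hb
  have hb' : g (j - (12 * k + 18) - 1) - V 3 ≤ 10 * (10 * 0.00000001) * e ^ 2 := by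
    have h1 : 0 ≤ e * (10 * 0.00000001 * e ^ 2 - c * (g (j - (12 * k + 18) - 1) - V 3)) := by
      linear_combination hb
    have h2 := nonneg_of_mul_nonneg_right h1 he
    exact num_div_le (p := e ^ 2) (by positivity) (by norm_num) hc (by linarith)
  have l7 := h.lstepC hk (j' := j - (14 * k + 22)) l6.one (by ring) (by linarith) (by linarith)
  have key : ∀ {i i' : ℤ} {m : ℕ}, Blk a i m → i = i' → Blk a i' m := fun hb hi => hi ▸ hb
  refine .of_blk (key l7.blk (by ring)) (key l6.blk (by ring)) (key l5.blk (by ring))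
    (key l4.blk (by ring)) l3.blk (key l2.blk (by ring)) (key l1.blk (by ring))
    (key r1.blk (by ring)) (key r2.blk (by ring)) ?_ ?_
  · rw [← l7.post]; congr 1; ring
  · rw [← r2.post]; congr 1; ring

end Adm

/-! ### A critical junction cannot be surrounded by periodic digits -/

theorem num_periodic {e C C' ρ c x y : ℝ} (he : 0 < e) (hρ : ρ ≤ 1.01)
    (hρ' : 0.99 ≤ ρ) (hC : 0.027 ≤ C) (hC' : 0.068 ≤ C') (hC'' : C' ≤ 0.07) (hc : 0.409 ≤ c)
    (hc' : c ≤ 0.411) (hx : 0.08 * e ≤ x) (hy : -0.0942 * e ≤ y)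
    (h : 2 * (C * e ^ 4 * qq ^ 4 * x) =
      -(ρ * qq ^ 3 * (-(C' * e ^ 3 * qq ^ 3) * (e * qq * (-c * y))))) : False := by
  have hq := qq_pos
  have h1 : 2 * C * x = -(ρ * C' * c * qq ^ 3 * y) := by
    refine mul_left_cancel₀ (show e ^ 4 * qq ^ 4 ≠ 0 by positivity) ?_
    linear_combination h
  have q3 := qq_pow_bounds
  have h2 : ρ * C' ≤ 0.1 := by nlinarith
  have h3 : ρ * C' * c ≤ 0.1 := by nlinarith
  have h4 : ρ * C' * c * qq ^ 3 ≤ 0.01 := by nlinarith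
  have h0 : 0 ≤ ρ * C' * c * qq ^ 3 := by positivity
  have h5 : -(ρ * C' * c * qq ^ 3 * y) ≤ 0.01 * (0.0942 * e) := by nlinarith
  have h6 : 0.027 * (0.08 * e) ≤ C * x := mul_le_mul hC hx (by positivity) (by linarith)
  linarith

theorem blockA_ge {e s : ℝ} (he : 0 < e) (h1 : -0.0006 ≤ s) (h2 : s ≤ 0.0031) :
    -0.0942 * e ≤ -e * gm s := by
  have := gm_range_single h1 h2
  nlinarith

theorem blockC_ge {e s : ℝ} (he : 0 < e) (h1 : -0.0006 ≤ s) (h2 : s ≤ 0.0031) :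
    -0.01 * e ≤ -(e * qq ^ 2) * gm s := by
  have h1 := gm_range_single h1 h2
  have := qq_pow_bounds
  have : qq ^ 2 * gm s ≤ 0.01 := by nlinarith
  nlinarith

theorem Adm.false_of_vis {k : ℕ} {e θ : ℝ} {a : ℤ → ℕ} {f g : ℤ → ℝ} (h : Adm θ a f g)
    (hk : Scale k e θ) {U V : ℕ → ℝ} (hr : RefConf e θ U V) {j : ℤ} (h0 : Vis k a j)
    (h1 : Vis k a (j + (6 * k + 9))) (hH : HH (f (j + 1)) (g (j - 1)) = θ) : False := by
  have he := hk.pos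
  have he' := hk.le_small
  have hU1 := hr.u1_bounds he he'
  have hU2 := hr.u2_bounds he he'
  have hU3 := hr.u3_bounds he he'
  have hU4 := hr.u4_bounds he
  have hU5 := hr.u5
  have hV1 := hr.v1_bounds he he'
  have hV2 := hr.v2_bounds he he'
  have hV3 := hr.v3_bounds he he'
  have hV4 := hr.v4_bounds he
  have hV5 := hr.v5
  obtain ⟨r1, r2, r3, r4, r5, l1, l2, l3, l4⟩ := h0.win h.toSys hk
  obtain ⟨-, -, r6, -⟩ := h1.win h.toSys hk
  obtain ⟨-, -, -, -, -, -, l5, l6, -⟩ := (h.vis_left hk hr h0).win h.toSys hk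
  replace l5 : LStep a f g (e * qq) (2 * k + 2) (j - (8 * k + 13)) (j - (10 * k + 16)) := by
    convert l5 using 1 <;> ring
  replace l6 : LStep a f g (-e) (2 * k + 1) (j - (10 * k + 16)) (j - (12 * k + 18)) := by
    convert l6 using 1 <;> ring
  replace r6 : RStep a f g (-(e * qq ^ 2)) (2 * k + 3) (j + (10 * k + 14))
      (j + (12 * k + 18)) := by
    convert r6 using 1 <;> ring
  rw [r1.feq, l1.geq] at hH
  obtain ⟨ρ, hρ, hρ', hrel⟩ := hr.rel he he' ⟨r1.lo, r1.hi⟩ ⟨l1.lo, l1.hi⟩ hH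
  obtain ⟨C, hC, hC', hu⟩ := chain_four r2.feq r3.feq r4.feq r5.feq hr.u1 hr.u2 hr.u3 hr.u4
    ⟨r2.lo, r2.hi⟩ ⟨r3.lo, r3.hi⟩ ⟨r4.lo, r4.hi⟩ ⟨r5.lo, r5.hi⟩ (by constructor <;> linarith)
    (by constructor <;> linarith) (by constructor <;> linarith) (by constructor <;> linarith)
  obtain ⟨C', hD, hD', hv'⟩ := chain_three l2.geq l3.geq l4.geq hr.v1 hr.v2 hr.v3
    ⟨l2.lo, l2.hi⟩ ⟨l3.lo, l3.hi⟩ ⟨l4.lo, l4.hi⟩ (by constructor <;> linarith)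
    (by constructor <;> linarith) (by constructor <;> linarith)
  obtain ⟨c, hc, hc', hc''⟩ := gm_lip_small l5.lo (t := V 5) (by linarith) l5.hi (by linarith)
  rw [hu, hv', l5.geq, hr.v4, ← mul_sub, hc''] at hrel
  have hx : -0.01 * e ≤ f (j + (10 * k + 14) + 1) := by
    rw [r6.feq]
    exact blockC_ge he r6.lo r6.hi
  have hy : -0.0942 * e ≤ g (j - (10 * k + 16) - 1) := by
    rw [l6.geq]
    exact blockA_ge he l6.lo l6.hi
  exact num_periodic he hρ' hρ hC hD hD' hc hc' (by linarith) (by linarith) hrel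

section

open Filter Topology

/-! ### The values of reference configurations are not in the Lagrange spectrum -/

theorem Adm.signed {θ : ℝ} {a : ℤ → ℕ} {f g : ℤ → ℝ} (h : Adm θ a f g) {σ : ℤ}
    (hσ : σ = 1 ∨ σ = -1) : ∃ f' g', Adm θ (fun i => a (σ * i)) f' g' := by
  rcases hσ with rfl | rfl
  · exact ⟨f, g, by simpa using h⟩
  · exact ⟨_, _, by simpa using h.reverse⟩

theorem three_lt_height {θ : ℝ} (hθ : 0 ≤ θ) : 3 < 1 + 3 / √2 + √2 * θ := by
  have s1 := sqrt_two_bounds.1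
  have s2 := sqrt_two_bounds.2.1
  have : 2 < 3 / √2 := by rw [lt_div_iff₀ (by linarith)]; linarith
  have : 0 ≤ √2 * θ := by positivity
  linarith

/-- A junction where the supremum is attained. -/
theorem BiCF.exists_junction {a : ℤ → ℕ} {x y : ℤ → ℝ} (h : BiCF a x y) {θ : ℝ} (hθ0 : 0 ≤ θ)
    (hA : Adm θ a (fun i => phi (x i)) (fun i => phi (y i)))
    (h0 : bilam a x y 0 = 1 + 3 / √2 + √2 * θ) :
    ∃ σ : ℤ, (σ = 1 ∨ σ = -1) ∧ ∃ f g, Adm θ (fun i => a (σ * i)) f g ∧ a (σ * -1) = 1 ∧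
      HH (f (-1 + 1)) (g (-1 - 1)) = θ := by
  have h3 := three_lt_height hθ0
  have hs : (0 : ℝ) < √2 := by positivity
  have hone : a (-1) = 1 ∨ a 1 = 1 := by
    by_contra! hc
    have c1 := (hA.dig (-1)).resolve_left hc.1
    have c2 := (hA.dig 1).resolve_left hc.2
    rcases hA.dig 0 with c0 | c0
    · linarith [h.bilam_lt_of_one c0]
    · linarith [h.bilam_lt_of_two c0 (by simpa using c1) (by simpa using c2)]
  rcases hone with h1 | h1
  · refine ⟨1, .inl rfl, _, _, by simpa using hA, by simpa using h1, ?_⟩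
    have := h.bilam_right h1
    rw [neg_add_cancel, h0] at this
    rw [neg_add_cancel]
    exact mul_left_cancel₀ hs.ne' (add_left_cancel this).symm
  · refine ⟨-1, .inr rfl, _, _, by simpa using hA.reverse, by simpa using h1, ?_⟩
    have := h.bilam_left h1
    rw [sub_self, h0] at this
    norm_num at this ⊢
    exact this.symm

/-- The window at the position `m` in the direction `σ`. -/
abbrev SVis (k : ℕ) (σ : ℤ) (a : ℤ → ℕ) (m : ℤ) : Prop := Vis k (fun i => a (m + σ * i)) 0

theorem svis_iff {k : ℕ} {σ : ℤ} {a : ℤ → ℕ} {m : ℤ} : SVis k σ a m ↔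
    ∀ i ∈ Set.Icc (-(8 * k + 14) : ℤ) (10 * k + 15), a (m + σ * i) = winDigit k i := by
  simp only [SVis, Vis, zero_add, Set.mem_Icc, and_imp]

/-- Windows of the limit are limits of windows. -/
theorem vis_limit_iff {k : ℕ} {σ : ℤ} {a b : ℤ → ℕ} {F : Ultrafilter ℕ}
    (hb : ∀ i : ℤ, ∀ᶠ n : ℕ in F, a (n + i) = b i) (m : ℤ) :
    Vis k (fun i => b (σ * i)) m ↔ ∀ᶠ n : ℕ in F, SVis k σ a (n + σ * m) := by
  have key : ∀ᶠ n : ℕ in F, ∀ i ∈ Set.Icc (-(8 * k + 14) : ℤ) (10 * k + 15),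
      a (n + σ * m + σ * i) = b (σ * (m + i)) := by
    rw [eventually_all_finite (Set.finite_Icc _ _)]
    intro i _
    filter_upwards [hb (σ * (m + i))] with n hn
    rw [← hn]; congr 1; ring
  constructor
  · intro h
    filter_upwards [key] with n hn
    exact svis_iff.2 fun i hi => (hn i hi).trans (h i hi.1 hi.2)
  · intro h i h1 h2
    obtain ⟨n, hn, hn'⟩ := (key.and h).exists
    rw [svis_iff] at hn'
    exact (hn i ⟨h1, h2⟩).symm.trans (hn' i ⟨h1, h2⟩)

theorem exists_ultrafilter_of_frequently {P : ℕ → Prop} (h : ∃ᶠ n in atTop, P n) :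
    ∃ F : Ultrafilter ℕ, ↑F ≤ (atTop : Filter ℕ) ∧ ∀ᶠ n in F, P n :=
  have := frequently_iff_neBot.1 h
  ⟨Ultrafilter.of _, (Ultrafilter.of_le _).trans inf_le_left,
    (Ultrafilter.of_le _).trans inf_le_right (mem_principal_self _)⟩

/-- Backward propagation of a property along an ultrafilter. -/
theorem eventually_add_of_descent {P : ℤ → Prop} {p c : ℤ} (hp : 0 < p) {F : Ultrafilter ℕ}
    (hF : ↑F ≤ (atTop : Filter ℕ)) (hP : ∃ N : ℤ, ∀ m ≥ N, P m → P (m - p))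
    (h : ∀ᶠ n : ℕ in F, P (n + c)) : ∀ᶠ n : ℕ in F, P (n + c + p) := by
  obtain ⟨N, hN⟩ := hP
  obtain ⟨r, hr⟩ : ∃ r : Set.Ico (0 : ℤ) p, ∀ᶠ n : ℕ in F, (n : ℤ) % p = r := by
    rw [← Ultrafilter.eventually_exists_iff]
    exact .of_forall fun n => ⟨⟨n % p, Int.emod_nonneg _ hp.ne', Int.emod_lt_of_pos _ hp⟩, rfl⟩
  have desc : ∀ (t : ℕ) (m : ℤ), N ≤ m → P (m + p * t) → P m := by
    intro t
    induction t with
    | zero => intro m _ hm; simpa using hm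
    | succ t ih =>
      intro m hm h1
      refine ih m hm ?_
      have := hN _ (by push_cast; nlinarith) h1
      convert this using 1; push_cast; ring
  have hlarge : ∀ M : ℤ, ∀ᶠ n : ℕ in F, M ≤ n := fun M =>
    hF (tendsto_natCast_atTop_atTop.eventually_ge_atTop M)
  filter_upwards [hr, hlarge (N - c)] with n hn hn'
  obtain ⟨n', ⟨h1, h2⟩, h3⟩ := ((hr.and h).and (hlarge (n + p))).exists
  have hd : p ∣ (n' : ℤ) - (n + p) := by
    have : p ∣ (n' : ℤ) - n := Int.ModEq.dvd (hn.trans h1.symm)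
    rw [← sub_sub]; exact dvd_sub this (dvd_refl p)
  obtain ⟨t, ht⟩ := hd
  have ht0 : 0 ≤ t := by
    by_contra! hc; nlinarith
  lift t to ℕ using ht0
  refine desc t _ (by linarith) ?_
  convert h2 using 1
  linarith

/-- Forward propagation of a property along an ultrafilter. -/
theorem eventually_sub_of_ascent {P : ℤ → Prop} {p c : ℤ} (hp : 0 < p) {F : Ultrafilter ℕ}
    (hF : ↑F ≤ (atTop : Filter ℕ)) (hP : ∃ N : ℤ, ∀ m ≥ N, P m → P (m + p))
    (h : ∀ᶠ n : ℕ in F, P (n + c)) : ∀ᶠ n : ℕ in F, P (n + c - p) := by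
  obtain ⟨N, hN⟩ := hP
  obtain ⟨r, hr⟩ : ∃ r : Set.Ico (0 : ℤ) p, ∀ᶠ n : ℕ in F, (n : ℤ) % p = r := by
    rw [← Ultrafilter.eventually_exists_iff]
    exact .of_forall fun n => ⟨⟨n % p, Int.emod_nonneg _ hp.ne', Int.emod_lt_of_pos _ hp⟩, rfl⟩
  have asc : ∀ (t : ℕ) (m : ℤ), N ≤ m → P m → P (m + p * t) := by
    intro t m hm h1
    induction t with
    | zero => simpa using h1
    | succ t ih =>
      have := hN _ (by nlinarith) ih
      convert this using 1; push_cast; ring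
  have hlarge : ∀ M : ℤ, ∀ᶠ n : ℕ in F, M ≤ n := fun M =>
    hF (tendsto_natCast_atTop_atTop.eventually_ge_atTop M)
  obtain ⟨n', ⟨h1, h2⟩, h3⟩ := ((hr.and h).and (hlarge (N - c))).exists
  filter_upwards [hr, hlarge (n' + p)] with n hn hn'
  have hd : p ∣ (n : ℤ) - p - n' := by
    have : p ∣ (n : ℤ) - n' := Int.ModEq.dvd (h1.trans hn.symm)
    rw [sub_right_comm]; exact dvd_sub this (dvd_refl p)
  obtain ⟨t, ht⟩ := hd
  have ht0 : 0 ≤ t := by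
    by_contra! hc; nlinarith
  lift t to ℕ using ht0
  convert asc t _ (by linarith) h2 using 1
  linarith

namespace HalfCF

variable {a : ℕ → ℕ} {x y : ℕ → ℝ} {θ : ℝ}

/-- Every limit of the shifts of `a` satisfies the bounds given by the limit superior. -/
theorem exists_adm (h : HalfCF a x y) (hθ : θ ≤ 0.0004)
    (hl : limsup (fun n => ENNReal.ofReal (lam a x y n)) atTop =
      ENNReal.ofReal (1 + 3 / √2 + √2 * θ)) (F : Ultrafilter ℕ) (hF : ↑F ≤ (atTop : Filter ℕ)) :
    ∃ b X Y, BiCF b X Y ∧ (∀ i : ℤ, ∀ᶠ n : ℕ in F, a (n + i).toNat = b i) ∧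
      (∀ i : ℤ, Tendsto (fun n : ℕ => lam a x y (n + i).toNat) F (𝓝 (bilam b X Y i))) ∧
      Adm θ b (fun i => phi (X i)) (fun i => phi (Y i)) := by
  set Λ := 1 + 3 / √2 + √2 * θ
  have hle : ∀ M, Λ < M → ∀ᶠ n in atTop, lam a x y n < M := by
    intro M hM
    have h1 : limsup (fun n => ENNReal.ofReal (lam a x y n)) atTop < ENNReal.ofReal M := by
      rw [hl]
      refine ENNReal.ofReal_lt_ofReal_iff'.2 ⟨hM, ?_⟩
      by_contra! hc
      have : limsup (fun n => ENNReal.ofReal (lam a x y n)) atTop < 1 := by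
        rw [hl, ENNReal.ofReal_of_nonpos (by linarith)]; exact one_pos
      obtain ⟨n, hn⟩ := (eventually_lt_of_limsup_lt this).exists
      rw [ENNReal.ofReal_lt_one] at hn
      linarith [h.lam_ge_one n]
    filter_upwards [eventually_lt_of_limsup_lt h1] with n hn
    exact (ENNReal.ofReal_lt_ofReal_iff'.1 hn).1
  obtain ⟨b, X, Y, hb, hd, hlam⟩ := h.exists_limit F hF (B := ⌈Λ + 1⌉₊) (by
    filter_upwards [hle (Λ + 1) (by linarith)] with n hn
    have : (a n : ℝ) ≤ ⌈Λ + 1⌉₊ := by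
      refine le_trans ?_ (Nat.le_ceil _)
      have := h.x_pos (n + 1)
      have := h.y_nonneg n
      unfold lam at hn
      linarith
    exact_mod_cast this)
  refine ⟨b, X, Y, hb, hd, hlam, hb.adm hθ fun i => le_of_forall_gt_imp_ge_of_dense fun M hM => ?_⟩
  obtain ⟨N, hN⟩ := eventually_atTop.1 (hle M hM)
  refine le_of_tendsto (hlam i) ?_
  filter_upwards [hF (eventually_ge_atTop (N + i.natAbs))] with n hn
  exact (hN _ (by omega)).le

theorem svis_step (h : HalfCF a x y) {k : ℕ} {e : ℝ} {U V : ℕ → ℝ} (hk : Scale k e θ)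
    (hr : RefConf e θ U V)
    (hl : limsup (fun n => ENNReal.ofReal (lam a x y n)) atTop =
      ENNReal.ofReal (1 + 3 / √2 + √2 * θ)) {σ : ℤ} (hσ : σ = 1 ∨ σ = -1) :
    ∃ N : ℤ, ∀ m ≥ N, SVis k σ (fun i => a i.toNat) m →
      SVis k σ (fun i => a i.toNat) (m + σ * -(6 * k + 9)) := by
  by_contra! hc
  have hf : ∃ᶠ n : ℕ in atTop, SVis k σ (fun i => a i.toNat) n ∧
      ¬ SVis k σ (fun i => a i.toNat) (n + σ * -(6 * k + 9)) := by
    rw [frequently_atTop]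
    intro N
    obtain ⟨m, hm, h1, h2⟩ := hc N
    lift m to ℕ using by omega
    exact ⟨m, by omega, h1, h2⟩
  obtain ⟨F, hF, hFS⟩ := exists_ultrafilter_of_frequently hf
  have hθ : θ ≤ 0.0004 := by linarith [hk.hi, hk.le_small]
  obtain ⟨b, X, Y, -, hd, -, hA⟩ := h.exists_adm hθ hl F hF
  obtain ⟨f, g, hA'⟩ := hA.signed hσ
  have hd' : ∀ i : ℤ, ∀ᶠ n : ℕ in F, (fun i : ℤ => a i.toNat) (n + i) = b i := hd
  have h0 := (vis_limit_iff (k := k) (σ := σ) (a := fun i : ℤ => a i.toNat) hd' 0).2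
    (by simpa using hFS.mono fun _ hn => hn.1)
  have h1 := (vis_limit_iff (a := fun i : ℤ => a i.toNat) hd' _).1 (hA'.vis_left hk hr h0)
  obtain ⟨n, hn, hn'⟩ := (h1.and hFS).exists
  exact hn'.2 (by simpa using hn)

theorem exists_ultrafilter (hΛ : 0 < 1 + 3 / √2 + √2 * θ)
    (hl : limsup (fun n => ENNReal.ofReal (lam a x y n)) atTop =
      ENNReal.ofReal (1 + 3 / √2 + √2 * θ)) :
    ∃ F : Ultrafilter ℕ, ↑F ≤ (atTop : Filter ℕ) ∧
      Tendsto (fun n => lam a x y n) F (𝓝 (1 + 3 / √2 + √2 * θ)) := by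
  rw [← mapClusterPt_iff_ultrafilter, mapClusterPt_iff_frequently]
  intro s hs
  obtain ⟨l, r, ⟨hl1, hr1⟩, hs⟩ := mem_nhds_iff_exists_Ioo_subset.1 hs
  have h1 : ENNReal.ofReal l < limsup (fun n => ENNReal.ofReal (lam a x y n)) atTop := by
    rw [hl]; exact ENNReal.ofReal_lt_ofReal_iff'.2 ⟨hl1, hΛ⟩
  have h2 : limsup (fun n => ENNReal.ofReal (lam a x y n)) atTop < ENNReal.ofReal r := by
    rw [hl]; exact ENNReal.ofReal_lt_ofReal_iff'.2 ⟨hr1, hΛ.trans hr1⟩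
  refine ((frequently_lt_of_lt_limsup (by isBoundedDefault) h1).and_eventually
    (eventually_lt_of_limsup_lt h2)).mono fun n hn => hs ⟨?_, ?_⟩
  · exact (ENNReal.ofReal_lt_ofReal_iff'.1 hn.1).1
  · exact (ENNReal.ofReal_lt_ofReal_iff'.1 hn.2).1

end HalfCF

/-- The value of a reference configuration is not in the Lagrange spectrum. -/
theorem RefConf.notMem_lagrange {k : ℕ} {e θ : ℝ} {U V : ℕ → ℝ} (hr : RefConf e θ U V)
    (hk : Scale k e θ) : 1 + 3 / √2 + √2 * θ ∉ LagrangeSpectrum := by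
  rintro ⟨α, hα, hfin, hval⟩
  obtain ⟨c, a, x, y, h, hy, rfl⟩ := HalfCF.exists_of_irrational hα
  rw [h.lagrangeVal_eq hy] at hfin hval
  have hl := (ENNReal.ofReal_toReal hfin).symm
  rw [hval] at hl
  have hθ0 : 0 ≤ θ := by linarith [hk.lo, hk.pos]
  have hθ : θ ≤ 0.0004 := by linarith [hk.hi, hk.le_small]
  obtain ⟨F, hF, hlim⟩ := HalfCF.exists_ultrafilter (by linarith [three_lt_height hθ0]) hl
  obtain ⟨b, X, Y, hb, hd, hlam, hA⟩ := h.exists_adm hθ hl F hF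
  have h0 : bilam b X Y 0 = 1 + 3 / √2 + √2 * θ :=
    tendsto_nhds_unique (hlam 0) (by simpa using hlim)
  obtain ⟨σ, hσ, f, g, hA', h1, hH⟩ := hb.exists_junction hθ0 hA h0
  have hd' : ∀ i : ℤ, ∀ᶠ n : ℕ in F, (fun i : ℤ => a i.toNat) (n + i) = b i := hd
  have hv := (hA'.win hk hr h1 hH).vis
  refine hA'.false_of_vis hk hr hv ((vis_limit_iff (a := fun i : ℤ => a i.toNat) hd' _).2 ?_) hH
  have hv' := (vis_limit_iff (a := fun i : ℤ => a i.toNat) hd' _).1 hv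
  have hstep := h.svis_step hk hr hl hσ
  rcases hσ with rfl | rfl
  · convert eventually_add_of_descent (p := 6 * k + 9) (by omega) hF (by
      convert hstep using 6; ring) hv' using 3
    ring
  · convert eventually_sub_of_ascent (p := 6 * k + 9) (by omega) hF (by
      convert hstep using 6; ring) hv' using 3
    ring

end

/-! ### The sequences giving the points of the complement -/

theorem Int.not_dvd_of_between {p n x : ℤ} (hp : 0 < p) (h1 : p * n < x) (h2 : x < p * n + p) :
    ¬ p ∣ x := by
  rintro ⟨m, rfl⟩
  have := lt_of_mul_lt_mul_left h1 hp.le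
  have : m < n + 1 := lt_of_mul_lt_mul_left (by linarith) hp.le
  omega

/-- The positions of the digits `1` in the sequence obtained from a periodic sequence by replacing
its right end by a block of digits `2` of length `2 * k + 1`, a digit `1` and digits `2`. -/
def IsGammaOne (k : ℕ) (i : ℤ) : Prop :=
  (i ≤ 10 * k + 14 ∧ ((6 * k + 9 : ℤ) ∣ i ∨ (6 * k + 9 : ℤ) ∣ i - (2 * k + 2) ∨
    (6 * k + 9 : ℤ) ∣ i - (4 * k + 5))) ∨ i = 12 * k + 16

open Classical in
/-- The sequence of digits defined by `IsGammaOne`. -/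
noncomputable def gammaDigit (k : ℕ) (i : ℤ) : ℕ := if IsGammaOne k i then 1 else 2

theorem gammaDigit_eq_one {k : ℕ} {i : ℤ} : gammaDigit k i = 1 ↔ IsGammaOne k i := by
  unfold gammaDigit; split_ifs with h <;> simp [h]

theorem gammaDigit_eq_two {k : ℕ} {i : ℤ} : gammaDigit k i = 2 ↔ ¬ IsGammaOne k i := by
  unfold gammaDigit; split_ifs with h <;> simp [h]

theorem gammaDigit_dig (k : ℕ) (i : ℤ) : gammaDigit k i = 1 ∨ gammaDigit k i = 2 := by
  unfold gammaDigit; split_ifs <;> simp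

/-- The block structure of `gammaDigit`. -/
structure Gam (k : ℕ) (a : ℤ → ℕ) : Prop where
  blkA : ∀ n ≤ 1, Blk a ((6 * k + 9) * n) (2 * k + 1)
  blkB : ∀ n ≤ 1, Blk a ((6 * k + 9) * n + (2 * k + 2)) (2 * k + 2)
  blkC : ∀ n ≤ 0, Blk a ((6 * k + 9) * n + (4 * k + 5)) (2 * k + 3)
  blkD : Blk a (10 * k + 14) (2 * k + 1)
  tail : ∀ i : ℤ, 12 * k + 16 < i → a i = 2
  one : ∀ j, a j = 1 → (∃ n ≤ 1, j = (6 * k + 9) * n) ∨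
    (∃ n ≤ 1, j = (6 * k + 9) * n + (2 * k + 2)) ∨
    (∃ n ≤ 0, j = (6 * k + 9) * n + (4 * k + 5)) ∨ j = 10 * k + 14 ∨ j = 12 * k + 16
  per : ∀ i : ℤ, i ≤ 10 * k + 14 → a (i - (6 * k + 9)) = a i

theorem not_isGammaOne {k : ℕ} {n t : ℤ} (ht : t ≠ 12 * k + 16) (h1 : (6 * k + 9) * n < t)
    (h2 : t < (6 * k + 9) * n + (6 * k + 9)) (h3 : t ≠ (6 * k + 9) * n + (2 * k + 2))
    (h4 : t ≠ (6 * k + 9) * n + (4 * k + 5)) : ¬ IsGammaOne k t := by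
  have hp : (0 : ℤ) < 6 * k + 9 := by omega
  rintro (⟨-, h | h | h⟩ | h)
  · exact Int.not_dvd_of_between hp h1 h2 h
  · rcases lt_or_gt_of_ne h3 with h3 | h3
    · refine Int.not_dvd_of_between (n := n - 1) hp ?_ ?_ h <;> rw [mul_sub] <;> omega
    · exact Int.not_dvd_of_between (n := n) hp (by omega) (by omega) h
  · rcases lt_or_gt_of_ne h4 with h4 | h4
    · refine Int.not_dvd_of_between (n := n - 1) hp ?_ ?_ h <;> rw [mul_sub] <;> omega
    · exact Int.not_dvd_of_between (n := n) hp (by omega) (by omega) h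
  · exact ht h

theorem gam_gammaDigit (k : ℕ) : Gam k (gammaDigit k) := by
  have hp : (0 : ℤ) < 6 * k + 9 := by omega
  have le1 : ∀ n : ℤ, n ≤ 1 → (6 * k + 9) * n ≤ 6 * k + 9 := fun n hn => by nlinarith
  have le0 : ∀ n : ℤ, n ≤ 0 → (6 * k + 9) * n ≤ 0 := fun n hn => by nlinarith
  constructor
  · intro n hn
    have := le1 n hn
    refine ⟨gammaDigit_eq_one.2 (.inl ⟨by omega, .inl (dvd_mul_right _ _)⟩), fun t h1 h2 =>
      gammaDigit_eq_two.2 ?_, gammaDigit_eq_one.2 (.inl ⟨by push_cast; omega, .inr (.inl ?_)⟩)⟩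
    · push_cast at h2
      exact not_isGammaOne (n := n) (by omega) h1 (by omega) (by omega) (by omega)
    · refine ⟨n, ?_⟩; push_cast; ring
  · intro n hn
    have := le1 n hn
    refine ⟨gammaDigit_eq_one.2 (.inl ⟨by omega, .inr (.inl ?_)⟩), fun t h1 h2 =>
      gammaDigit_eq_two.2 ?_, gammaDigit_eq_one.2 (.inl ⟨by push_cast; omega, .inr (.inr ?_)⟩)⟩
    · refine ⟨n, ?_⟩; ring
    · push_cast at h2
      exact not_isGammaOne (n := n) (by omega) (by omega) (by omega) (by omega) (by omega)
    · refine ⟨n, ?_⟩; push_cast; ring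
  · intro n hn
    have := le0 n hn
    refine ⟨gammaDigit_eq_one.2 (.inl ⟨by omega, .inr (.inr ?_)⟩), fun t h1 h2 =>
      gammaDigit_eq_two.2 ?_, gammaDigit_eq_one.2 (.inl ⟨by push_cast; omega, .inl ?_⟩)⟩
    · refine ⟨n, ?_⟩; ring
    · push_cast at h2
      exact not_isGammaOne (n := n) (by omega) (by omega) (by omega) (by omega) (by omega)
    · refine ⟨n + 1, ?_⟩; push_cast; ring
  · refine ⟨gammaDigit_eq_one.2 (.inl ⟨le_rfl, .inr (.inr ⟨1, by ring⟩)⟩), fun t h1 h2 =>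
      gammaDigit_eq_two.2 ?_, gammaDigit_eq_one.2 (.inr (by push_cast; ring))⟩
    push_cast at h2
    rintro (⟨h, -⟩ | h) <;> omega
  · intro i hi
    refine gammaDigit_eq_two.2 ?_
    rintro (⟨h, -⟩ | h) <;> omega
  · intro j hj
    rcases gammaDigit_eq_one.1 hj with ⟨h, ⟨n, hn⟩ | ⟨n, hn⟩ | ⟨n, hn⟩⟩ | h
    · exact .inl ⟨n, by by_contra! hc; nlinarith, hn⟩
    · exact .inr (.inl ⟨n, by by_contra! hc; nlinarith, by linarith⟩)
    · rcases le_or_gt n 0 with h0 | h0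
      · exact .inr (.inr (.inl ⟨n, h0, by linarith⟩))
      · have : n = 1 := by
          have : n ≤ 1 := by by_contra! hc; nlinarith
          omega
        subst this
        exact .inr (.inr (.inr (.inl (by linarith))))
    · exact .inr (.inr (.inr (.inr h)))
  · intro i hi
    have d : ∀ c : ℤ, (6 * k + 9 : ℤ) ∣ i - (6 * k + 9) - c ↔ (6 * k + 9 : ℤ) ∣ i - c := by
      intro c
      rw [sub_right_comm]; exact dvd_sub_self_right
    have h0 := d 0
    simp only [sub_zero] at h0
    have : IsGammaOne k (i - (6 * k + 9)) ↔ IsGammaOne k i := by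
      unfold IsGammaOne
      rw [d, d, h0]
      have e1 : i - (6 * k + 9) ≤ 10 * k + 14 := by omega
      have e2 : i - (6 * k + 9) ≠ 12 * k + 16 := by omega
      have e3 : i ≠ 12 * k + 16 := by omega
      simp [hi, e1, e2, e3]
    rcases gammaDigit_dig k i with h | h
    · rw [h, gammaDigit_eq_one, this, ← gammaDigit_eq_one, h]
    · rw [h, gammaDigit_eq_two, this, ← gammaDigit_eq_two, h]

namespace Gam

variable {k : ℕ} {a : ℤ → ℕ} {f g : ℤ → ℝ} {e : ℝ}

theorem exists_left (h : Gam k a) {j : ℤ} (hj : a j = 1) :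
    ∃ i m, 2 * k + 1 ≤ m ∧ Blk a i m ∧ i + m = j - 1 := by
  rcases h.one j hj with ⟨n, hn, rfl⟩ | ⟨n, hn, rfl⟩ | ⟨n, hn, rfl⟩ | rfl | rfl
  · exact ⟨_, _, by omega, h.blkC (n - 1) (by omega), by push_cast; ring⟩
  · exact ⟨_, _, by omega, h.blkA n hn, by push_cast; ring⟩
  · exact ⟨_, _, by omega, h.blkB n (by omega), by push_cast; ring⟩
  · exact ⟨_, _, by omega, h.blkB 1 le_rfl, by push_cast; ring⟩
  · exact ⟨_, _, by omega, h.blkD, by push_cast; ring⟩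

theorem exists_right (h : Gam k a) {j : ℤ} (hj : a j = 1) :
    (∃ m, 2 * k + 1 ≤ m ∧ Blk a j m) ∨ j = 12 * k + 16 := by
  rcases h.one j hj with ⟨n, hn, rfl⟩ | ⟨n, hn, rfl⟩ | ⟨n, hn, rfl⟩ | rfl | rfl
  · exact .inl ⟨_, by omega, h.blkA n hn⟩
  · exact .inl ⟨_, by omega, h.blkB n hn⟩
  · exact .inl ⟨_, by omega, h.blkC n hn⟩
  · exact .inl ⟨_, by omega, h.blkD⟩
  · exact .inr rfl

theorem two_right (h : Gam k a) {j : ℤ} (hj : a j = 1) {t : ℤ} (h1 : j < t)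
    (h2 : t ≤ j + (2 * k + 1)) : a t = 2 := by
  rcases h.exists_right hj with ⟨m, hm, hb⟩ | rfl
  · exact hb.2.1 t h1 (by omega)
  · exact h.tail t h1

theorem nice (h : Gam k a) (hk : 1 ≤ k) (j : ℤ) (hj : a j = 1) : a (j + 2) = 2 :=
  h.two_right hj (by omega) (by omega)

theorem right_zero (h : Gam k a) (hs : Sys a f g) {j : ℤ} (hj : 12 * k + 16 < j) : f j = 0 := by
  have h2 : ∀ n : ℕ, a (j + n) = 2 := fun n => h.tail _ (by omega)
  have ht : Tail (fun _ => 2) (fun _ => (0 : ℝ)) := by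
    constructor <;> norm_num
  simpa using (hs.tail j).unique ht h2

theorem pow_le (he : qq ^ (2 * k + 1) = e) {m : ℕ} (hm : 2 * k + 1 ≤ m) : |(-qq) ^ m| ≤ e := by
  rw [abs_pow, abs_neg, abs_of_pos qq_pos, ← he]
  exact pow_le_pow_of_le_one qq_pos.le qq_lt_one.le hm

theorem small (h : Gam k a) (hs : Sys a f g) (he : qq ^ (2 * k + 1) = e)
    (he' : e ≤ 0.0000001) {j : ℤ}
    (hj : a j = 1) : |f (j + 1)| ≤ 0.0000001 ∧ |g (j - 1)| ≤ 0.0000001 := by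
  have key : ∀ (m : ℕ) (s : ℝ), 2 * k + 1 ≤ m → -0.0183 ≤ s → s ≤ 0.1062 →
      |(-qq) ^ m * gm s| ≤ 0.0000001 := by
    intro m s hm h1 h2
    have h3 := gm_range h1 h2
    rw [abs_mul, abs_of_pos (a := gm s) (by linarith)]
    have := pow_le he hm
    have := abs_nonneg ((-qq) ^ m)
    nlinarith
  constructor
  · rcases h.exists_right hj with ⟨m, hm, hb⟩ | rfl
    · rw [(hs.blk_eq hb).1]
      exact key _ _ hm (hs.f_lo _) (hs.f_hi _)
    · rw [h.right_zero hs (by omega)]; norm_num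
  · obtain ⟨i, m, hm, hb, hi⟩ := h.exists_left hj
    rw [← hi, (hs.blk_eq hb).2]
    exact key _ _ hm (hs.g_lo _) (hs.g_hi _)

end Gam

theorem Sys.right_of_blk {a : ℤ → ℕ} {f g : ℤ → ℝ} (h : Sys a f g) {i j l : ℤ} {m : ℕ} {s : ℝ}
    (hb : Blk a i m) (hs : (-qq) ^ m = s) (hl : l = i + 1) (hj : j = i + m + 2) :
    f l = s * gm (f j) := by
  rw [hj, hl, (h.blk_eq hb).1, hs]

theorem Sys.left_of_blk {a : ℤ → ℕ} {f g : ℤ → ℝ} (h : Sys a f g) {i j l : ℤ} {m : ℕ} {s : ℝ}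
    (hb : Blk a i m) (hs : (-qq) ^ m = s) (hl : l = i + m) (hj : j = i - 1) :
    g l = s * gm (g j) := by
  rw [hj, hl, (h.blk_eq hb).2, hs]

namespace Gam

variable {k : ℕ} {a : ℤ → ℕ} {f g : ℤ → ℝ} {e : ℝ}

theorem neg_pow_A (he : qq ^ (2 * k + 1) = e) : (-qq) ^ (2 * k + 1) = -e := by
  rw [Odd.neg_pow ⟨k, rfl⟩, he]

theorem neg_pow_B (he : qq ^ (2 * k + 1) = e) : (-qq) ^ (2 * k + 2) = e * qq := by
  rw [show 2 * k + 2 = (2 * k + 1) + 1 from rfl, pow_succ, neg_pow_A he]; ring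

theorem neg_pow_C (he : qq ^ (2 * k + 1) = e) : (-qq) ^ (2 * k + 3) = -(e * qq ^ 2) := by
  rw [show 2 * k + 3 = (2 * k + 2) + 1 from rfl, pow_succ, neg_pow_B he]; ring

theorem refConf (h : Gam k a) (hs : Sys a f g) (he : qq ^ (2 * k + 1) = e) (he' : e ≤ 0.0000001) :
    ∃ u v, RefConf e (HH (f 1) (g (-1))) u v := by
  have hA := neg_pow_A he
  have hB := neg_pow_B he
  have hC := neg_pow_C he
  have he0 : 0 < e := he ▸ pow_pos qq_pos _
  refine ⟨fun n => f (match n with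
      | 1 => 2 * k + 3 | 2 => 4 * k + 6 | 3 => 6 * k + 10 | 4 => 8 * k + 12 | _ => 10 * k + 15),
    fun n => g (match n with
      | 1 => -2 * k - 5 | 2 => -4 * k - 8 | 3 => -6 * k - 10 | 4 => -8 * k - 14
      | _ => -10 * k - 17), ?_⟩
  constructor
  · change HH (-e * gm (f (2 * k + 3))) (-(e * qq ^ 2) * gm (g (-2 * k - 5))) = _
    congr 1
    · exact (hs.right_of_blk (h.blkA 0 (by omega)) hA (by ring) (by push_cast; ring)).symm
    · exact (hs.left_of_blk (h.blkC (-1) (by omega)) hC (by push_cast; ring) (by ring)).symm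
  · change f (2 * k + 3) = e * qq * gm (f (4 * k + 6))
    exact hs.right_of_blk (h.blkB 0 (by omega)) hB (by ring) (by push_cast; ring)
  · change f (4 * k + 6) = -(e * qq ^ 2) * gm (f (6 * k + 10))
    exact hs.right_of_blk (h.blkC 0 (by omega)) hC (by ring) (by push_cast; ring)
  · change f (6 * k + 10) = -e * gm (f (8 * k + 12))
    exact hs.right_of_blk (h.blkA 1 (by omega)) hA (by ring) (by push_cast; ring)
  · change f (8 * k + 12) = e * qq * gm (f (10 * k + 15))
    exact hs.right_of_blk (h.blkB 1 (by omega)) hB (by ring) (by push_cast; ring)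
  · change -0.0000001 ≤ f (10 * k + 15) ∧ f (10 * k + 15) ≤ -0.09 * e
    rw [hs.right_of_blk (j := 12 * k + 17) h.blkD hA (by ring) (by push_cast; ring),
      h.right_zero hs (by omega)]
    have := gm_zero_bounds
    constructor <;> nlinarith
  · change g (-2 * k - 5) = e * qq * gm (g (-4 * k - 8))
    exact hs.left_of_blk (h.blkB (-1) (by omega)) hB (by push_cast; ring) (by ring)
  · change g (-4 * k - 8) = -e * gm (g (-6 * k - 10))
    exact hs.left_of_blk (h.blkA (-1) (by omega)) hA (by push_cast; ring) (by ring)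
  · change g (-6 * k - 10) = -(e * qq ^ 2) * gm (g (-8 * k - 14))
    exact hs.left_of_blk (h.blkC (-2) (by omega)) hC (by push_cast; ring) (by ring)
  · change g (-8 * k - 14) = e * qq * gm (g (-10 * k - 17))
    exact hs.left_of_blk (h.blkB (-2) (by omega)) hB (by push_cast; ring) (by ring)
  · change -0.0000001 ≤ g (-10 * k - 17) ∧ g (-10 * k - 17) ≤ 0
    rw [hs.left_of_blk (j := -12 * k - 19) (h.blkA (-2) (by omega)) hA (by push_cast; ring)
      (by ring)]
    have := gm_range (hs.g_lo (-12 * k - 19)) (hs.g_hi _)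
    constructor <;> nlinarith

end Gam

/-! ### The points of the complement belong to the Markov spectrum -/

theorem HH_anti {u v u' v' : ℝ} (hu : -0.0183 ≤ u) (hv : -0.0183 ≤ v) (huu : u ≤ u')
    (hvv : v ≤ v') : HH u' v' ≤ HH u v := by
  have hq := qq_lower
  have h1 : u / (qq + u) ≤ u' / (qq + u') := by
    rw [div_le_div_iff₀ (by linarith) (by linarith)]
    nlinarith
  have h2 : v / (1 + v) ≤ v' / (1 + v') := by
    rw [div_le_div_iff₀ (by linarith) (by linarith)]
    nlinarith
  unfold HH
  rw [mul_div_assoc, mul_div_assoc]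
  linarith

theorem HH_le_of_nonneg_right {e : ℝ} (he : 0 < e) (he' : e ≤ 0.0000001) {u v : ℝ}
    (hu : -0.0938372 * e ≤ u) (hv : 0 ≤ v) : HH u v ≤ 1.0965 * e := by
  refine (HH_anti (by nlinarith) (by norm_num) hu hv).trans ?_
  have hq := qq_lower
  unfold HH
  rw [zero_div, sub_zero, div_le_iff₀ (by linarith)]
  nlinarith

theorem HH_le_of_ge_small {e : ℝ} (he : 0 < e) (he' : e ≤ 0.0000001) {u v : ℝ}
    (hu : -0.0028 * e ≤ u) (hv : -0.0938372 * e ≤ v) : HH u v ≤ 1.0965 * e := by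
  refine (HH_anti (by nlinarith) (by nlinarith) hu hv).trans ?_
  have hq := qq_lower
  have h1 : -2 * (-0.0028 * e) / (qq + -0.0028 * e) ≤ 0.1 * e := by
    rw [div_le_iff₀ (by linarith)]; nlinarith
  have h2 : -0.1 * e ≤ -0.0938372 * e / (1 + -0.0938372 * e) := by
    rw [le_div_iff₀ (by linarith)]; nlinarith
  unfold HH
  linarith

theorem HH_le_of_or_nonneg {e : ℝ} (he : 0 < e) (he' : e ≤ 0.0000001) {u v : ℝ}
    (hu : -0.0938372 * e ≤ u) (hv : -0.0938372 * e ≤ v) (h : 0 ≤ u ∨ 0 ≤ v) :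
    HH u v ≤ 1.0965 * e ∧ HH v u ≤ 1.0965 * e := by
  rcases h with h | h
  · exact ⟨HH_le_of_ge_small he he' (by linarith) hv, HH_le_of_nonneg_right he he' hv h⟩
  · exact ⟨HH_le_of_nonneg_right he he' hu h, HH_le_of_ge_small he he' (by linarith) hu⟩

theorem HH_bounds {e : ℝ} (he : 0 < e) (he' : e ≤ 0.0000001) {u v : ℝ}
    (hu : -0.0938372 * e ≤ u) (hu' : u ≤ -0.0938358 * e)
    (hv : -0.0027624 * e ≤ v) (hv' : v ≤ -0.0027622 * e) :
    1.0965 * e ≤ HH u v ∧ HH u v ≤ 1.0967 * e := by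
  have hq := qq_lower
  have hq' := qq_upper
  constructor
  · refine le_trans ?_ (HH_anti (by linarith) (by linarith) hu' hv')
    have h1 : 1.09382 * e ≤ -2 * (-0.0938358 * e) / (qq + -0.0938358 * e) := by
      rw [le_div_iff₀ (by linarith)]; nlinarith
    have := div_one_add_le (v := -0.0027622 * e) (by linarith)
    unfold HH
    linarith
  · refine (HH_anti (by linarith) (by linarith) hu hv).trans ?_
    have h1 : -2 * (-0.0938372 * e) / (qq + -0.0938372 * e) ≤ 1.0939 * e := by
      rw [div_le_iff₀ (by linarith)]; nlinarith
    have h2 : -0.00277 * e ≤ -0.0027624 * e / (1 + -0.0027624 * e) := by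
      rw [le_div_iff₀ (by linarith)]; nlinarith
    unfold HH
    linarith

namespace Gam

variable {k : ℕ} {a : ℤ → ℕ} {f g : ℤ → ℝ} {e : ℝ}

theorem boundsA (h : Gam k a) (hs : Sys a f g) (he : qq ^ (2 * k + 1) = e) (he' : e ≤ 0.0000001)
    {i : ℤ} (hb : Blk a i (2 * k + 1)) :
    (-0.0938372 * e ≤ f (i + 1) ∧ f (i + 1) ≤ -0.0938358 * e) ∧
      -0.0938372 * e ≤ g (i + 2 * k + 1) ∧ g (i + 2 * k + 1) ≤ -0.0938358 * e := by
  have he0 : 0 < e := he ▸ pow_pos qq_pos _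
  have h1 := (h.small hs he he' hb.2.2).1
  have h2 := (h.small hs he he' hb.1).2
  rw [abs_le] at h1 h2
  rw [hs.right_of_blk hb (neg_pow_A he) rfl (j := i + (2 * k + 1 : ℕ) + 1 + 1) (by ring),
    hs.left_of_blk hb (neg_pow_A he) (by push_cast; ring) rfl]
  exact ⟨blockA_bounds he0 (by linarith) h1.2, blockA_bounds he0 (by linarith) h2.2⟩

theorem boundsB (h : Gam k a) (hs : Sys a f g) (he : qq ^ (2 * k + 1) = e) (he' : e ≤ 0.0000001)
    {i : ℤ} (hb : Blk a i (2 * k + 2)) :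
    (0.016099 * e ≤ f (i + 1) ∧ f (i + 1) ≤ 0.016101 * e) ∧
      0.016099 * e ≤ g (i + 2 * k + 2) ∧ g (i + 2 * k + 2) ≤ 0.016101 * e := by
  have he0 : 0 < e := he ▸ pow_pos qq_pos _
  have h1 := (h.small hs he he' hb.2.2).1
  have h2 := (h.small hs he he' hb.1).2
  rw [abs_le] at h1 h2
  rw [hs.right_of_blk hb (neg_pow_B he) rfl (j := i + (2 * k + 2 : ℕ) + 1 + 1) (by ring),
    hs.left_of_blk hb (neg_pow_B he) (by push_cast; ring) rfl]
  exact ⟨blockB_bounds he0 (by linarith) h1.2, blockB_bounds he0 (by linarith) h2.2⟩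

theorem boundsC (h : Gam k a) (hs : Sys a f g) (he : qq ^ (2 * k + 1) = e) (he' : e ≤ 0.0000001)
    {i : ℤ} (hb : Blk a i (2 * k + 3)) :
    (-0.0027624 * e ≤ f (i + 1) ∧ f (i + 1) ≤ -0.0027622 * e) ∧
      -0.0027624 * e ≤ g (i + 2 * k + 3) ∧ g (i + 2 * k + 3) ≤ -0.0027622 * e := by
  have he0 : 0 < e := he ▸ pow_pos qq_pos _
  have h1 := (h.small hs he he' hb.2.2).1
  have h2 := (h.small hs he he' hb.1).2
  rw [abs_le] at h1 h2
  rw [hs.right_of_blk hb (neg_pow_C he) rfl (j := i + (2 * k + 3 : ℕ) + 1 + 1) (by ring),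
    hs.left_of_blk hb (neg_pow_C he) (by push_cast; ring) rfl]
  exact ⟨blockC_bounds he0 (by linarith) h1.2, blockC_bounds he0 (by linarith) h2.2⟩

theorem scale (h : Gam k a) (hs : Sys a f g) (hk : 1 ≤ k) (he : qq ^ (2 * k + 1) = e)
    (he' : e ≤ 0.0000001) : Scale k e (HH (f 1) (g (-1))) := by
  have he0 : 0 < e := he ▸ pow_pos qq_pos _
  have hA := (h.boundsA hs he he' (h.blkA 0 (by omega))).1
  have hC := (h.boundsC hs he he' (h.blkC (-1) (by omega))).2
  rw [show (6 * k + 9 : ℤ) * 0 + 1 = 1 by ring] at hA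
  rw [show (6 * k + 9 : ℤ) * -1 + (4 * k + 5) + 2 * k + 3 = -1 by ring] at hC
  obtain ⟨h1, h2⟩ := HH_bounds he0 he' hA.1 hA.2 hC.1 hC.2
  exact ⟨hk, he, he', h1, h2⟩

/-- The left tails at the periodic junctions. -/
theorem left_eq (h : Gam k a) (hs : Sys a f g) {n : ℤ} (hn : n ≤ 1) :
    g ((6 * k + 9) * n - 1) = g (-1) := by
  have hper : ∀ t : ℕ, ∀ i : ℤ, i ≤ 10 * k + 14 → a (i - (6 * k + 9) * t) = a i := by
    intro t
    induction t with
    | zero => intro i _; simp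
    | succ t ih =>
      intro i hi
      rw [← ih i hi, ← h.per (i - (6 * k + 9) * t) (by nlinarith)]
      congr 1; push_cast; ring
  obtain ⟨t, ht⟩ : ∃ t : ℕ, n = 1 - t := ⟨(1 - n).toNat, by omega⟩
  have key : ∀ t : ℕ, g ((6 * k + 9) - 1 - (6 * k + 9) * t) = g ((6 * k + 9) - 1) := by
    intro t
    have := (hs.tail_left ((6 * k + 9) - 1 - (6 * k + 9) * t)).unique
      (hs.tail_left ((6 * k + 9) - 1)) fun m => by
        rw [← hper t ((6 * k + 9) - 1 - m) (by omega)]; congr 1; ring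
    simpa using this
  have h1 := key 1
  rw [show (6 * k + 9 : ℤ) - 1 - (6 * k + 9) * (1 : ℕ) = -1 by push_cast; ring] at h1
  rw [h1, ← key t, ht]
  congr 1; ring

/-- A composition of the blocks `A` and `B` is decreasing. -/
theorem AB_anti {e r s : ℝ} (he : 0 < e) (he' : e ≤ 0.0000001) (hr : -0.0000001 ≤ r) (hrs : r ≤ s)
    (hs : s ≤ 0.0000001) : -e * gm (e * qq * gm s) ≤ -e * gm (e * qq * gm r) := by
  have hq := qq_pos
  have h1 := gm_anti (by linarith) hrs
  have h2 := gm_ge_of_le (by linarith) hs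
  have h3 : e * qq * gm s ≤ e * qq * gm r := mul_le_mul_of_nonneg_left h1 (by positivity)
  have h4 : 0 ≤ e * qq * gm s := mul_nonneg (by positivity) (by linarith)
  have h5 := gm_anti (by linarith) h3
  nlinarith

theorem right_AB (h : Gam k a) (hs : Sys a f g) (he : qq ^ (2 * k + 1) = e) {n : ℤ} (hn : n ≤ 1) :
    f ((6 * k + 9) * n + 1) = -e * gm (e * qq * gm (f ((6 * k + 9) * n + (4 * k + 5) + 1))) := by
  rw [hs.right_of_blk (j := (6 * k + 9) * n + (2 * k + 2) + 1) (h.blkA n hn) (neg_pow_A he) rfl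
    (by push_cast; ring), hs.right_of_blk (j := (6 * k + 9) * n + (4 * k + 5) + 1)
    (h.blkB n hn) (neg_pow_B he) rfl (by push_cast; ring)]

/-- The right tails at the periodic junctions. -/
theorem right_ge (h : Gam k a) (hs : Sys a f g) (he : qq ^ (2 * k + 1) = e) (he' : e ≤ 0.0000001)
    {n : ℤ} (hn : n ≤ 1) : f 1 ≤ f ((6 * k + 9) * n + 1) := by
  have he0 : 0 < e := he ▸ pow_pos qq_pos _
  have hD := (h.boundsA hs he he' h.blkD).1
  have hC := fun (n : ℤ) (hn : n ≤ 0) =>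
    (h.boundsC hs he he' (h.blkC n hn)).1
  have e1 : (6 * k + 9 : ℤ) * 1 + (4 * k + 5) + 1 = 10 * k + 14 + 1 := by ring
  have key : ∀ n : ℤ, n ≤ 0 → f ((6 * k + 9) * n + 1) ≤ f ((6 * k + 9) * 1 + 1) := by
    intro n hn
    rw [h.right_AB hs he (hn.trans (by norm_num)), h.right_AB hs he le_rfl, e1]
    have := hC n hn
    exact AB_anti he0 he' (by linarith) (by linarith) (by linarith)
  have e0 : f 1 = f ((6 * k + 9) * 0 + 1) := by congr 1
  rcases eq_or_lt_of_le hn with rfl | hn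
  · rw [e0]; exact key 0 le_rfl
  rcases eq_or_lt_of_le (show n ≤ 0 by omega) with rfl | hn'
  · exact e0.le
  rw [e0, h.right_AB hs he zero_le_one, h.right_AB hs he hn.le]
  have b1 := hC n hn'.le
  have b2 := hC 0 le_rfl
  refine AB_anti he0 he' (by linarith) ?_ (by linarith)
  rw [hs.right_of_blk (j := (6 * k + 9) * (n + 1) + 1) (h.blkC n hn'.le) (neg_pow_C he) rfl
    (by push_cast; ring), hs.right_of_blk (j := (6 * k + 9) * 1 + 1) (h.blkC 0 le_rfl)
    (neg_pow_C he) rfl (by push_cast; ring)]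
  have := gm_anti (by linarith [hs.f_lo ((6 * k + 9) * (n + 1) + 1)]) (key (n + 1) (by omega))
  have : 0 ≤ e * qq ^ 2 := by positivity
  nlinarith

theorem HH_le (h : Gam k a) (hs : Sys a f g) (hk : 1 ≤ k) (he : qq ^ (2 * k + 1) = e)
    (he' : e ≤ 0.0000001) {j : ℤ} (hj : a j = 1) :
    HH (f (j + 1)) (g (j - 1)) ≤ HH (f 1) (g (-1)) ∧
      HH (g (j - 1)) (f (j + 1)) ≤ HH (f 1) (g (-1)) := by
  have he0 : 0 < e := he ▸ pow_pos qq_pos _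
  have hθ := (h.scale hs hk he he').lo
  have reduce : (-0.0938372 * e ≤ f (j + 1) ∧ -0.0938372 * e ≤ g (j - 1)) ∧
      (0 ≤ f (j + 1) ∨ 0 ≤ g (j - 1)) → HH (f (j + 1)) (g (j - 1)) ≤ HH (f 1) (g (-1)) ∧
      HH (g (j - 1)) (f (j + 1)) ≤ HH (f 1) (g (-1)) := by
    rintro ⟨⟨h1, h2⟩, h3⟩
    obtain ⟨h4, h5⟩ := HH_le_of_or_nonneg he0 he' h1 h2 h3
    exact ⟨h4.trans hθ, h5.trans hθ⟩
  rcases h.one j hj with ⟨n, hn, rfl⟩ | ⟨n, hn, rfl⟩ | ⟨n, hn, rfl⟩ | rfl | rfl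
  · rw [h.left_eq hs hn]
    have hA := (h.boundsA hs he he' (h.blkA n hn)).1
    have hC := (h.boundsC hs he he' (h.blkC (-1) (by omega))).2
    rw [show (6 * k + 9 : ℤ) * -1 + (4 * k + 5) + 2 * k + 3 = -1 by ring] at hC
    exact ⟨HH_anti (hs.f_lo _) (hs.g_lo _) (h.right_ge hs he he' hn) le_rfl,
      (HH_le_of_ge_small he0 he' (by linarith) hA.1).trans hθ⟩
  · refine reduce ?_
    have h1 := (h.boundsB hs he he' (h.blkB n hn)).1
    have h2 := (h.boundsA hs he he' (h.blkA n hn)).2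
    rw [show (6 * k + 9 : ℤ) * n + (2 * k + 2) - 1 = (6 * k + 9) * n + 2 * k + 1 by ring]
    exact ⟨⟨by linarith, h2.1⟩, .inl (by linarith)⟩
  · refine reduce ?_
    have h1 := (h.boundsC hs he he' (h.blkC n hn)).1
    have h2 := (h.boundsB hs he he' (h.blkB n (by omega))).2
    rw [show (6 * k + 9 : ℤ) * n + (4 * k + 5) - 1 = (6 * k + 9) * n + (2 * k + 2) + 2 * k + 2 by
      ring]
    exact ⟨⟨by linarith, by linarith⟩, .inr (by linarith)⟩
  · refine reduce ?_
    have h1 := (h.boundsA hs he he' h.blkD).1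
    have h2 := (h.boundsB hs he he' (h.blkB 1 le_rfl)).2
    rw [show (10 * k + 14 : ℤ) - 1 = (6 * k + 9) * 1 + (2 * k + 2) + 2 * k + 2 by ring]
    exact ⟨⟨by linarith, by linarith⟩, .inr (by linarith)⟩
  · refine reduce ?_
    have h2 := (h.boundsA hs he he' h.blkD).2
    rw [show (12 * k + 16 : ℤ) - 1 = 10 * k + 14 + 2 * k + 1 by ring,
      h.right_zero hs (by omega)]
    exact ⟨⟨by linarith, h2.1⟩, .inl le_rfl⟩

end Gam

theorem BiCF.bilam_le_of_junctions {a : ℤ → ℕ} {x y : ℤ → ℝ} (h : BiCF a x y)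
    (hd : ∀ i, a i = 1 ∨ a i = 2) {θ : ℝ} (hθ0 : 0 ≤ θ)
    (hj : ∀ j, a j = 1 → HH (phi (x (j + 1))) (phi (y (j - 1))) ≤ θ ∧
      HH (phi (y (j - 1))) (phi (x (j + 1))) ≤ θ) (i : ℤ) :
    bilam a x y i ≤ 1 + 3 / √2 + √2 * θ := by
  have h3 := three_lt_height hθ0
  rcases hd i with c0 | c0
  · linarith [h.bilam_lt_of_one c0]
  rcases hd (i - 1) with c1 | c1
  · have := h.bilam_right c1
    rw [sub_add_cancel] at this
    rw [this]
    gcongr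
    have := (hj _ c1).1
    rwa [sub_add_cancel] at this
  rcases hd (i + 1) with c2 | c2
  · have := h.bilam_left c2
    rw [add_sub_cancel_right] at this
    rw [this]
    gcongr
    have := (hj _ c2).2
    rwa [add_sub_cancel_right] at this
  linarith [h.bilam_lt_of_two c0 c1 c2]

/-- The points of the complement of the Lagrange spectrum in the Markov spectrum. -/
theorem exists_scale_mem_diff {k : ℕ} (hk : 1 ≤ k) (he : qq ^ (2 * k + 1) ≤ 0.0000001) :
    ∃ θ, Scale k (qq ^ (2 * k + 1)) θ ∧
      1 + 3 / √2 + √2 * θ ∈ MarkovSpectrum \ LagrangeSpectrum := by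
  have hG := gam_gammaDigit k
  have hd := gammaDigit_dig k
  obtain ⟨x, y, h⟩ := BiCF.exists (a := gammaDigit k) fun i => by rcases hd i with h | h <;> omega
  have hs := h.sys hd fun i h1 _ => hG.nice hk i h1
  have hsc := hG.scale hs hk rfl he
  obtain ⟨u, v, hr⟩ := hG.refConf hs rfl he
  refine ⟨_, hsc, ?_, hr.notMem_lagrange hsc⟩
  have h0 : gammaDigit k 0 = 1 := by simpa using (hG.blkA 0 (by omega)).1
  have hle := h.bilam_le_of_junctions hd (by linarith [hsc.lo, hsc.pos])
    fun j hj => hG.HH_le hs hk rfl he hj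
  have := h.bilam_right h0
  rw [zero_add, zero_sub] at this
  refine (h.shift 1).mem_markov (fun i => ?_) ?_
  · rw [BiCF.bilam_shift]; exact hle _
  · rw [BiCF.bilam_shift, zero_add]; exact this

section

open Filter Topology

/-! ### The accumulation point belongs to the Lagrange spectrum -/

open Classical in
/-- The digit `1` at the squares and `2` elsewhere. -/
noncomputable def squareDigit (n : ℕ) : ℕ := if IsSquare n then 1 else 2

theorem squareDigit_eq_one {n : ℕ} : squareDigit n = 1 ↔ IsSquare n := by
  unfold squareDigit; split_ifs with h <;> simp [h]

theorem squareDigit_dig (n : ℕ) : squareDigit n = 1 ∨ squareDigit n = 2 := by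
  unfold squareDigit; split_ifs <;> simp

/-- Squares are sparse. -/
theorem Nat.le_of_isSquare_of_lt {m n d : ℕ} (hm : IsSquare m) (hn : IsSquare n) (h : m < n)
    (hd : n ≤ m + d) : m ≤ d * d := by
  obtain ⟨s, rfl⟩ := hm
  obtain ⟨t, rfl⟩ := hn
  have : s < t := by by_contra! hc; nlinarith
  have : s ≤ d := by nlinarith
  exact Nat.mul_self_le_mul_self this

theorem eq_of_squareDigit_limit {b : ℤ → ℕ} {F : Ultrafilter ℕ} (hF : ↑F ≤ (atTop : Filter ℕ))
    (hb : ∀ i : ℤ, ∀ᶠ n : ℕ in F, squareDigit (n + i).toNat = b i) {i j : ℤ} (hi : b i = 1)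
    (hj : b j = 1) : i = j := by
  by_contra hne
  wlog hij : i < j generalizing i j
  · exact this hj hi (Ne.symm hne) (by omega)
  have hl : ∀ᶠ n : ℕ in F, (j - i).toNat * (j - i).toNat + 1 + i.natAbs ≤ n :=
    hF (eventually_ge_atTop _)
  obtain ⟨n, ⟨h1, h2⟩, h3⟩ := (((hb i).and (hb j)).and hl).exists
  rw [hi, squareDigit_eq_one] at h1
  rw [hj, squareDigit_eq_one] at h2
  have := Nat.le_of_isSquare_of_lt h1 h2 (by omega) (d := (j - i).toNat) (by omega)
  omega

/-- The limits of the tails of `squareDigit`. -/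
theorem HalfCF.exists_squareDigit_limit {x y : ℕ → ℝ} (h : HalfCF squareDigit x y)
    (F : Ultrafilter ℕ) (hF : ↑F ≤ (atTop : Filter ℕ)) :
    ∃ L : ℝ, Tendsto (fun n => lam squareDigit x y n) F (𝓝 L) ∧ L ≤ 1 + 3 / √2 ∧
      ((∀ᶠ n : ℕ in F, squareDigit (n - 1) = 1) → L = 1 + 3 / √2) := by
  obtain ⟨b, X, Y, hB, hd, hlam⟩ := h.exists_limit F hF (B := 2) <| .of_forall fun n => by
    rcases squareDigit_dig n with h | h <;> omega
  have hone : ∀ i j, b i = 1 → b j = 1 → i = j := fun i j => eq_of_squareDigit_limit hF hd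
  have hdig : ∀ i, b i = 1 ∨ b i = 2 := by
    intro i
    obtain ⟨n, hn⟩ := (hd i).exists
    rw [← hn]; exact squareDigit_dig _
  have htwo : ∀ i j, b i = 1 → j ≠ i → b j = 2 := fun i j hi hj =>
    (hdig j).resolve_left fun h => hj (hone _ _ h hi)
  have hs := hB.sys hdig fun i hi _ => htwo i _ hi (by omega)
  have ht : Tail (fun _ => 2) (fun _ => (0 : ℝ)) := by
    constructor <;> norm_num
  have hzero : ∀ j, b j = 1 → phi (X (j + 1)) = 0 ∧ phi (Y (j - 1)) = 0 := by
    intro j hj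
    constructor
    · simpa using (hs.tail (j + 1)).unique ht fun n => htwo j _ hj (by omega)
    · simpa using (hs.tail_left (j - 1)).unique ht fun n => htwo j _ hj (by omega)
  have hH : HH 0 0 = 0 := by simp [HH]
  refine ⟨bilam b X Y 0, by simpa using hlam 0, ?_, fun h1 => ?_⟩
  · have := hB.bilam_le_of_junctions hdig le_rfl (fun j hj => by
      obtain ⟨h1, h2⟩ := hzero j hj
      rw [h1, h2, hH]; exact ⟨le_rfl, le_rfl⟩) 0
    simpa using this
  · have hb : b (-1) = 1 := by
      obtain ⟨n, ⟨hn, hn'⟩, h0⟩ := (((hd (-1)).and h1).and (hF (eventually_ge_atTop 1))).exists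
      rw [← hn, ← hn']
      congr 1; omega
    have := hB.bilam_right hb
    obtain ⟨h1, h2⟩ := hzero _ hb
    rw [h1, h2, hH, neg_add_cancel] at this
    simpa using this

theorem one_add_mem_lagrangeSpectrum : 1 + 3 / √2 ∈ LagrangeSpectrum := by
  have hone : ∀ n, 1 ≤ squareDigit n := fun n => by rcases squareDigit_dig n with h | h <;> omega
  obtain ⟨X, hX⟩ := exists_tail (a := fun i => squareDigit i.toNat) fun i => hone _
  have h : HalfCF squareDigit (fun n => X n) (HalfCF.back squareDigit) :=
    { one_le := hone
      x_pos := fun n => (hX n).1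
      x_lt := fun n => (hX n).2.1
      x_rec := fun n => by simpa using (hX n).2.2
      y_nonneg := HalfCF.back_nonneg _
      y_rec := HalfCF.back_rec hone }
  have hpos : 0 < 1 + 3 / √2 := by positivity
  have hl : lagrangeVal ((0 : ℤ) + X (0 : ℕ)) = ENNReal.ofReal (1 + 3 / √2) := by
    rw [h.lagrangeVal_eq rfl]
    refine le_antisymm ?_ ?_ <;> by_contra! hc
    · obtain ⟨c, hc1, hc2⟩ := exists_between hc
      obtain ⟨F, hF, hc⟩ := exists_ultrafilter_of_frequently
        (frequently_lt_of_lt_limsup (by isBoundedDefault) hc2)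
      obtain ⟨L, hL, hL1, -⟩ := h.exists_squareDigit_limit F hF
      have := ge_of_tendsto ((ENNReal.continuous_ofReal.tendsto L).comp hL)
        (hc.mono fun _ hn => hn.le)
      exact absurd (hc1.trans_le this) (not_lt.2 (ENNReal.ofReal_le_ofReal hL1))
    · obtain ⟨c, hc1, hc2⟩ := exists_between hc
      obtain ⟨F, hF, hsq⟩ := exists_ultrafilter_of_frequently
        (P := fun n => squareDigit (n - 1) = 1) <| frequently_atTop.2 fun N =>
          ⟨N * N + 1, by nlinarith, squareDigit_eq_one.2 ⟨N, rfl⟩⟩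
      obtain ⟨L, hL, -, hL1⟩ := h.exists_squareDigit_limit F hF
      have := le_of_tendsto ((ENNReal.continuous_ofReal.tendsto L).comp hL)
        ((Eventually.filter_mono hF (eventually_lt_of_limsup_lt hc1)).mono fun _ hn => hn.le)
      rw [hL1 hsq] at this
      exact absurd hc2 (not_lt.2 this)
  refine ⟨(0 : ℤ) + X (0 : ℕ), ?_, ?_, ?_⟩
  · simpa using h.irrational
  · rw [hl]; exact ENNReal.ofReal_ne_top
  · rw [hl, ENNReal.toReal_ofReal hpos.le]

theorem one_add_mem_closure : 1 + 3 / √2 ∈ closure (MarkovSpectrum \ LagrangeSpectrum) := by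
  have hq : Tendsto (fun k : ℕ => qq ^ (2 * k + 1)) atTop (𝓝 0) :=
    (tendsto_pow_atTop_nhds_zero_of_lt_one qq_pos.le qq_lt_one).comp
      (tendsto_atTop_mono (fun k => (by omega : k ≤ 2 * k + 1)) tendsto_id)
  have hev : ∀ᶠ k : ℕ in atTop, 1 ≤ k ∧ qq ^ (2 * k + 1) ≤ 0.0000001 :=
    (eventually_ge_atTop 1).and (hq.eventually_le_const (by norm_num))
  have hex : ∀ᶠ k : ℕ in atTop, ∃ θ, Scale k (qq ^ (2 * k + 1)) θ ∧
      1 + 3 / √2 + √2 * θ ∈ MarkovSpectrum \ LagrangeSpectrum :=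
    hev.mono fun k hk => exists_scale_mem_diff hk.1 hk.2
  rw [Metric.mem_closure_iff]
  intro ε hε
  obtain ⟨k, ⟨θ, hs, hm⟩, hk⟩ := (hex.and (hq.eventually_lt_const
    (show 0 < ε / 2 by linarith))).exists
  refine ⟨_, hm, ?_⟩
  have := hs.pos
  have h1 := hs.lo
  have h2 := hs.hi
  have s1 := sqrt_two_bounds.1
  have s2 := sqrt_two_bounds.2.1
  rw [Real.dist_eq, sub_add_cancel_left, abs_neg, abs_of_nonneg (by nlinarith)]
  nlinarith

end

/-- `1 + 3/√2` belongs to `L` and to the closure of `M ∖ L`; consequently `M ∖ L` is not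
closed. -/
theorem M_diff_L_not_closed :
    (1 + 3 / Real.sqrt 2) ∈ LagrangeSpectrum ∧
    (1 + 3 / Real.sqrt 2) ∈ closure (MarkovSpectrum \ LagrangeSpectrum) ∧
    ¬ IsClosed (MarkovSpectrum \ LagrangeSpectrum) := by
  refine ⟨one_add_mem_lagrangeSpectrum, one_add_mem_closure, fun h => ?_⟩
  have := one_add_mem_closure
  rw [h.closure_eq] at this
  exact this.2 one_add_mem_lagrangeSpectrum
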